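/- arXiv:2307.11987 — 2 statements merged into one kernel-verified Lean document; each statement's English description precedes it below -/
import Mathlib

section
/- Existence of a supersolution barrier: there exist a constant C₁ > 0 and a continuous radial function φ₁ : ℝⁿ → ℝ (i.e. φ₁(x) = g(|x|) for some g : [0,∞) → ℝ) such that: (a) for every x with 1 < |x| < 4, the value (−Δ)^s φ₁(x) exists and is ≥ 1; (b) φ₁(x) = 0 for every x with |x| ≤ 1; (c) 0 ≤ φ₁(x) ≤ C₁ (|x| − 1)^s for every x with 1 < |x| < 4; and (d) 1 ≤ φ₁(x) ≤ C₁ for every x with |x| ≥ 4. -/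
open MeasureTheory Metric Set Filter

/-- `fracLapEq n s u x g` : the integral fractional Laplacian `(−Δ)^s u(x)` exists
(as a principal value) and equals `g`. -/
def fracLapEq (n : ℕ) (s : ℝ) (u : EuclideanSpace ℝ (Fin n) → ℝ)
    (x : EuclideanSpace ℝ (Fin n)) (g : ℝ) : Prop :=
  Tendsto (fun ε : ℝ =>
      (2 ^ (2 * s) * s * Real.Gamma (s + n / 2) /
          (Real.pi ^ ((n : ℝ) / 2) * Real.Gamma (1 - s))) *
        ∫ y in {y : EuclideanSpace ℝ (Fin n) | ε < dist y x},
          (u x - u y) / dist x y ^ ((n : ℝ) + 2 * s))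
    (nhdsWithin 0 (Ioi 0)) (nhds g)

namespace Barrier

lemma G_hasDeriv {s u : ℝ} (hs : 0 < s) (hu : 0 < u) :
    HasDerivAt (fun u : ℝ => -(1/s) * ((1+u)^s * u^(-2*s)))
      ((1+u)^s * u^(-1-2*s) + (1+u)^(s-1) * u^(-1-2*s)) u := by
  have h1 : HasDerivAt (fun u : ℝ => (1+u)^s) (1 * s * (1+u)^(s-1)) u :=
    ((hasDerivAt_id u).const_add 1).rpow_const (Or.inl (by positivity))
  have h2 : HasDerivAt (fun u : ℝ => u^(-2*s)) ((-2*s) * u^(-2*s-1)) u :=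
    Real.hasDerivAt_rpow_const (Or.inl hu.ne')
  have h := (h1.mul h2).const_mul (-(1/s))
  refine h.congr_deriv ?_
  have e1 : (1+u)^s = (1+u)^(s-1) * (1+u) := by
    rw [← Real.rpow_add_one (by positivity)]; ring_nf
  have e2 : u^(-2*s) = u^(-1-2*s) * u := by
    rw [← Real.rpow_add_one (by positivity)]; ring_nf
  have e3 : (-2*s-1) = -1-2*s := by ring
  rw [e1, e2, e3]
  field_simp
  ring

lemma G_tendsto {s : ℝ} (hs : 0 < s) :
    Tendsto (fun u : ℝ => -(1/s) * ((1+u)^s * u^(-2*s))) atTop (nhds 0) := by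
  have h0 : Tendsto (fun u : ℝ => (2:ℝ)^s * u^(-s)) atTop (nhds 0) := by
    simpa using (tendsto_rpow_neg_atTop hs).const_mul ((2:ℝ)^s)
  have h1 : Tendsto (fun u : ℝ => (1+u)^s * u^(-2*s)) atTop (nhds 0) := by
    refine squeeze_zero' ?_ ?_ h0
    · filter_upwards [eventually_gt_atTop 0] with u hu
      positivity
    · filter_upwards [eventually_ge_atTop 1] with u hu
      have hu0 : 0 < u := by linarith
      have : (1+u)^s ≤ (2*u)^s := Real.rpow_le_rpow (by positivity) (by linarith) hs.le
      rw [Real.mul_rpow (by norm_num) hu0.le] at this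
      calc (1+u)^s * u^(-2*s) ≤ (2^s * u^s) * u^(-2*s) := by gcongr
        _ = _ := by rw [mul_assoc, ← Real.rpow_add hu0]; ring_nf
  simpa using h1.const_mul (-(1/s))

lemma f12_int {s ε : ℝ} (hs : 0 < s) (hε : 0 < ε) :
    IntegrableOn (fun u : ℝ => (1+u)^s * u^(-1-2*s) + (1+u)^(s-1) * u^(-1-2*s)) (Ioi ε) ∧
    ∫ u in Ioi ε, ((1+u)^s * u^(-1-2*s) + (1+u)^(s-1) * u^(-1-2*s))
      = (1/s) * ((1+ε)^s * ε^(-2*s)) := by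
  have hd : ∀ u ∈ Ici ε, HasDerivAt (fun u : ℝ => -(1/s) * ((1+u)^s * u^(-2*s)))
      ((1+u)^s * u^(-1-2*s) + (1+u)^(s-1) * u^(-1-2*s)) u :=
    fun u hu => G_hasDeriv hs (lt_of_lt_of_le hε hu)
  have hp : ∀ u ∈ Ioi ε, 0 ≤ ((1+u)^s * u^(-1-2*s) + (1+u)^(s-1) * u^(-1-2*s)) := by
    intro u hu
    have : 0 < u := hε.trans hu
    positivity
  refine ⟨integrableOn_Ioi_deriv_of_nonneg' hd hp (G_tendsto hs), ?_⟩
  rw [integral_Ioi_of_hasDerivAt_of_nonneg' hd hp (G_tendsto hs)]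
  ring

lemma f2_int {s ε : ℝ} (hs : 0 < s) (hε : 0 < ε) :
    IntegrableOn (fun u : ℝ => (1+u)^(s-1) * u^(-1-2*s)) (Ioi ε) := by
  refine Integrable.mono' (f12_int hs hε).1 ?_ ?_
  · exact (by fun_prop : Measurable (fun u : ℝ => (1+u)^(s-1) * u^(-1-2*s))).aestronglyMeasurable
  · refine (ae_restrict_mem measurableSet_Ioi).mono ?_
    intro u hu
    have : 0 < u := hε.trans hu
    rw [Real.norm_of_nonneg (by positivity)]
    have : 0 ≤ (1+u)^s * u^(-1-2*s) := by positivity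
    linarith

lemma f1_int {s ε : ℝ} (hs : 0 < s) (hε : 0 < ε) :
    IntegrableOn (fun u : ℝ => (1+u)^s * u^(-1-2*s)) (Ioi ε) := by
  have := (f12_int hs hε).1.sub (f2_int hs hε)
  refine this.congr ?_
  refine Eventually.of_forall fun u => ?_
  simp

lemma image_lem {ε : ℝ} (hε : 0 < ε) (hε1 : ε < 1) :
    (fun u : ℝ => u/(1+u)) '' (Ioi (ε/(1-ε))) = Ioo ε 1 := by
  have h1 : 0 < 1 - ε := by linarith
  ext t
  constructor
  · rintro ⟨u, hu, rfl⟩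
    have hu' : ε/(1-ε) < u := hu
    rw [div_lt_iff₀ h1] at hu'
    have hu0 : 0 < u := lt_trans (by positivity) (show ε/(1-ε) < u from hu)
    constructor
    · show ε < u/(1+u)
      rw [lt_div_iff₀ (by positivity)]; nlinarith
    · show u/(1+u) < 1
      rw [div_lt_one (by positivity)]; linarith
  · rintro ⟨h2, h3⟩
    have h4 : 0 < 1 - t := by linarith
    refine ⟨t/(1-t), ?_, ?_⟩
    · show ε/(1-ε) < t/(1-t)
      rw [div_lt_div_iff₀ h1 h4]; nlinarith
    · show t/(1-t)/(1+t/(1-t)) = t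
      field_simp
      ring

lemma chg {s ε : ℝ} (hε : 0 < ε) (hε1 : ε < 1) :
    (∫ t in Ioo ε 1, (1-t)^s * t^(-1-2*s) =
      ∫ u in Ioi (ε/(1-ε)), (1+u)^(s-1) * u^(-1-2*s)) ∧
    (IntegrableOn (fun t : ℝ => (1-t)^s * t^(-1-2*s)) (Ioo ε 1) ↔
     IntegrableOn (fun u : ℝ => (1+u)^(s-1) * u^(-1-2*s)) (Ioi (ε/(1-ε)))) := by
  have h1 : 0 < 1 - ε := by linarith
  have hpos : ∀ u ∈ Ioi (ε/(1-ε)), 0 < u := fun u hu => lt_trans (by positivity) hu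
  have hd : ∀ u ∈ Ioi (ε/(1-ε)), HasDerivWithinAt (fun u : ℝ => u/(1+u)) (1/(1+u)^2)
      (Ioi (ε/(1-ε))) u := by
    intro u hu
    have hu0 := hpos u hu
    have := ((hasDerivAt_id u).div ((hasDerivAt_id u).const_add 1) (by simp; positivity))
    refine (this.congr_deriv ?_).hasDerivWithinAt
    simp
  have hinj : InjOn (fun u : ℝ => u/(1+u)) (Ioi (ε/(1-ε))) := by
    intro a ha b hb hab
    have ha0 := hpos a ha
    have hb0 := hpos b hb
    simp only at hab
    rw [div_eq_div_iff (by positivity) (by positivity)] at hab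
    linarith
  have hcong : EqOn (fun u : ℝ => |1/(1+u)^2| • ((1-u/(1+u))^s * (u/(1+u))^(-1-2*s)))
      (fun u : ℝ => (1+u)^(s-1) * u^(-1-2*s)) (Ioi (ε/(1-ε))) := by
    intro u hu
    have hu0 := hpos u hu
    have e : 1 - u/(1+u) = (1+u)⁻¹ := by field_simp; ring
    simp only [smul_eq_mul]
    rw [e, abs_of_pos (by positivity), Real.div_rpow hu0.le (by positivity),
      Real.inv_rpow (by positivity), ← Real.rpow_neg (by positivity), one_div,
      ← Real.rpow_natCast (1+u) 2, ← Real.rpow_neg (by positivity), div_eq_mul_inv,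
      ← Real.rpow_neg (by positivity : 0 ≤ 1+u) (-1-2*s)]
    have : (1+u)^(s-1) = (1+u)^(-((2:ℕ):ℝ)) * (1+u)^(-s) * (1+u)^(-(-1-2*s)) := by
      rw [← Real.rpow_add (by positivity), ← Real.rpow_add (by positivity)]
      congr 1; push_cast; ring
    rw [this]; ring
  rw [← image_lem hε hε1]
  constructor
  · rw [integral_image_eq_integral_abs_deriv_smul measurableSet_Ioi hd hinj]
    exact setIntegral_congr_fun measurableSet_Ioi hcong
  · rw [integrableOn_image_iff_integrableOn_abs_deriv_smul measurableSet_Ioi hd hinj]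
    exact integrableOn_congr_fun hcong measurableSet_Ioi

lemma f3_eq {s ε : ℝ} (hs : 0 < s) (hε : 0 < ε) (hε1 : ε < 1) :
    (∫ t in Ioi ε, (max (1-t) 0)^s * t^(-1-2*s) =
      ∫ u in Ioi (ε/(1-ε)), (1+u)^(s-1) * u^(-1-2*s)) ∧
    IntegrableOn (fun t : ℝ => (max (1-t) 0)^s * t^(-1-2*s)) (Ioi ε) := by
  have h1 : 0 < 1 - ε := by linarith
  have hE : EqOn (fun t : ℝ => (max (1-t) 0)^s * t^(-1-2*s))
      (fun t : ℝ => (1-t)^s * t^(-1-2*s)) (Ioo ε 1) := by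
    intro t ht
    have : max (1-t) 0 = 1-t := max_eq_left (by linarith [ht.2])
    simp only [this]
  have hI : IntegrableOn (fun t : ℝ => (max (1-t) 0)^s * t^(-1-2*s)) (Ioo ε 1) :=
    (integrableOn_congr_fun hE measurableSet_Ioo).2
      ((chg hε hε1).2.2 (f2_int hs (by positivity)))
  have hz : ∀ t ∈ Ioi ε \ Ioo ε 1, (max (1-t) 0)^s * t^(-1-2*s) = 0 := by
    intro t ht
    have : 1 ≤ t := by
      by_contra h
      exact ht.2 ⟨ht.1, not_le.1 h⟩
    rw [max_eq_right (by linarith), Real.zero_rpow hs.ne', zero_mul]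
  constructor
  · rw [← (chg hε hε1).1, ← setIntegral_congr_fun measurableSet_Ioo hE]
    exact setIntegral_eq_of_subset_of_forall_sdiff_eq_zero measurableSet_Ioi Ioo_subset_Ioi_self hz
  · exact hI.of_forall_sdiff_eq_zero measurableSet_Ioi hz

lemma j_int {s ε : ℝ} (hs : 0 < s) (hε : 0 < ε) (hε1 : ε < 1) :
    IntegrableOn (fun t : ℝ => (2 - (1+t)^s - (max (1-t) 0)^s) * t^(-1-2*s)) (Ioi ε) := by
  have h0 : IntegrableOn (fun t : ℝ => t^(-1-2*s)) (Ioi ε) :=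
    integrableOn_Ioi_rpow_of_lt (by linarith) hε
  have := ((h0.const_mul 2).sub (f1_int hs hε)).sub (f3_eq hs hε hε1).2
  refine this.congr (Eventually.of_forall fun u => ?_)
  simp
  ring

lemma j_lower {s ε : ℝ} (hs : 0 < s) (hs1 : s < 1) (hε : 0 < ε) (hε1 : ε < 1) :
    -2 * ε^(2-2*s) ≤
      ∫ t in Ioi ε, (2 - (1+t)^s - (max (1-t) 0)^s) * t^(-1-2*s) := by
  have h1 : 0 < 1 - ε := by linarith
  have h0 : IntegrableOn (fun t : ℝ => t^(-1-2*s)) (Ioi ε) :=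
    integrableOn_Ioi_rpow_of_lt (by linarith) hε
  have e0 : ∫ t in Ioi ε, (2 - (1+t)^s - (max (1-t) 0)^s) * t^(-1-2*s)
      = 2 * (∫ t in Ioi ε, t^(-1-2*s)) - (∫ t in Ioi ε, (1+t)^s * t^(-1-2*s))
        - ∫ t in Ioi ε, (max (1-t) 0)^s * t^(-1-2*s) := by
    have i1 : Integrable (fun t : ℝ => 2 * t^(-1-2*s)) (volume.restrict (Ioi ε)) := h0.const_mul 2
    have i2 : Integrable (fun t : ℝ => (1+t)^s * t^(-1-2*s)) (volume.restrict (Ioi ε)) :=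
      f1_int hs hε
    have i3 : Integrable (fun t : ℝ => (max (1-t) 0)^s * t^(-1-2*s)) (volume.restrict (Ioi ε)) :=
      (f3_eq hs hε hε1).2
    have i12 : Integrable (fun t : ℝ => 2 * t^(-1-2*s) - (1+t)^s * t^(-1-2*s))
      (volume.restrict (Ioi ε)) := i1.sub i2
    rw [← integral_const_mul, ← integral_sub i1 i2, ← integral_sub i12 i3]
    congr 1
    ext t
    ring
  have e1 := (f12_int hs hε).2
  rw [integral_add (f1_int hs hε) (f2_int hs hε)] at e1
  have hle : ε ≤ ε/(1-ε) := by
    rw [le_div_iff₀ h1]; nlinarith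
  have e2 : ∫ u in Ioi ε, (1+u)^(s-1) * u^(-1-2*s) =
      (∫ u in Ioc ε (ε/(1-ε)), (1+u)^(s-1) * u^(-1-2*s)) +
      ∫ u in Ioi (ε/(1-ε)), (1+u)^(s-1) * u^(-1-2*s) := by
    rw [← Ioc_union_Ioi_eq_Ioi hle]
    refine setIntegral_union ?_ measurableSet_Ioi ?_ ?_
    · exact Set.disjoint_left.2 fun x hx hx' => not_lt.2 hx.2 hx'
    · exact (f2_int hs hε).mono_set Ioc_subset_Ioi_self
    · exact f2_int hs (by positivity)
  have e3 : ε^(1-2*s) * (1-ε)^(1+s) ≤ ∫ u in Ioc ε (ε/(1-ε)), (1+u)^(s-1) * u^(-1-2*s) := by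
    have hc : ∀ u ∈ Ioc ε (ε/(1-ε)),
        (1+ε/(1-ε))^(s-1) * (ε/(1-ε))^(-1-2*s) ≤ (1+u)^(s-1) * u^(-1-2*s) := by
      intro u hu
      have hu0 : 0 < u := hε.trans hu.1
      have a1 : (1+ε/(1-ε))^(s-1) ≤ (1+u)^(s-1) :=
        Real.rpow_le_rpow_of_nonpos (by positivity) (by linarith [hu.2]) (by linarith)
      have a2 : (ε/(1-ε))^(-1-2*s) ≤ u^(-1-2*s) :=
        Real.rpow_le_rpow_of_nonpos hu0 hu.2 (by linarith)
      gcongr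
    have := setIntegral_mono_on (μ := volume) (s := Ioc ε (ε/(1-ε)))
      (integrableOn_const (by simp)) ((f2_int hs hε).mono_set Ioc_subset_Ioi_self)
      measurableSet_Ioc hc
    refine le_trans (le_of_eq ?_) this
    rw [setIntegral_const, smul_eq_mul, Measure.real, Real.volume_Ioc,
      ENNReal.toReal_ofReal (by linarith)]
    have b1 : 1 + ε/(1-ε) = (1-ε)⁻¹ := by field_simp; ring
    have b2 : ε/(1-ε) - ε = ε^(2:ℝ) * (1-ε)^(-1:ℝ) := by
      rw [Real.rpow_neg_one, Real.rpow_two]; field_simp; ring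
    rw [b1, b2, Real.inv_rpow h1.le, ← Real.rpow_neg h1.le, Real.div_rpow hε.le h1.le,
      div_eq_mul_inv, ← Real.rpow_neg h1.le]
    have c1 : ε^(1-2*s) = ε^(2:ℝ) * ε^(-1-2*s) := by
      rw [← Real.rpow_add hε]; ring_nf
    have c2 : (1-ε)^(1+s) = (1-ε)^(-1:ℝ) * (1-ε)^(-(s-1)) * (1-ε)^(-(-1-2*s)) := by
      rw [← Real.rpow_add h1, ← Real.rpow_add h1]; ring_nf
    rw [c1, c2]; ring
  have e4 : 1 - (1+s) * ε ≤ (1-ε)^(1+s) := by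
    have := one_add_mul_self_le_rpow_one_add (s := -ε) (by linarith) (p := 1+s) (by linarith)
    rw [show 1 - ε = 1 + -ε by ring]
    linarith
  have e5 : (1+ε)^s ≤ 1 + s*ε :=
    rpow_one_add_le_one_add_mul_self (by linarith) hs.le hs1.le
  have e6 : ∫ t in Ioi ε, t^(-1-2*s) = ε^(-2*s) / (2*s) := by
    rw [integral_Ioi_rpow_of_lt (by linarith) hε]
    rw [show -1-2*s+1 = -(2*s) by ring, show -2*s = -(2*s) by ring, neg_div_neg_eq]
  have e7 : ε^(1-2*s) = ε^(-2*s) * ε := by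
    rw [← Real.rpow_add_one hε.ne']; ring_nf
  have e8 : ε^(2-2*s) = ε^(1-2*s) * ε := by
    rw [← Real.rpow_add_one hε.ne']; ring_nf
  rw [e0, (f3_eq hs hε hε1).1, e6]
  have p1 : 0 < ε^(-2*s) := by positivity
  have p2 : 0 < ε^(1-2*s) := by positivity
  have g1 : (1/s) * ((1+ε)^s * ε^(-2*s)) ≤ (1/s) * ((1+s*ε) * ε^(-2*s)) := by gcongr
  have g2 : (1/s) * ((1+s*ε) * ε^(-2*s)) = 2 * (ε^(-2*s) / (2*s)) + ε^(1-2*s) := by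
    rw [e7]; field_simp
  have g3 : ε^(1-2*s) * (1 - (1+s)*ε) ≤ ε^(1-2*s) * (1-ε)^(1+s) := by gcongr
  have g4 : ε^(1-2*s) * (1 - (1+s)*ε) ≥ ε^(1-2*s) - 2 * ε^(2-2*s) := by
    rw [e8]
    have : 0 < ε^(1-2*s) * ε := by positivity
    nlinarith
  linarith


end Barrier

namespace Barrier

lemma K_lower_pos {s q b ε : ℝ} (hs : 0 < s) (hs1 : s < 1) (hq : 0 < q) (hb : 0 < b)
    (hε : 0 < ε) (hεb : ε * b < q) :
    -2 * (q^(s-2) * b^2 * ε^(2-2*s)) ≤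
      ∫ r in Ioi ε, (2*q^s - (max (q + r*b) 0)^s - (max (q - r*b) 0)^s) * r^(-1-2*s) := by
  set c := b/q with hc
  have hc0 : 0 < c := by positivity
  have hE : EqOn (fun r : ℝ => (2*q^s - (max (q + r*b) 0)^s - (max (q - r*b) 0)^s) * r^(-1-2*s))
      (fun r : ℝ => (q^s * c^(1+2*s)) *
        ((2 - (1+c*r)^s - (max (1-c*r) 0)^s) * (c*r)^(-1-2*s))) (Ioi ε) := by
    intro r hr
    have hr0 : 0 < r := hε.trans hr
    have e1 : max (q + r*b) 0 = q * (1 + c*r) := by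
      rw [max_eq_left (by positivity), hc]; field_simp
    have e2 : max (q - r*b) 0 = q * max (1 - c*r) 0 := by
      rw [mul_max_of_nonneg _ _ hq.le, mul_zero]; congr 1; rw [hc]; field_simp
    simp only [e1, e2]
    rw [Real.mul_rpow hq.le (by positivity), Real.mul_rpow hq.le (le_max_right _ _),
      Real.mul_rpow hc0.le hr0.le]
    have e3 : c^(1+2*s) * c^(-1-2*s) = 1 := by
      rw [← Real.rpow_add hc0]; ring_nf; exact Real.rpow_zero _
    linear_combination (-(q^s * (2 - (1+c*r)^s - (max (1-c*r) 0)^s) * r^(-1-2*s))) * e3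
  rw [setIntegral_congr_fun measurableSet_Ioi hE, integral_const_mul,
    integral_comp_mul_left_Ioi
      (fun t => (2 - (1+t)^s - (max (1-t) 0)^s) * t^(-1-2*s)) ε hc0, smul_eq_mul]
  have hcε : c * ε < 1 := by
    rw [hc, div_mul_eq_mul_div, div_lt_one hq]; linarith
  have hj := j_lower hs hs1 (by positivity : 0 < c * ε) hcε
  have hm : (q^s * c^(1+2*s)) * (c⁻¹ * (-2 * (c*ε)^(2-2*s))) ≤ (q^s * c^(1+2*s)) *
     (c⁻¹ * ∫ t in Ioi (c*ε), (2 - (1+t)^s - (max (1-t) 0)^s) * t^(-1-2*s)) := by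
    gcongr
  refine le_trans (le_of_eq ?_) hm
  rw [Real.mul_rpow hc0.le hε.le]
  have e4 : c^(1+2*s) * c⁻¹ * c^(2-2*s) = c^2 := by
    rw [← Real.rpow_neg_one, ← Real.rpow_add hc0, ← Real.rpow_add hc0, ← Real.rpow_two]; ring_nf
  have e5 : q^(s-2) * b^2 = q^s * c^2 := by
    rw [hc, Real.rpow_sub hq, Real.rpow_two]; field_simp
  rw [e5]
  linear_combination 2 * q^s * ε^(2-2*s) * e4

lemma K_lower {s q b ε : ℝ} (hs : 0 < s) (hs1 : s < 1) (hq : 0 < q)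
    (hε : 0 < ε) (hεb : ε * |b| < q) :
    -2 * (q^(s-2) * b^2 * ε^(2-2*s)) ≤
      ∫ r in Ioi ε, (2*q^s - (max (q + r*b) 0)^s - (max (q - r*b) 0)^s) * r^(-1-2*s) := by
  rcases lt_trichotomy b 0 with hb | hb | hb
  · rw [abs_of_neg hb] at hεb
    have := K_lower_pos hs hs1 hq (neg_pos.2 hb) hε hεb
    rw [neg_sq] at this
    refine this.trans (le_of_eq ?_)
    congr 1
    ext r
    simp only [mul_neg, sub_neg_eq_add, ← sub_eq_add_neg]
    ring
  · subst hb
    have : ∀ r : ℝ, (2*q^s - (max (q + r*0) 0)^s - (max (q - r*0) 0)^s) * r^(-1-2*s) = 0 := by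
      intro r
      simp only [mul_zero, add_zero, sub_zero]
      rw [max_eq_left hq.le]; ring
    simp only [this]
    simp
  · rw [abs_of_pos hb] at hεb
    exact K_lower_pos hs hs1 hq hb hε hεb

section nd
variable {n : ℕ}

local notation "E" => EuclideanSpace ℝ (Fin n)

lemma pow_mul_rpow_aux (hn : 0 < n) {r : ℝ} (hr : 0 < r) (a : ℝ) :
    r^(n-1) * r^(a - n) = r^(a-1) := by
  rw [← Real.rpow_natCast, ← Real.rpow_add hr, Nat.cast_pred hn]
  ring_nf

lemma int_near (hn : 0 < n) {η : ℝ} (hη : 0 < η) (R : ℝ) (hR : 0 < R) :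
    IntegrableOn (fun z : E => ‖z‖^(η - n)) (ball 0 R) := by
  have : Nontrivial E := by
    have : Nonempty (Fin n) := ⟨⟨0, hn⟩⟩
    infer_instance
  rw [integrableOn_fun_norm_addHaar volume (f := fun r : ℝ => r^(η - n)), finrank_euclideanSpace_fin]
  refine (integrableOn_congr_fun ?_ measurableSet_Ioo).2
    ((intervalIntegral.integrableOn_Ioo_rpow_iff (s := η - 1) hR).2 (by linarith))
  intro r hr
  exact pow_mul_rpow_aux hn hr.1 η

lemma meas_far (ε : ℝ) : MeasurableSet {z : E | ε < ‖z‖} :=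
  (isOpen_lt continuous_const continuous_norm).measurableSet

lemma int_far (hn : 0 < n) {η ε : ℝ} (hη : 0 < η) (hε : 0 < ε) :
    IntegrableOn (fun z : E => ‖z‖^(-η - n)) {z | ε < ‖z‖} := by
  have : Nontrivial E := by
    have : Nonempty (Fin n) := ⟨⟨0, hn⟩⟩
    infer_instance
  rw [← integrable_indicator_iff (meas_far ε)]
  have : ({z : E | ε < ‖z‖}.indicator fun z : E => ‖z‖^(-η - n))
     = fun z : E => (Ioi ε).indicator (fun r : ℝ => r^(-η - n)) ‖z‖ := by
    ext z; simp [indicator]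
  rw [this, integrable_fun_norm_addHaar volume (f := (Ioi ε).indicator (fun r : ℝ => r^(-η - n))),
    finrank_euclideanSpace_fin]
  have h2 : IntegrableOn (fun r : ℝ => (Ioi ε).indicator (fun r : ℝ => r^(-η-1)) r) (Ioi 0) := by
    apply Integrable.integrableOn
    exact (integrable_indicator_iff measurableSet_Ioi).2
      (integrableOn_Ioi_rpow_of_lt (by linarith) hε)
  refine (integrableOn_congr_fun ?_ measurableSet_Ioi).2 h2
  intro r hr
  by_cases h : r ∈ Ioi ε
  · simp only [indicator_of_mem h, smul_eq_mul]
    exact pow_mul_rpow_aux hn hr (-η)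
  · simp [indicator_of_notMem h]

lemma polar_lower (hn : 0 < n) (F : E → ℝ) (hF : Integrable F) (c : ℝ)
    (h : ∀ θ : E, ‖θ‖ = 1 → c ≤ ∫ r in Ioi (0:ℝ), r^(n-1) * F (r • θ)) :
    c * ((volume : Measure E).toSphere.real univ) ≤ ∫ z, F z := by
  set μ : Measure E := volume
  have hmp := μ.measurePreserving_homeomorphUnitSphereProd
  have hsub : MeasurableSet ({0}ᶜ : Set E) := (measurableSet_singleton _).compl
  have : Nontrivial E := by
    have : Nonempty (Fin n) := ⟨⟨0, hn⟩⟩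
    infer_instance
  let G : sphere (0:E) 1 × Ioi (0:ℝ) → ℝ := fun p => F (p.2.1 • p.1.1)
  have hG : ∀ z : ({0}ᶜ : Set E), G (homeomorphUnitSphereProd E z) = F z := by
    intro z
    have hz : (z : E) ≠ 0 := z.2
    simp [G, hz]
  have e1 : ∫ z, F z = ∫ p, G p ∂(μ.toSphere.prod (.volumeIoiPow (Module.finrank ℝ E - 1))) := by
    rw [← hmp.integral_comp (Homeomorph.measurableEmbedding _) G]
    simp only [hG]
    rw [integral_subtype_comap hsub F, restrict_compl_singleton]
  have i1 : Integrable G (μ.toSphere.prod (.volumeIoiPow (Module.finrank ℝ E - 1))) := by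
    rw [← hmp.integrable_comp_emb (Homeomorph.measurableEmbedding _)]
    have : G ∘ (homeomorphUnitSphereProd E) = F ∘ Subtype.val := by
      ext z; exact hG z
    rw [this, ← integrableOn_iff_comap_subtypeVal hsub]
    exact hF.integrableOn
  have e2 : ∀ θ : sphere (0:E) 1, ∫ r, G (θ, r) ∂(Measure.volumeIoiPow (Module.finrank ℝ E - 1))
      = ∫ r in Ioi (0:ℝ), r^(n-1) * F (r • θ.1) := by
    intro θ
    simp only [Measure.volumeIoiPow, ENNReal.ofReal]
    rw [integral_withDensity_eq_integral_smul,
        integral_subtype_comap measurableSet_Ioi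
          fun a ↦ Real.toNNReal (a ^ (Module.finrank ℝ E - 1)) • F (a • θ.1),
        setIntegral_congr_fun measurableSet_Ioi fun x hx ↦ ?_]
    · rw [NNReal.smul_def, Real.coe_toNNReal _ (pow_nonneg hx.out.le _),
        finrank_euclideanSpace_fin, smul_eq_mul]
    · exact (measurable_subtype_coe.pow_const _).real_toNNReal
  rw [e1, integral_prod _ i1]
  have : c * (μ.toSphere.real univ) = ∫ θ : sphere (0:E) 1, c ∂μ.toSphere := by
    rw [integral_const, smul_eq_mul, mul_comm]
  rw [this]
  refine integral_mono (integrable_const _) i1.integral_prod_left ?_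
  intro θ
  simp only [e2]
  exact h θ.1 (by simp)

end nd
end Barrier

namespace Barrier
section nd
variable {n : ℕ}

local notation "E" => EuclideanSpace ℝ (Fin n)

lemma neg_far {f : E → ℝ} {ε : ℝ} (hf : IntegrableOn f {z | ε < ‖z‖}) :
    IntegrableOn (fun z => f (-z)) {z | ε < ‖z‖} ∧
    ∫ z in {z : E | ε < ‖z‖}, f (-z) = ∫ z in {z : E | ε < ‖z‖}, f z := by
  have hmp := (Measure.measurePreserving_neg (volume : Measure E))
  have hpre : (Neg.neg : E → E) ⁻¹' {z : E | ε < ‖z‖} = {z : E | ε < ‖z‖} := by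
    ext z; simp
  have hemb : MeasurableEmbedding (Neg.neg : E → E) := (MeasurableEquiv.neg E).measurableEmbedding
  constructor
  · have := (hmp.integrableOn_comp_preimage hemb (f := f) (s := {z : E | ε < ‖z‖})).2 hf
    rw [hpre] at this
    exact this
  · have := hmp.setIntegral_preimage_emb hemb f {z : E | ε < ‖z‖}
    rw [hpre] at this
    exact this

lemma sym_far {f : E → ℝ} {ε : ℝ} (hf : IntegrableOn f {z | ε < ‖z‖}) :
    ∫ z in {z : E | ε < ‖z‖}, f z = (1/2) * ∫ z in {z : E | ε < ‖z‖}, (f z + f (-z)) := by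
  rw [integral_add hf (neg_far hf).1, (neg_far hf).2]
  ring

/-- bounded over kernel is integrable far away -/
lemma int_bdd (hn : 0 < n) {s ε M : ℝ} (hs : 0 < s) (hε : 0 < ε) {f : E → ℝ}
    (hm : Measurable f) (hM : ∀ z, |f z| ≤ M) :
    IntegrableOn (fun z => f z / ‖z‖^((n:ℝ)+2*s)) {z | ε < ‖z‖} := by
  refine Integrable.mono' ((int_far hn (η := 2*s) (by positivity) hε).const_mul M) ?_ ?_
  · exact (hm.div (by fun_prop)).aestronglyMeasurable
  · refine (ae_restrict_mem (meas_far ε)).mono fun z hz => ?_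
    have hz0 : 0 < ‖z‖ := hε.trans hz
    rw [norm_div, Real.norm_eq_abs, Real.norm_of_nonneg (by positivity), div_eq_mul_inv,
      ← Real.rpow_neg hz0.le, show -((n:ℝ)+2*s) = -(2*s) - n by ring]
    gcongr
    exact hM z

lemma L_int (hn : 0 < n) {s ε q : ℝ} (hs : 0 < s) (hs1 : s < 1) (hε : 0 < ε) (hq : 0 < q) (x : E) :
    IntegrableOn (fun z => (q^s - (max (q + inner ℝ x z) 0)^s) / ‖z‖^((n:ℝ)+2*s))
      {z | ε < ‖z‖} := by
  have hFar := ((int_far hn (η := 2*s) (by positivity) hε).const_mul (2*q^s)).add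
    ((int_far hn (η := s) hs hε).const_mul (‖x‖^s))
  refine Integrable.mono' hFar ?_ ?_
  · refine Measurable.aestronglyMeasurable ?_
    fun_prop
  · refine (ae_restrict_mem (meas_far ε)).mono fun z hz => ?_
    have hz0 : 0 < ‖z‖ := hε.trans hz
    have h1 : (max (q + inner ℝ x z) 0)^s ≤ q^s + ‖x‖^s * ‖z‖^s := by
      have : max (q + inner ℝ x z) 0 ≤ q + ‖x‖*‖z‖ :=
        max_le (by linarith [real_inner_le_norm x z]) (by positivity)
      calc _ ≤ (q + ‖x‖*‖z‖)^s := Real.rpow_le_rpow (le_max_right _ _) this hs.le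
        _ ≤ q^s + (‖x‖*‖z‖)^s := Real.rpow_add_le_add_rpow hq.le (by positivity) hs.le hs1.le
        _ = _ := by rw [Real.mul_rpow (by positivity) (by positivity)]
    have h0 : 0 ≤ (max (q + inner ℝ x z) 0)^s := Real.rpow_nonneg (le_max_right _ _) _
    have hqs : 0 < q^s := by positivity
    have h2 : |q^s - (max (q + inner ℝ x z) 0)^s| ≤ 2*q^s + ‖x‖^s * ‖z‖^s := by
      have : 0 ≤ ‖x‖^s * ‖z‖^s := by positivity
      rw [abs_le]; constructor <;> linarith
    rw [norm_div, Real.norm_eq_abs, Real.norm_of_nonneg (by positivity), div_eq_mul_inv,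
      ← Real.rpow_neg hz0.le]
    have e1 : ‖z‖^(-s - (n:ℝ)) = ‖z‖^s * ‖z‖^(-((n:ℝ)+2*s)) := by
      rw [← Real.rpow_add hz0]; ring_nf
    have e2 : ‖z‖^(-(2*s) - (n:ℝ)) = ‖z‖^(-((n:ℝ)+2*s)) := by ring_nf
    simp only [Pi.add_apply]
    rw [e1, e2]
    calc _ ≤ (2*q^s + ‖x‖^s * ‖z‖^s) * ‖z‖^(-((n:ℝ)+2*s)) := by gcongr
      _ = _ := by ring

lemma J_lower (hn : 0 < n) {s ε q : ℝ} (hs : 0 < s) (hs1 : s < 1) (hε : 0 < ε) (hq : 0 < q)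
    (x : E) (hx : ‖x‖ ≤ 4) (hεq : ε * 4 < q) :
    -(16 * q^(s-2) * ε^(2-2*s)) * ((volume : Measure E).toSphere.real univ) ≤
    ∫ z in {z : E | ε < ‖z‖}, (q^s - (max (q + inner ℝ x z) 0)^s) / ‖z‖^((n:ℝ)+2*s) := by
  have hFar := L_int hn hs hs1 hε hq x
  rw [sym_far hFar]
  have hFar2 := hFar.add (neg_far hFar).1
  rw [← integral_indicator (meas_far ε)]
  have key := polar_lower hn _ ((integrable_indicator_iff (meas_far ε)).2 hFar2)
    (-(32 * q^(s-2) * ε^(2-2*s))) ?_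
  · simp only [Pi.add_def] at key
    linarith
  intro θ hθ
  have hb : |inner ℝ x θ| ≤ 4 := (abs_real_inner_le_norm x θ).trans (by rw [hθ]; linarith)
  have hK := K_lower (b := inner ℝ x θ) hs hs1 hq hε
    (lt_of_le_of_lt (mul_le_mul_of_nonneg_left hb hε.le) hεq)
  have hb2 : (inner ℝ x θ : ℝ)^2 ≤ 16 := by
    have := sq_le_sq' (by linarith [abs_le.1 hb]) (abs_le.1 hb).2
    linarith
  have h1 : -(32 * q^(s-2) * ε^(2-2*s)) ≤ -2 * (q^(s-2) * (inner ℝ x θ)^2 * ε^(2-2*s)) := by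
    have : q^(s-2) * (inner ℝ x θ : ℝ)^2 * ε^(2-2*s) ≤ q^(s-2) * 16 * ε^(2-2*s) := by gcongr
    linarith
  refine h1.trans (hK.trans (le_of_eq ?_))
  rw [← integral_indicator measurableSet_Ioi, ← integral_indicator measurableSet_Ioi]
  congr 1
  ext r
  by_cases hr : ε < r
  · have hr0 : 0 < r := hε.trans hr
    have hnorm : ‖r • θ‖ = r := by rw [norm_smul, hθ, mul_one, Real.norm_of_nonneg hr0.le]
    have hmem : r • θ ∈ {z : E | ε < ‖z‖} := by
      show ε < ‖r • θ‖
      rw [hnorm]; exact hr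
    rw [indicator_of_mem (show r ∈ Ioi ε from hr), indicator_of_mem (show r ∈ Ioi (0:ℝ) from hr0),
      indicator_of_mem hmem]
    simp only [Pi.add_apply, norm_neg, hnorm, inner_neg_right, inner_smul_right]
    have := pow_mul_rpow_aux hn hr0 (-(2*s))
    rw [show -(2*s) - (n:ℝ) = -((n:ℝ)+2*s) by ring, show -(2*s)-1 = -1-2*s by ring,
      Real.rpow_neg hr0.le] at this
    rw [← this, ← sub_eq_add_neg]
    ring
  · rw [indicator_of_notMem (show r ∉ Ioi ε from hr)]
    by_cases hr0 : 0 < r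
    · have hnorm : ‖r • θ‖ = r := by rw [norm_smul, hθ, mul_one, Real.norm_of_nonneg hr0.le]
      have hmem : r • θ ∉ {z : E | ε < ‖z‖} := by
        show ¬ ε < ‖r • θ‖
        rw [hnorm]; exact hr
      rw [indicator_of_mem (show r ∈ Ioi (0:ℝ) from hr0), indicator_of_notMem hmem, mul_zero]
    · rw [indicator_of_notMem (show r ∉ Ioi (0:ℝ) from hr0)]

end nd
end Barrier

namespace Barrier

/-- concave-in-`v²` truncation profile -/
noncomputable def PP (v : ℝ) : ℝ :=
  (min v 1)^2 - (4/3) * (min v 1)^3 + (1/2) * (min v 1)^4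

noncomputable def dPP (v : ℝ) : ℝ := 2 * (min v 1) * (1 - min v 1)^2

lemma PP_of_le {v : ℝ} (h : v ≤ 1) : PP v = v^2 - (4/3) * v^3 + (1/2) * v^4 := by
  simp [PP, min_eq_left h]

lemma PP_of_ge {v : ℝ} (h : 1 ≤ v) : PP v = 1/6 := by
  simp [PP, min_eq_right h]; norm_num

lemma PP_cont : Continuous PP := by unfold PP; fun_prop

lemma PP_tangent {v l : ℝ} (hv : 0 ≤ v) (hv1 : v ≤ 1) (hl : 0 ≤ l) :
    PP l ≤ PP v + (1-v)^2 * (l^2 - v^2) := by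
  have key : ∀ l : ℝ, 0 ≤ l → l ≤ 1 → PP l ≤ PP v + (1-v)^2 * (l^2 - v^2) := by
    intro l hl hl1
    rw [PP_of_le hl1, PP_of_le hv1]
    have hQ : 0 ≤ (4/3*l + 2/3*v) - (l+v)^2/2 := by
      nlinarith [mul_nonneg hl (sub_nonneg.2 hl1), mul_nonneg hv (sub_nonneg.2 hv1),
        mul_nonneg hl (sub_nonneg.2 hv1), mul_nonneg hv (sub_nonneg.2 hl1)]
    nlinarith [mul_nonneg (sq_nonneg (l - v)) hQ]
  rcases le_total l 1 with h | h
  · exact key l hl h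
  · have := key 1 zero_le_one le_rfl
    rw [PP_of_ge le_rfl] at this
    rw [PP_of_ge h]
    have h2 : (1-v)^2 * (1^2 - v^2) ≤ (1-v)^2 * (l^2 - v^2) := by
      have : (1:ℝ)^2 ≤ l^2 := by gcongr
      gcongr
    linarith

lemma PP_zero : PP 0 = 0 := by simp [PP]

lemma PP_gain {v : ℝ} (hv : 0 ≤ v) (hv1 : v ≤ 1) : (1-v)^2 * v^2 + v^3/6 ≤ PP v := by
  rw [PP_of_le hv1]
  nlinarith [pow_nonneg hv 3, mul_nonneg (pow_nonneg hv 3) (sub_nonneg.2 hv1)]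

lemma PP_lip {v l : ℝ} (hv : 0 ≤ v) (hl : v ≤ l) : PP l ≤ PP v + (l^2 - v^2) := by
  have hsq : v^2 ≤ l^2 := by gcongr
  rcases le_total v 1 with h | h
  · have := PP_tangent hv h (hv.trans hl)
    have h1 : (1-v)^2 ≤ 1 := by nlinarith
    nlinarith
  · rw [PP_of_ge h, PP_of_ge (h.trans hl)]; linarith

lemma PP_nonneg {v : ℝ} (hv : 0 ≤ v) : 0 ≤ PP v := by
  rcases le_total v 1 with h | h
  · have := PP_gain hv h
    have : 0 ≤ (1-v)^2 * v^2 + v^3/6 := by positivity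
    linarith
  · rw [PP_of_ge h]; norm_num

lemma PP_le {v : ℝ} (hv : 0 ≤ v) : PP v ≤ 1/6 := by
  have := PP_tangent zero_le_one le_rfl hv
  rw [PP_of_ge le_rfl] at this
  simpa using this

lemma PP_le_sq {v : ℝ} (hv : 0 ≤ v) : PP v ≤ v^2 := by
  have := PP_lip le_rfl hv
  rw [PP_zero] at this
  simpa using this

lemma PP_quad {a b : ℝ} (ha : 0 ≤ a) (hb : 0 ≤ b) :
    |PP b - PP a - dPP a * (b - a)| ≤ 4 * (b-a)^2 := by
  rcases le_total a 1 with h | h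
  · have hd : dPP a = 2 * a * (1-a)^2 := by simp [dPP, min_eq_left h]
    rcases le_total b 1 with h' | h'
    · rw [PP_of_le h, PP_of_le h', hd]
      have e : b^2 - (4/3) * b^3 + (1/2) * b^4 - (a^2 - (4/3) * a^3 + (1/2) * a^4)
          - 2 * a * (1-a)^2 * (b - a)
          = (b-a)^2 * (1 - 4/3*(b+2*a) + 1/2*(b^2+2*a*b+3*a^2)) := by ring
      rw [e, abs_mul, abs_of_nonneg (sq_nonneg (b-a)), mul_comm]
      gcongr
      have h1 : b^2 ≤ 1 := by nlinarith
      have h2 : a^2 ≤ 1 := by nlinarith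
      have h3 : a*b ≤ 1 := by nlinarith
      have h4 : 0 ≤ a*b := by positivity
      rw [abs_le]; constructor <;> nlinarith
    · rw [PP_of_le h, PP_of_ge h', hd]
      have e : 1/6 - (a^2 - (4/3) * a^3 + (1/2) * a^4) = 2/3*(1-a)^3 - 1/2*(1-a)^4 := by ring
      rw [e]
      set m := 1 - a with hm
      have hm0 : 0 ≤ m := by linarith
      have hm1 : m ≤ 1 := by linarith
      have hmb : m ≤ b - a := by linarith
      have hm2 : m^2 ≤ (b-a)^2 := by gcongr
      have t1 : 0 ≤ m^3 ∧ m^3 ≤ m^2 := ⟨by positivity, by nlinarith [sq_nonneg m]⟩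
      have t2 : 0 ≤ m^4 ∧ m^4 ≤ m^2 := ⟨by positivity, by nlinarith [sq_nonneg m, t1.1, t1.2]⟩
      have t3 : m^2 * (b-a) ≤ (b-a)^2 := by
        have : m^2 ≤ b - a := by nlinarith
        nlinarith
      have t4 : 0 ≤ 2*a*m^2*(b-a) := by
        have : 0 ≤ b - a := by linarith
        positivity
      have t5 : 2*a*m^2*(b-a) ≤ 2*(b-a)^2 := by
        have : 0 ≤ m^2 * (b-a) := mul_nonneg (sq_nonneg _) (by linarith)
        nlinarith
      rw [abs_le]; constructor <;> nlinarith
  · have hd : dPP a = 0 := by simp [dPP, min_eq_right h]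
    rw [hd, PP_of_ge h]
    rcases le_total b 1 with h' | h'
    · rw [PP_of_le h']
      have e : b^2 - (4/3) * b^3 + (1/2) * b^4 - 1/6 - 0*(b-a) = -(2/3*(1-b)^3 - 1/2*(1-b)^4) := by
        ring
      rw [e, abs_neg]
      set m := 1 - b with hm
      have hm0 : 0 ≤ m := by linarith
      have hm1 : m ≤ 1 := by linarith
      have hmb : m^2 ≤ (b-a)^2 := by nlinarith
      have t1 : 0 ≤ m^3 ∧ m^3 ≤ m^2 := ⟨by positivity, by nlinarith [sq_nonneg m]⟩
      have t2 : 0 ≤ m^4 ∧ m^4 ≤ m^2 := ⟨by positivity, by nlinarith [sq_nonneg m, t1.1, t1.2]⟩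
      rw [abs_le]; constructor <;> nlinarith
    · rw [PP_of_ge h']; simp; positivity

lemma h_bound {s q c ρ : ℝ} (hs : 0 < s) (hs1 : s < 1) (hq : 0 < q) (hq1 : q ≤ 1)
    (hc : |c| ≤ 4*ρ) (hρ : 0 < ρ) :
    (max (q + c + ρ^2/2) 0)^s - (max (q+c) 0)^s ≤
      8 * q^(-(s*(1-s)/2)) * ρ^(2*s + s*(1-s)/2) := by
  set η := s*(1-s)/2 with hη
  have h1s : 0 < 1 - s := by linarith
  have hη0 : 0 < η := by positivity
  have hη1 : η ≤ 1 - s := by nlinarith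
  have hη2 : η ≤ 1 := by linarith
  rcases le_or_gt (q/8) ρ with h | h
  · have a1 : max (q + c + ρ^2/2) 0 ≤ max (q+c) 0 + ρ^2/2 :=
      max_le (by linarith [le_max_left (q+c) 0]) (by have := le_max_right (q+c) 0; positivity)
    have a2 : (max (q + c + ρ^2/2) 0)^s ≤ (max (q+c) 0)^s + (ρ^2/2)^s :=
      (Real.rpow_le_rpow (le_max_right _ _) a1 hs.le).trans
        (Real.rpow_add_le_add_rpow (le_max_right _ _) (by positivity) hs.le hs1.le)
    have a3 : (ρ^2/2)^s ≤ ρ^(2*s) := by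
      rw [Real.rpow_mul hρ.le, Real.rpow_two]
      exact Real.rpow_le_rpow (by positivity) (by nlinarith [sq_nonneg ρ]) hs.le
    have a4 : 1 ≤ 8 * q^(-η) * ρ^η := by
      have b1 : 1 ≤ (8*(ρ/q))^η := by
        refine Real.one_le_rpow ?_ hη0.le
        rw [mul_div_assoc', le_div_iff₀ hq]; linarith
      rw [Real.mul_rpow (by norm_num) (by positivity), Real.div_rpow hρ.le hq.le,
        div_eq_mul_inv, ← Real.rpow_neg hq.le] at b1
      have b2 : (8:ℝ)^η ≤ 8 := by
        calc (8:ℝ)^η ≤ 8^(1:ℝ) := Real.rpow_le_rpow_of_exponent_le (by norm_num) hη2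
          _ = 8 := Real.rpow_one 8
      calc 1 ≤ 8^η * (ρ^η * q^(-η)) := b1
        _ ≤ 8 * (ρ^η * q^(-η)) := by gcongr
        _ = _ := by ring
    rw [Real.rpow_add hρ]
    have : 0 < ρ^(2*s) := by positivity
    nlinarith
  · have ha : q/2 ≤ q + c := by linarith [(abs_le.1 hc).1]
    set a := q + c with hadef
    have ha0 : 0 < a := by linarith
    rw [max_eq_left (by positivity : 0 ≤ a + ρ^2/2), max_eq_left ha0.le]
    have a1 : (a + ρ^2/2)^s ≤ a^s * (1 + s * (ρ^2/2/a)) := by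
      have : a + ρ^2/2 = a * (1 + ρ^2/2/a) := by field_simp
      rw [this, Real.mul_rpow ha0.le (by positivity)]
      gcongr
      exact rpow_one_add_le_one_add_mul_self (by
        have : 0 ≤ ρ^2/2/a := by positivity
        linarith) hs.le hs1.le
    have a2 : (a + ρ^2/2)^s - a^s ≤ a^(s-1) * (ρ^2/2) := by
      have e : a^s * (1 + s * (ρ^2/2/a)) = a^s + s * (a^(s-1) * (ρ^2/2)) := by
        rw [Real.rpow_sub_one ha0.ne']; field_simp
      have : 0 ≤ a^(s-1) * (ρ^2/2) := by positivity
      nlinarith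
    have a3 : a^(s-1) ≤ (q/2)^(s-1) := Real.rpow_le_rpow_of_nonpos (by positivity) ha (by linarith)
    have a4 : (q/2)^(s-1) ≤ 2 * q^(s-1) := by
      rw [Real.div_rpow hq.le (by norm_num), div_eq_mul_inv, ← Real.rpow_neg (by norm_num), mul_comm]
      gcongr
      calc (2:ℝ)^(-(s-1)) ≤ 2^(1:ℝ) := Real.rpow_le_rpow_of_exponent_le (by norm_num) (by linarith)
        _ = 2 := Real.rpow_one 2
    have a5 : q^(s-1) * ρ^2 ≤ q^(-η) * ρ^(2*s+η) := by
      have e1 : ρ^2 = ρ^(2*s+η) * ρ^(2-2*s-η) := by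
        rw [← Real.rpow_add hρ, ← Real.rpow_two]; ring_nf
      have e2 : ρ^(2-2*s-η) ≤ q^(2-2*s-η) :=
        Real.rpow_le_rpow hρ.le (by linarith) (by linarith)
      have e3 : q^(s-1) * q^(2-2*s-η) ≤ q^(-η) := by
        rw [← Real.rpow_add hq]
        exact Real.rpow_le_rpow_of_exponent_ge hq hq1 (by linarith)
      calc q^(s-1) * ρ^2 = ρ^(2*s+η) * (q^(s-1) * ρ^(2-2*s-η)) := by rw [e1]; ring
        _ ≤ ρ^(2*s+η) * (q^(s-1) * q^(2-2*s-η)) := by gcongr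
        _ ≤ ρ^(2*s+η) * q^(-η) := by gcongr
        _ = _ := by ring
    have a6 : a^(s-1) * (ρ^2/2) ≤ (2 * q^(s-1)) * (ρ^2/2) := by
      gcongr; exact a3.trans a4
    have : 0 ≤ q^(-η) * ρ^(2*s+η) := by positivity
    linarith

end Barrier

namespace Barrier
section nd
variable {n : ℕ}

local notation "E" => EuclideanSpace ℝ (Fin n)

lemma lim_exists (hn : 0 < n) {s M K r : ℝ} (hs : 0 < s) (hs1 : s < 1) {f : E → ℝ}
    (hm : Measurable f) (hM : ∀ z, |f z| ≤ M) (x : E) (hr : 0 < r)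
    (hK : ∀ z, ‖z‖ < r → |2 * f x - f (x+z) - f (x-z)| ≤ K * ‖z‖^2) :
    ∃ l, Tendsto (fun ε : ℝ => ∫ z in {z : E | ε < ‖z‖}, (f x - f (x+z)) / ‖z‖^((n:ℝ)+2*s))
      (nhdsWithin 0 (Ioi 0)) (nhds l) := by
  set g : E → ℝ := fun z => (2 * f x - f (x+z) - f (x-z)) / ‖z‖^((n:ℝ)+2*s) with hg
  have hgm : Measurable g := by
    have h1 : Measurable (fun z : E => f (x+z)) := hm.comp (measurable_const_add x)
    have h2 : Measurable (fun z : E => f (x-z)) := hm.comp (measurable_const_sub x)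
    exact ((measurable_const.sub h1).sub h2).div (by fun_prop)
  have h2s : 0 < 2 - 2*s := by linarith
  have hgi : Integrable g := by
    have i1 : IntegrableOn g (ball 0 r) := by
      refine Integrable.mono' ((int_near hn h2s r hr).const_mul K) hgm.aestronglyMeasurable ?_
      refine (ae_restrict_mem measurableSet_ball).mono fun z hz => ?_
      have hz' : ‖z‖ < r := by simpa using hz
      rcases eq_or_ne z 0 with rfl | h0
      · have h3 := hK 0 (by simpa using hr)
        have : (0:ℝ) ≤ K * ‖(0:E)‖^(2-2*s-(n:ℝ)) := by
          by_cases h : (2-2*s-(n:ℝ)) = 0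
          · have hK0 : 0 ≤ K := by
              haveI : Nonempty (Fin n) := ⟨⟨0, hn⟩⟩
              obtain ⟨w, hw⟩ := exists_norm_eq E (show 0 ≤ r/2 by linarith)
              have := (abs_nonneg _).trans (hK w (by linarith))
              rw [hw] at this
              have hp : 0 < (r/2)^2 := by positivity
              exact nonneg_of_mul_nonneg_left this hp
            positivity
          · simp [Real.zero_rpow h]
        have hz0 : g 0 = 0 := by
          simp only [hg, add_zero, sub_zero]
          rw [show 2 * f x - f x - f x = 0 by ring, zero_div]
        rw [hz0]; simpa using this
      · have hz0 : 0 < ‖z‖ := norm_pos_iff.2 h0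
        rw [hg]
        simp only
        rw [norm_div, Real.norm_eq_abs, Real.norm_of_nonneg (by positivity), div_eq_mul_inv,
          ← Real.rpow_neg hz0.le]
        calc _ ≤ (K * ‖z‖^2) * ‖z‖^(-((n:ℝ)+2*s)) := by gcongr; exact hK z hz'
          _ = _ := by
            rw [mul_assoc, ← Real.rpow_two, ← Real.rpow_add hz0]; ring_nf
    have i2 : IntegrableOn g {z | r/2 < ‖z‖} := by
      have h1 : Measurable (fun z : E => f (x+z)) := hm.comp (measurable_const_add x)
      have h2 : Measurable (fun z : E => f (x-z)) := hm.comp (measurable_const_sub x)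
      refine int_bdd (M := 4*M) hn hs (by linarith) ((measurable_const.sub h1).sub h2) ?_
      intro z
      have a1 := abs_le.1 (hM x)
      have a2 := abs_le.1 (hM (x+z))
      have a3 := abs_le.1 (hM (x-z))
      rw [abs_le]; constructor <;> linarith
    have := i1.union i2
    rw [← integrableOn_univ]
    refine this.mono_set fun z _ => ?_
    by_cases h : ‖z‖ < r
    · left; simpa using h
    · right; show r/2 < ‖z‖; linarith
  refine ⟨(1/2) * ∫ z, g z, ?_⟩
  have hT : Tendsto (fun ε : ℝ => ∫ z, ({z : E | ε < ‖z‖}.indicator g) z)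
      (nhdsWithin 0 (Ioi 0)) (nhds (∫ z, g z)) := by
    refine tendsto_integral_filter_of_dominated_convergence (fun z => ‖g z‖) ?_ ?_ hgi.norm ?_
    · exact Eventually.of_forall fun ε => (hgm.indicator (meas_far ε)).aestronglyMeasurable
    · exact Eventually.of_forall fun ε => Eventually.of_forall fun z => norm_indicator_le_norm_self _ _
    · refine Eventually.of_forall fun z => ?_
      refine tendsto_const_nhds.congr' ?_
      rcases eq_or_ne z 0 with rfl | h0
      · have hz0 : g 0 = 0 := by
          simp only [hg, add_zero, sub_zero]
          rw [show 2 * f x - f x - f x = 0 by ring, zero_div]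
        refine Eventually.of_forall fun ε => ?_
        simp only [indicator]
        split_ifs <;> simp [hz0]
      · have hz0 : 0 < ‖z‖ := norm_pos_iff.2 h0
        filter_upwards [nhdsWithin_le_nhds (gt_mem_nhds hz0)] with ε hε
        rw [indicator_of_mem]
        exact hε
  refine (hT.const_mul (1/2)).congr' ?_
  filter_upwards [self_mem_nhdsWithin] with ε hε
  have h1 : Measurable (fun z : E => f (x+z)) := hm.comp (measurable_const_add x)
  have hFar : IntegrableOn (fun z : E => (f x - f (x+z)) / ‖z‖^((n:ℝ)+2*s)) {z | ε < ‖z‖} := by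
    refine int_bdd (M := 2*M) hn hs hε (measurable_const.sub h1) ?_
    intro z
    have a1 := abs_le.1 (hM x)
    have a2 := abs_le.1 (hM (x+z))
    rw [abs_le]; constructor <;> linarith
  rw [sym_far hFar, integral_indicator (meas_far ε)]
  congr 2
  ext z
  simp only [hg, norm_neg, ← sub_eq_add_neg]
  ring

lemma C2_quad {V : E → ℝ} {x : E} (hV : ContDiffAt ℝ 2 V x) :
    ∃ (D : E →L[ℝ] ℝ) (K r : ℝ), 0 ≤ K ∧ 0 < r ∧ ∀ z, ‖z‖ < r →
      |V (x+z) - V x - D z| ≤ K * ‖z‖^2 := by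
  have h1 : ContDiffAt ℝ 1 (fderiv ℝ V) x := hV.fderiv_right (by norm_num)
  obtain ⟨K, t, ht, hK⟩ := h1.exists_lipschitzOnWith
  have hd : ∀ᶠ y in nhds x, DifferentiableAt ℝ V y := by
    filter_upwards [hV.eventually (by simp)] with y hy
    exact hy.differentiableAt (by norm_num)
  obtain ⟨r, hr, hball⟩ := Metric.mem_nhds_iff.1 (inter_mem ht hd)
  refine ⟨fderiv ℝ V x, K, r, K.2, hr, fun z hz => ?_⟩
  have hsub : closedBall x ‖z‖ ⊆ ball x r := closedBall_subset_ball hz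
  have hx : x ∈ closedBall x ‖z‖ := by simp
  have := (convex_closedBall x ‖z‖).norm_image_sub_le_of_norm_hasFDerivWithin_le' (f := V)
    (f' := fderiv ℝ V) (φ := fderiv ℝ V x) (C := K * ‖z‖) (x := x) (y := x + z)
    (fun y hy => (hball (hsub hy)).2.hasFDerivAt.hasFDerivWithinAt)
    (fun y hy => ?_) hx (by simp)
  · simpa [pow_two, mul_assoc] using this
  · have h3 := hK.norm_sub_le (hball (hsub hy)).1 (hball (hsub hx)).1
    refine h3.trans ?_
    have : ‖y - x‖ ≤ ‖z‖ := by simpa [dist_eq_norm] using hy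
    gcongr

lemma second_diff {V : E → ℝ} {x : E} (hV : ContDiffAt ℝ 2 V x) (hV0 : ∀ y, 0 ≤ V y) :
    ∃ K r : ℝ, 0 < r ∧ ∀ z, ‖z‖ < r →
      |2 * PP (V x) - PP (V (x+z)) - PP (V (x-z))| ≤ K * ‖z‖^2 := by
  obtain ⟨D, K, r, hK, hr, h⟩ := C2_quad hV
  have main : ∀ z, ‖z‖ < min r 1 →
      |PP (V (x+z)) - PP (V x) - dPP (V x) * D z| ≤
        (4 * (‖D‖ + K)^2 + |dPP (V x)| * K) * ‖z‖^2 := by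
    intro z hz
    have hz1 : ‖z‖ ≤ 1 := (hz.trans_le (min_le_right _ _)).le
    have h1 := h z (hz.trans_le (min_le_left _ _))
    have h2 := PP_quad (hV0 x) (hV0 (x+z))
    have h3 : |V (x+z) - V x| ≤ (‖D‖ + K) * ‖z‖ := by
      have a : |D z| ≤ ‖D‖ * ‖z‖ := D.le_opNorm z
      have b : |V (x+z) - V x| ≤ |V (x+z) - V x - D z| + |D z| := by
        have := abs_add_le (V (x+z) - V x - D z) (D z)
        simpa using this
      have c : K * ‖z‖^2 ≤ K * ‖z‖ := by
        have : ‖z‖^2 ≤ ‖z‖ := by nlinarith [norm_nonneg z]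
        gcongr
      linarith
    have h4 : (V (x+z) - V x)^2 ≤ (‖D‖ + K)^2 * ‖z‖^2 := by
      rw [← mul_pow, ← sq_abs]
      gcongr
    have e : PP (V (x+z)) - PP (V x) - dPP (V x) * D z =
        (PP (V (x+z)) - PP (V x) - dPP (V x) * (V (x+z) - V x))
        + dPP (V x) * (V (x+z) - V x - D z) := by ring
    rw [e]
    refine (abs_add_le _ _).trans ?_
    rw [abs_mul]
    have h5 : |dPP (V x)| * |V (x+z) - V x - D z| ≤ |dPP (V x)| * (K * ‖z‖^2) := by gcongr
    linarith
  refine ⟨2 * (4 * (‖D‖ + K)^2 + |dPP (V x)| * K), min r 1, by positivity, fun z hz => ?_⟩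
  have m1 := abs_le.1 (main z hz)
  have m2 := abs_le.1 (main (-z) (by simpa using hz))
  simp only [map_neg, norm_neg, ← sub_eq_add_neg, mul_neg, sub_neg_eq_add] at m2
  rw [abs_le]
  constructor <;> linarith [m1.1, m1.2, m2.1, m2.2]

end nd
end Barrier

namespace Barrier

lemma V_sq {s μ m : ℝ} (hm : 0 ≤ m) : (μ * m^(s/2))^2 = μ^2 * m^s := by
  rw [mul_pow, ← Real.rpow_natCast (m^(s/2)), ← Real.rpow_mul hm]
  norm_num

lemma pointwise1 {s μ q c ρ : ℝ} (hs : 0 < s) (hs1 : s < 1) (hμ : 1 ≤ μ) (hq : 0 < q) (hq1 : q ≤ 1)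
    (hv : μ * q^(s/2) ≤ 1) (hρ : 0 < ρ) (hc : |c| ≤ 4*ρ) :
    (1 - μ * q^(s/2))^2 * μ^2 * (q^s - (max (q+c) 0)^s)
      + (μ * q^(s/2))^3/6 * (if q + c ≤ 0 then 1 else 0)
      - 8 * μ^2 * q^(-(s*(1-s)/2)) * (if ρ < 1 then ρ^(2*s + s*(1-s)/2) else 0)
      - 2 * (if 1/2 < ρ then 1 else 0)
      ≤ PP (μ * q^(s/2)) - PP (μ * (max (q + c + ρ^2/2) 0)^(s/2)) := by
  set v := μ * q^(s/2) with hvdef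
  have hv0 : 0 ≤ v := by positivity
  have hv2 : v^2 = μ^2 * q^s := V_sq hq.le
  set m := max (q+c) 0 with hm
  have hm0 : 0 ≤ m := le_max_right _ _
  set m' := max (q+c+ρ^2/2) 0 with hm'
  have hm0' : 0 ≤ m' := le_max_right _ _
  have hmm : m ≤ m' := max_le_max (by nlinarith [sq_nonneg ρ]) le_rfl
  have hl0 : 0 ≤ μ * m^(s/2) := by positivity
  have hl0' : 0 ≤ μ * m'^(s/2) := by positivity
  have hll : μ * m^(s/2) ≤ μ * m'^(s/2) := by gcongr
  have hμ2 : 0 < μ^2 := by positivity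
  have hms : 0 ≤ m^s := by positivity
  by_cases hρ1 : ρ < 1
  · have h1 := PP_lip hl0 hll
    rw [V_sq hm0, V_sq hm0'] at h1
    have h2 := h_bound hs hs1 hq hq1 hc hρ
    have h2' : μ^2 * m'^s - μ^2 * m^s ≤ 8 * μ^2 * q^(-(s*(1-s)/2)) * ρ^(2*s + s*(1-s)/2) := by
      rw [← mul_sub]
      have := mul_le_mul_of_nonneg_left h2 hμ2.le
      linarith
    have h3 : (if 1/2 < ρ then (1:ℝ) else 0) ≥ 0 := by split_ifs <;> norm_num
    rw [if_pos hρ1]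
    by_cases hA : q + c ≤ 0
    · have hmz : m = 0 := max_eq_right hA
      rw [if_pos hA]
      have h4 := PP_gain hv0 hv
      rw [hmz, Real.zero_rpow (by positivity), mul_zero, PP_zero, Real.zero_rpow (by positivity)] at h1
      rw [hmz, Real.zero_rpow (by positivity)] at h2' ⊢
      rw [hv2] at h4
      linarith
    · rw [if_neg hA]
      have h4 := PP_tangent hv0 hv hl0
      rw [V_sq hm0, hv2] at h4
      linarith
  · rw [if_neg hρ1, if_pos (show 1/2 < ρ by linarith)]
    have h1 := PP_le hl0'
    have h2 := PP_nonneg hv0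
    have h3 : (if q + c ≤ 0 then (1:ℝ) else 0) ≤ 1 := by split_ifs <;> norm_num
    have h5 : v^3/6 * (if q + c ≤ 0 then (1:ℝ) else 0) ≤ 1/6 := by
      have : v^3 ≤ 1 := pow_le_one₀ hv0 hv
      calc _ ≤ v^3/6 * 1 := by gcongr
        _ ≤ _ := by linarith
    have h6 : (1-v)^2 * μ^2 * (q^s - m^s) ≤ 1 := by
      calc _ = (1-v)^2 * v^2 - (1-v)^2 * μ^2 * m^s := by rw [hv2]; ring
        _ ≤ (1-v)^2 * v^2 := by have : 0 ≤ (1-v)^2 * μ^2 * m^s := by positivity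
                                linarith
        _ ≤ 1 * 1 := by
          have : v^2 ≤ 1 := pow_le_one₀ hv0 hv
          have : (1-v)^2 ≤ 1 := pow_le_one₀ (by linarith) (by linarith)
          gcongr
        _ = 1 := by ring
    linarith

section nd
variable {n : ℕ}

local notation "E" => EuclideanSpace ℝ (Fin n)

lemma A_lower (hn : 0 < n) {s ε q : ℝ} (hs : 0 < s) (hε : 0 < ε) (hq : 0 < q) (x : E)
    (hx1 : 1 < ‖x‖) (hx : ‖x‖ ≤ 4) (hεq : ε * 4 < q) :
    (volume.real (ball (0:E) 1) * 3^(-((n:ℝ)+2*s))) * q^(-(2*s)) ≤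
     ∫ z in {z : E | ε < ‖z‖}, (if q + inner ℝ x z ≤ 0 then (1:ℝ) else 0) / ‖z‖^((n:ℝ)+2*s) := by
  have hx0 : 0 < ‖x‖ := by linarith
  set r := q / ‖x‖ with hr
  have hr0 : 0 < r := by positivity
  set w : E := (-(2*q/‖x‖^2)) • x with hw
  have hwn : ‖w‖ = 2 * r := by
    rw [hw, norm_smul, norm_neg, Real.norm_of_nonneg (by positivity), hr]; field_simp
  have hwi : inner ℝ x w = -(2*q) := by
    rw [hw, inner_smul_right, real_inner_self_eq_norm_sq]; field_simp
  have hrq : q/4 ≤ r := by rw [hr]; gcongr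
  have hB : ∀ z ∈ ball w r, q + inner ℝ x z ≤ 0 ∧ ε < ‖z‖ ∧ ‖z‖ ≤ 3*r := by
    intro z hz
    rw [mem_ball_iff_norm] at hz
    have e : z = w + (z - w) := by abel
    have h1 : inner ℝ x (z-w) ≤ q := by
      calc _ ≤ ‖x‖ * ‖z-w‖ := real_inner_le_norm _ _
        _ ≤ ‖x‖ * r := by gcongr
        _ = q := by rw [hr]; field_simp
    have h2 : inner ℝ x z = inner ℝ x w + inner ℝ x (z-w) := by rw [← inner_add_right, ← e]
    have h3 : ‖z‖ ≤ ‖w‖ + ‖z-w‖ := by conv_lhs => rw [e]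
                                      exact norm_add_le _ _
    have h4 : ‖w‖ ≤ ‖z‖ + ‖z-w‖ := by
      have := norm_sub_le z (z-w)
      simpa using this
    refine ⟨by linarith, by linarith, by linarith⟩
  have hFar : IntegrableOn (fun z : E => (if q + inner ℝ x z ≤ 0 then (1:ℝ) else 0) / ‖z‖^((n:ℝ)+2*s)) {z | ε < ‖z‖} := by
    refine int_bdd (M := 1) hn hs hε ?_ ?_
    · refine Measurable.ite ?_ measurable_const measurable_const
      exact measurableSet_le (by fun_prop) measurable_const
    · intro z; split_ifs <;> simp
  calc _ ≤ ∫ z in ball w r, (3*r)^(-((n:ℝ)+2*s)) := by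
        rw [setIntegral_const, smul_eq_mul, Measure.real, Measure.real, Measure.addHaar_ball_of_pos _ _ hr0, ENNReal.toReal_mul,
          ENNReal.toReal_ofReal (by positivity), finrank_euclideanSpace_fin,
          Real.mul_rpow (by norm_num) hr0.le]
        have h5 : r^n * r^(-((n:ℝ)+2*s)) = r^(-(2*s)) := by
          rw [← Real.rpow_natCast, ← Real.rpow_add hr0]; ring_nf
        have h6 : q^(-(2*s)) ≤ r^(-(2*s)) := by
          apply Real.rpow_le_rpow_of_nonpos hr0 _ (by linarith)
          exact div_le_self hq.le hx1.le
        calc _ ≤ ((volume (ball (0:E) 1)).toReal * 3^(-((n:ℝ)+2*s))) * r^(-(2*s)) := by gcongr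
          _ = _ := by rw [← h5]; ring
    _ ≤ ∫ z in ball w r, (if q + inner ℝ x z ≤ 0 then (1:ℝ) else 0) / ‖z‖^((n:ℝ)+2*s) := by
        refine setIntegral_mono_on (integrableOn_const measure_ball_lt_top.ne) (hFar.mono_set fun z hz => (hB z hz).2.1) measurableSet_ball ?_
        intro z hz
        obtain ⟨h1, h2, h3⟩ := hB z hz
        have hz0 : 0 < ‖z‖ := hε.trans h2
        rw [if_pos h1, one_div, ← Real.rpow_neg hz0.le]
        exact Real.rpow_le_rpow_of_nonpos hz0 h3 (by have : (0:ℝ) ≤ n := by positivity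
                                                     linarith)
    _ ≤ _ := by
        refine setIntegral_mono_set hFar ?_ ?_
        · refine Eventually.of_forall fun z => ?_
          simp only [Pi.zero_apply]
          split_ifs <;> positivity
        · exact (show ball w r ⊆ {z : E | ε < ‖z‖} from fun z hz => (hB z hz).2.1).eventuallyLE

end nd
end Barrier

namespace Barrier
section nd
variable {n : ℕ}

local notation "E" => EuclideanSpace ℝ (Fin n)

noncomputable def VV (s μ : ℝ) (y : E) : ℝ := μ * (max ((‖y‖^2-1)/2) 0)^(s/2)

noncomputable def phi (s μ : ℝ) (y : E) : ℝ := PP (VV s μ y)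

lemma VV_nonneg {s μ : ℝ} (hμ : 0 ≤ μ) (y : E) : 0 ≤ VV s μ y := by
  have : 0 ≤ max ((‖y‖^2-1)/2) 0 := le_max_right _ _
  unfold VV; positivity

lemma VV_cont {s μ : ℝ} (hs : 0 < s) : Continuous (VV s μ : E → ℝ) := by
  unfold VV
  refine continuous_const.mul (Continuous.rpow_const (by fun_prop) fun y => Or.inr (by positivity))

lemma VV_smooth {s μ : ℝ} {x : E} (hx : 1 < ‖x‖) : ContDiffAt ℝ 2 (VV s μ : E → ℝ) x := by
  have h1 : ContDiffAt ℝ 2 (fun y : E => μ * ((‖y‖^2-1)/2)^(s/2)) x := by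
    refine contDiffAt_const.mul (ContDiffAt.rpow_const_of_ne ?_ ?_)
    · exact (((contDiff_norm_sq ℝ).contDiffAt).sub contDiffAt_const).div_const 2
    · have : 0 < (‖x‖^2-1)/2 := by nlinarith
      exact this.ne'
  refine h1.congr_of_eventuallyEq ?_
  have : {y : E | 1 < ‖y‖} ∈ nhds x := (isOpen_lt continuous_const continuous_norm).mem_nhds hx
  filter_upwards [this] with y hy
  have hy' : 1 < ‖y‖ := hy
  unfold VV
  rw [max_eq_left]
  nlinarith

lemma phi_cont {s μ : ℝ} (hs : 0 < s) : Continuous (phi s μ : E → ℝ) :=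
  PP_cont.comp (VV_cont hs)

lemma phi_nonneg {s μ : ℝ} (hμ : 0 ≤ μ) (y : E) : 0 ≤ phi s μ y := PP_nonneg (VV_nonneg hμ y)
lemma phi_le {s μ : ℝ} (hμ : 0 ≤ μ) (y : E) : phi s μ y ≤ 1/6 := PP_le (VV_nonneg hμ y)
lemma phi_abs {s μ : ℝ} (hμ : 0 ≤ μ) (y : E) : |phi s μ y| ≤ 1/6 := by
  rw [abs_of_nonneg (phi_nonneg hμ y)]; exact phi_le hμ y

lemma phi_zero {s μ : ℝ} (hs : 0 < s) {y : E} (hy : ‖y‖ ≤ 1) : phi s μ y = 0 := by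
  unfold phi VV
  rw [max_eq_right (by nlinarith [norm_nonneg y]), Real.zero_rpow (by positivity), mul_zero, PP_zero]

lemma phi_lim (hn : 0 < n) {s μ : ℝ} (hs : 0 < s) (hs1 : s < 1) (hμ : 0 ≤ μ) {x : E} (hx : 1 < ‖x‖) :
    ∃ l, Tendsto (fun ε : ℝ => ∫ z in {z : E | ε < ‖z‖}, (phi s μ x - phi s μ (x+z)) / ‖z‖^((n:ℝ)+2*s))
      (nhdsWithin 0 (Ioi 0)) (nhds l) := by
  obtain ⟨K, r, hr, hK⟩ := second_diff (VV_smooth (s := s) (μ := μ) hx) (VV_nonneg hμ)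
  exact lim_exists hn hs hs1 (phi_cont hs).measurable (phi_abs hμ) x hr hK

lemma phi_int (hn : 0 < n) {s μ ε : ℝ} (hs : 0 < s) (hμ : 0 ≤ μ) (hε : 0 < ε) (x : E) :
    IntegrableOn (fun z => (phi s μ x - phi s μ (x+z)) / ‖z‖^((n:ℝ)+2*s)) {z : E | ε < ‖z‖} := by
  refine int_bdd (M := 1/6) hn hs hε ?_ ?_
  · have := phi_cont (n := n) (μ := μ) hs
    exact Continuous.measurable (by fun_prop)
  · intro z
    have a1 := phi_nonneg (s := s) hμ x
    have a2 := phi_le (s := s) hμ x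
    have a3 := phi_nonneg (s := s) hμ (x+z)
    have a4 := phi_le (s := s) hμ (x+z)
    rw [abs_le]; constructor <;> linarith

/-- far case -/
lemma big_lower (hn : 0 < n) {s μ ε : ℝ} (hs : 0 < s) (hμ : 0 ≤ μ) (hε : 0 < ε) {x : E}
    (hx1 : 1 < ‖x‖) (hx : ‖x‖ ≤ 4) (hεx : ε < ‖x‖ - 1) (hV : 1 ≤ VV s μ x) :
    (volume.real (ball (0:E) 1)) * (5^(-((n:ℝ)+2*s)) / 6) ≤
    ∫ z in {z : E | ε < ‖z‖}, (phi s μ x - phi s μ (x+z)) / ‖z‖^((n:ℝ)+2*s) := by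
  have hFar := phi_int hn (μ := μ) hs hμ hε x
  have hpx : phi s μ x = 1/6 := PP_of_ge hV
  have hB : ∀ z ∈ ball (-x) 1, ε < ‖z‖ ∧ ‖z‖ ≤ 5 ∧ phi s μ (x+z) = 0 := by
    intro z hz
    rw [mem_ball_iff_norm, sub_neg_eq_add, add_comm] at hz
    have h1 : ‖x‖ ≤ ‖x+z‖ + ‖z‖ := by simpa using norm_sub_le (x+z) z
    have h2 : ‖z‖ ≤ ‖x+z‖ + ‖x‖ := by simpa using norm_sub_le (x+z) x
    exact ⟨by linarith, by linarith, phi_zero hs hz.le⟩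
  calc _ = ∫ z in ball (-x) 1, (5^(-((n:ℝ)+2*s)) / 6 : ℝ) := by
        rw [setIntegral_const, smul_eq_mul, Measure.real, Measure.real, Measure.addHaar_ball_center volume (-x)]
    _ ≤ ∫ z in ball (-x) 1, (phi s μ x - phi s μ (x+z)) / ‖z‖^((n:ℝ)+2*s) := by
        refine setIntegral_mono_on (integrableOn_const measure_ball_lt_top.ne) (hFar.mono_set fun z hz => (hB z hz).1) measurableSet_ball ?_
        intro z hz
        obtain ⟨h1, h2, h3⟩ := hB z hz
        have hz0 : 0 < ‖z‖ := hε.trans h1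
        rw [h3, hpx, sub_zero, div_eq_mul_inv (1/6), ← Real.rpow_neg hz0.le]
        have : (5:ℝ)^(-((n:ℝ)+2*s)) ≤ ‖z‖^(-((n:ℝ)+2*s)) :=
          Real.rpow_le_rpow_of_nonpos hz0 h2 (by have : (0:ℝ) ≤ n := by positivity
                                                 linarith)
        linarith
    _ ≤ _ := by
        refine setIntegral_mono_set hFar ?_ ?_
        · refine Eventually.of_forall fun z => ?_
          simp only [Pi.zero_apply]
          have := phi_le (s := s) hμ (x+z)
          rw [hpx]
          refine div_nonneg (by linarith) (by positivity)
        · exact (show ball (-x) 1 ⊆ {z : E | ε < ‖z‖} from fun z hz => (hB z hz).1).eventuallyLE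

lemma small_lower (hn : 0 < n) {s μ ε q : ℝ} (hs : 0 < s) (hs1 : s < 1) (hμ : 1 ≤ μ) (hε : 0 < ε) {x : E}
    (hx1 : 1 < ‖x‖) (hx : ‖x‖ ≤ 4) (hqd : q = (‖x‖^2-1)/2) (hq1 : q ≤ 1) (hεq : ε * 4 < q)
    (hV : μ * q^(s/2) ≤ 1) :
    (1 - μ * q^(s/2))^2 * μ^2 * (-(16 * q^(s-2) * ε^(2-2*s)) * ((volume : Measure E).toSphere.real univ))
     + (μ * q^(s/2))^3/6 * ((volume.real (ball (0:E) 1) * 3^(-((n:ℝ)+2*s))) * q^(-(2*s)))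
     - 8 * μ^2 * q^(-(s*(1-s)/2)) * (∫ z in ball (0:E) 1, ‖z‖^(s*(1-s)/2 - (n:ℝ)))
     - 2 * (∫ z in {z : E | 1/2 < ‖z‖}, ‖z‖^(-(2*s) - (n:ℝ)))
    ≤ ∫ z in {z : E | ε < ‖z‖}, (phi s μ x - phi s μ (x+z)) / ‖z‖^((n:ℝ)+2*s) := by
  have hq : 0 < q := by linarith
  have hη : 0 < s*(1-s)/2 := by have : 0 < 1 - s := by linarith
                                positivity
  have hpint := phi_int hn (μ := μ) hs (by linarith) hε x
  have i1 := L_int hn hs hs1 hε hq x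
  have i2 : IntegrableOn (fun z : E => (if q + inner ℝ x z ≤ 0 then (1:ℝ) else 0) / ‖z‖^((n:ℝ)+2*s)) {z | ε < ‖z‖} := by
    refine int_bdd (M := 1) hn hs hε ?_ ?_
    · refine Measurable.ite ?_ measurable_const measurable_const
      exact measurableSet_le (by fun_prop) measurable_const
    · intro z; split_ifs <;> simp
  have j3 := int_near (n := n) hn hη 1 one_pos
  have j4 := int_far (n := n) (η := 2*s) hn (by positivity) (show (0:ℝ) < 1/2 by norm_num)
  set F3 : E → ℝ := (ball (0:E) 1).indicator (fun z => ‖z‖^(s*(1-s)/2 - (n:ℝ))) with hF3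
  set F4 : E → ℝ := ({z : E | 1/2 < ‖z‖}).indicator (fun z => ‖z‖^(-(2*s) - (n:ℝ))) with hF4
  have i3 : Integrable F3 := (integrable_indicator_iff measurableSet_ball).2 j3
  have i4 : Integrable F4 := (integrable_indicator_iff (meas_far _)).2 j4
  have n3 : ∀ z, 0 ≤ F3 z := fun z => indicator_nonneg (fun _ _ => by positivity) z
  have n4 : ∀ z, 0 ≤ F4 z := fun z => indicator_nonneg (fun _ _ => by positivity) z
  have e1 := J_lower hn hs hs1 hε hq x hx hεq
  have e2 := A_lower hn hs hε hq x hx1 hx hεq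
  have e3 : ∫ z in {z : E | ε < ‖z‖}, F3 z ≤ ∫ z in ball (0:E) 1, ‖z‖^(s*(1-s)/2 - (n:ℝ)) := by
    rw [← integral_indicator measurableSet_ball]
    exact setIntegral_le_integral i3 (Eventually.of_forall n3)
  have e4 : ∫ z in {z : E | ε < ‖z‖}, F4 z ≤ ∫ z in {z : E | 1/2 < ‖z‖}, ‖z‖^(-(2*s) - (n:ℝ)) := by
    rw [← integral_indicator (meas_far (1/2))]
    exact setIntegral_le_integral i4 (Eventually.of_forall n4)
  set a1 := (1 - μ * q^(s/2))^2 * μ^2 with ha1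
  set a2 := (μ * q^(s/2))^3/6 with ha2
  set a3 := 8 * μ^2 * q^(-(s*(1-s)/2)) with ha3
  have p1 : 0 ≤ a1 := by positivity
  have p2 : 0 ≤ a2 := by positivity
  have p3 : 0 ≤ a3 := by positivity
  have k1 := i1.const_mul a1
  have k2 := i2.const_mul a2
  have k3 := (i3.integrableOn (s := {z : E | ε < ‖z‖})).const_mul a3
  have k4 := (i4.integrableOn (s := {z : E | ε < ‖z‖})).const_mul 2
  have key := setIntegral_mono_on (((k1.add k2).sub k3).sub k4) hpint (meas_far ε) ?_
  · have k12 := k1.add k2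
    have k123 := k12.sub k3
    rw [integral_sub' k123 k4, integral_sub' k12 k3, integral_add' k1 k2, integral_const_mul,
      integral_const_mul, integral_const_mul, integral_const_mul] at key
    have m1 := mul_le_mul_of_nonneg_left e1 p1
    have m2 := mul_le_mul_of_nonneg_left e2 p2
    have m3 := mul_le_mul_of_nonneg_left e3 p3
    linarith
  · intro z hz
    have hz0 : 0 < ‖z‖ := hε.trans hz
    have hpw := pointwise1 (c := inner ℝ x z) hs hs1 hμ hq hq1 hV hz0 (by
      refine (abs_real_inner_le_norm x z).trans ?_
      gcongr)
    have hq2 : (‖x+z‖^2-1)/2 = q + inner ℝ x z + ‖z‖^2/2 := by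
      rw [norm_add_sq_real, hqd]; ring
    have hpx : phi s μ x = PP (μ * q^(s/2)) := by
      unfold phi VV; rw [← hqd, max_eq_left hq.le]
    have hpxz : phi s μ (x+z) = PP (μ * (max (q + inner ℝ x z + ‖z‖^2/2) 0)^(s/2)) := by
      unfold phi VV; rw [hq2]
    rw [hpx, hpxz]
    have hP : 0 < ‖z‖^((n:ℝ)+2*s) := by positivity
    refine le_trans (le_of_eq ?_) (div_le_div_of_nonneg_right hpw hP.le)
    have f3 : F3 z = (if ‖z‖ < 1 then ‖z‖^(2*s + s*(1-s)/2) else 0) / ‖z‖^((n:ℝ)+2*s) := by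
      simp only [hF3, indicator, mem_ball_zero_iff]
      split_ifs
      · rw [← Real.rpow_sub hz0]; ring_nf
      · simp
    have f4 : F4 z = (if 1/2 < ‖z‖ then 1 else 0) / ‖z‖^((n:ℝ)+2*s) := by
      simp only [hF4, indicator, mem_ofPred_eq]
      split_ifs
      · rw [one_div, ← Real.rpow_neg hz0.le]; ring_nf
      · simp
    simp only [Pi.add_apply, Pi.sub_apply]
    rw [f3, f4]
    ring

end nd
end Barrier

namespace Barrier

lemma final_alg {s μ q κ R2 R3 : ℝ} (hs : 0 < s) (hs1 : s < 1) (hμ : 1 ≤ μ) (hq : 0 < q) (hq1 : q ≤ 1)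
    (hR2 : 0 ≤ R2) (hR3 : 0 ≤ R3) (h : 8 * R2 + 2 * R3 + 1 ≤ μ * κ / 6) :
    1 ≤ (μ * q^(s/2))^3/6 * (κ * q^(-(2*s))) - 8 * μ^2 * q^(-(s*(1-s)/2)) * R2 - 2 * R3 := by
  have t1 : (μ * q^(s/2))^3/6 * (κ * q^(-(2*s))) = μ^2 * q^(-(s/2)) * (μ * κ / 6) := by
    have : (q^(s/2))^3 * q^(-(2*s)) = q^(-(s/2)) := by
      rw [← Real.rpow_natCast, ← Real.rpow_mul hq.le, ← Real.rpow_add hq]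
      congr 1; push_cast; ring
    rw [← this]; ring
  have t2 : q^(-(s*(1-s)/2)) ≤ q^(-(s/2)) :=
    Real.rpow_le_rpow_of_exponent_ge hq hq1 (by nlinarith)
  have t3 : 1 ≤ q^(-(s/2)) := Real.one_le_rpow_of_pos_of_le_one_of_nonpos hq hq1 (by linarith)
  have hμ2' : 1 ≤ μ^2 := one_le_pow₀ hμ
  rw [t1]
  generalize q^(-(s/2)) = Q at *
  generalize q^(-(s*(1-s)/2)) = W at *
  have t4 : 1 ≤ μ^2 * Q := by nlinarith
  have t5 : 8 * μ^2 * W * R2 ≤ 8 * μ^2 * Q * R2 := by gcongr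
  have t6 := mul_le_mul_of_nonneg_left h (show 0 ≤ μ^2 * Q by linarith)
  have t7 := mul_le_mul_of_nonneg_right t4 hR3
  linarith

section nd
variable {n : ℕ}

local notation "E" => EuclideanSpace ℝ (Fin n)

lemma translate (u : E → ℝ) (x : E) (ε p : ℝ) :
    ∫ y in {y : E | ε < dist y x}, (u x - u y) / dist x y ^ p =
    ∫ z in {z : E | ε < ‖z‖}, (u x - u (x+z)) / ‖z‖ ^ p := by
  have hmp := measurePreserving_add_left (volume : Measure E) x
  have hemb : MeasurableEmbedding (fun z : E => x + z) := (MeasurableEquiv.addLeft x).measurableEmbedding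
  have h := hmp.setIntegral_preimage_emb hemb (fun y => (u x - u y) / dist x y ^ p) {y : E | ε < dist y x}
  rw [← h]
  have hpre : (fun z : E => x + z) ⁻¹' {y : E | ε < dist y x} = {z : E | ε < ‖z‖} := by
    ext z; simp
  rw [hpre]
  simp

/-- uniform lower bound for the limit -/
lemma lower (hn : 0 < n) {s μ l : ℝ} (hs : 0 < s) (hs1 : s < 1) (hμ : 1 ≤ μ)
    (hμ2 : 8 * (∫ z in ball (0:E) 1, ‖z‖^(s*(1-s)/2 - (n:ℝ)))
      + 2 * (∫ z in {z : E | 1/2 < ‖z‖}, ‖z‖^(-(2*s) - (n:ℝ))) + 1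
      ≤ μ * (volume.real (ball (0:E) 1) * 3^(-((n:ℝ)+2*s))) / 6) {x : E} (hx1 : 1 < ‖x‖) (hx : ‖x‖ ≤ 4)
    (hl : Tendsto (fun ε : ℝ => ∫ z in {z : E | ε < ‖z‖}, (phi s μ x - phi s μ (x+z)) / ‖z‖^((n:ℝ)+2*s))
      (nhdsWithin 0 (Ioi 0)) (nhds l)) :
    min 1 ((volume.real (ball (0:E) 1)) * (5^(-((n:ℝ)+2*s)) / 6)) ≤ l := by
  rcases le_or_gt 1 (VV s μ x) with hV | hV
  · refine (min_le_right _ _).trans (ge_of_tendsto hl ?_)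
    have : ∀ᶠ ε in nhdsWithin (0:ℝ) (Ioi 0), ε < ‖x‖ - 1 :=
      nhdsWithin_le_nhds (gt_mem_nhds (by linarith))
    filter_upwards [this, self_mem_nhdsWithin] with ε h1 h2
    exact big_lower hn hs (by linarith) h2 hx1 hx h1 hV
  · refine (min_le_left _ _).trans ?_
    obtain ⟨q, hqd⟩ : ∃ q, q = (‖x‖^2-1)/2 := ⟨_, rfl⟩
    have hq : 0 < q := by rw [hqd]; nlinarith
    have hVq : μ * q^(s/2) < 1 := by
      unfold VV at hV; rwa [← hqd, max_eq_left hq.le] at hV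
    have hq1 : q ≤ 1 := by
      by_contra h
      have : 1 < q^(s/2) := Real.one_lt_rpow (by linarith) (by positivity)
      nlinarith
    set R2 := ∫ z in ball (0:E) 1, ‖z‖^(s*(1-s)/2 - (n:ℝ)) with hR2
    set R3 := ∫ z in {z : E | 1/2 < ‖z‖}, ‖z‖^(-(2*s) - (n:ℝ)) with hR3
    set κ := volume.real (ball (0:E) 1) * 3^(-((n:ℝ)+2*s)) with hκ
    have hR2' : 0 ≤ R2 := integral_nonneg fun z => by positivity
    have hR3' : 0 ≤ R3 := integral_nonneg fun z => by positivity
    set S := ((volume : Measure E).toSphere.real univ) with hS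
    have hlim : Tendsto (fun ε : ℝ => (1 - μ * q^(s/2))^2 * μ^2 * (-(16 * q^(s-2) * ε^(2-2*s)) * S)
       + (μ * q^(s/2))^3/6 * (κ * q^(-(2*s))) - 8 * μ^2 * q^(-(s*(1-s)/2)) * R2 - 2 * R3)
       (nhdsWithin 0 (Ioi 0)) (nhds ((1 - μ * q^(s/2))^2 * μ^2 * (-(16 * q^(s-2) * (0:ℝ)^(2-2*s)) * S)
       + (μ * q^(s/2))^3/6 * (κ * q^(-(2*s))) - 8 * μ^2 * q^(-(s*(1-s)/2)) * R2 - 2 * R3)) := by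
      have hc : Continuous (fun ε : ℝ => ε^(2-2*s)) := Real.continuous_rpow_const (by linarith)
      refine Tendsto.mono_left (Continuous.tendsto ?_ 0) nhdsWithin_le_nhds
      fun_prop
    have hle := le_of_tendsto_of_tendsto hlim hl (by
      have : ∀ᶠ ε in nhdsWithin (0:ℝ) (Ioi 0), ε < q/4 :=
        nhdsWithin_le_nhds (gt_mem_nhds (by linarith))
      filter_upwards [this, self_mem_nhdsWithin] with ε h1 h2
      exact small_lower hn hs hs1 hμ h2 hx1 hx hqd hq1 (by linarith) hVq.le)
    refine le_trans ?_ hle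
    rw [Real.zero_rpow (by linarith)]
    rw [show (1 - μ * q^(s/2))^2 * μ^2 * (-(16 * q^(s-2) * 0) * S) = 0 by ring, zero_add]
    exact final_alg hs hs1 hμ hq hq1 hR2' hR3' hμ2

end nd
end Barrier

/-- **Existence of a supersolution barrier.** There exist `C₁ > 0` and a continuous
radial function `φ₁` such that: `(−Δ)^s φ₁ ≥ 1` in `B₄ \ B₁`; `φ₁ ≡ 0` in `B₁`;
`0 ≤ φ₁(x) ≤ C₁ (|x| − 1)^s` in `B₄ \ B₁`; and `1 ≤ φ₁ ≤ C₁` outside `B₄`. -/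
theorem supersolution_barrier
    (n : ℕ) (hn : 0 < n) (s : ℝ) (hs : s ∈ Set.Ioo (0 : ℝ) 1) :
    ∃ C₁ : ℝ, 0 < C₁ ∧
      ∃ φ₁ : EuclideanSpace ℝ (Fin n) → ℝ,
        Continuous φ₁ ∧
        (∃ g : ℝ → ℝ, ∀ x, φ₁ x = g ‖x‖) ∧
        (∀ x : EuclideanSpace ℝ (Fin n), 1 < ‖x‖ → ‖x‖ < 4 →
          ∃ v : ℝ, fracLapEq n s φ₁ x v ∧ 1 ≤ v) ∧
        (∀ x : EuclideanSpace ℝ (Fin n), ‖x‖ ≤ 1 → φ₁ x = 0) ∧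
        (∀ x : EuclideanSpace ℝ (Fin n), 1 < ‖x‖ → ‖x‖ < 4 →
          0 ≤ φ₁ x ∧ φ₁ x ≤ C₁ * (‖x‖ - 1) ^ s) ∧
        (∀ x : EuclideanSpace ℝ (Fin n), 4 ≤ ‖x‖ → 1 ≤ φ₁ x ∧ φ₁ x ≤ C₁) := by
  obtain ⟨hs0, hs1⟩ := hs
  have hvol : 0 < volume.real (ball (0:EuclideanSpace ℝ (Fin n)) 1) :=
    ENNReal.toReal_pos (measure_ball_pos _ _ one_pos).ne' measure_ball_lt_top.ne
  obtain ⟨T, hT⟩ : ∃ T, T = 8 * (∫ z in ball (0:EuclideanSpace ℝ (Fin n)) 1, ‖z‖^(s*(1-s)/2 - (n:ℝ)))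
      + 2 * (∫ z in {z : EuclideanSpace ℝ (Fin n) | 1/2 < ‖z‖}, ‖z‖^(-(2*s) - (n:ℝ))) + 1 := ⟨_, rfl⟩
  obtain ⟨κ, hκ⟩ : ∃ κ, κ = volume.real (ball (0:EuclideanSpace ℝ (Fin n)) 1) * (3:ℝ)^(-((n:ℝ)+2*s)) := ⟨_, rfl⟩
  have hκ0 : 0 < κ := by rw [hκ]; positivity
  obtain ⟨μ, hμ, hμ2⟩ : ∃ μ : ℝ, 1 ≤ μ ∧ T ≤ μ * κ / 6 := by
    refine ⟨max 1 (6*T/κ), le_max_left _ _, ?_⟩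
    calc T = (6*T/κ) * κ / 6 := by field_simp
      _ ≤ _ := by gcongr; exact le_max_right _ _
  obtain ⟨c, hc⟩ : ∃ c, c = min 1 ((volume.real (ball (0:EuclideanSpace ℝ (Fin n)) 1)) * ((5:ℝ)^(-((n:ℝ)+2*s)) / 6)) := ⟨_, rfl⟩
  have hc0 : 0 < c := by rw [hc]; exact lt_min one_pos (by positivity)
  obtain ⟨D, hD⟩ : ∃ D, D = (2:ℝ) ^ (2 * s) * s * Real.Gamma (s + n / 2) /
          (Real.pi ^ ((n : ℝ) / 2) * Real.Gamma (1 - s)) := ⟨_, rfl⟩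
  have hD0 : 0 < D := by
    have g1 : 0 < Real.Gamma (s + n/2) := Real.Gamma_pos_of_pos (by positivity)
    have g2 : 0 < Real.Gamma (1 - s) := Real.Gamma_pos_of_pos (by linarith)
    have := Real.pi_pos
    rw [hD]; positivity
  obtain ⟨M, hM6, hM⟩ : ∃ M : ℝ, 6 ≤ M ∧ 1 ≤ D * (M * c) := by
    refine ⟨max 6 (1/(D*c)), le_max_left _ _, ?_⟩
    calc (1:ℝ) = D * ((1/(D*c)) * c) := by field_simp
      _ ≤ _ := by gcongr; exact le_max_right _ _
  have hμ0 : 0 ≤ μ := by linarith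
  have hM0 : 0 < M := by linarith
  have hC0 : 0 < M * (μ^2 * (5/2) + 1) := by positivity
  refine ⟨M * (μ^2 * (5/2) + 1), hC0, fun y => M * Barrier.phi s μ y, ?_, ?_, ?_, ?_, ?_, ?_⟩
  · exact continuous_const.mul (Barrier.phi_cont hs0)
  · exact ⟨fun r => M * Barrier.PP (μ * (max ((r^2-1)/2) 0)^(s/2)), fun x => rfl⟩
  · intro x hx1 hx4
    obtain ⟨l, hl⟩ := Barrier.phi_lim hn hs0 hs1 hμ0 hx1
    have hle := Barrier.lower hn hs0 hs1 hμ (by rw [← hT, ← hκ]; exact hμ2) hx1 hx4.le hl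
    rw [← hc] at hle
    refine ⟨D * (M * l), ?_, hM.trans (by gcongr)⟩
    unfold fracLapEq
    rw [← hD]
    refine Tendsto.const_mul D ?_
    refine (hl.const_mul M).congr fun ε => ?_
    rw [Barrier.translate (fun y => M * Barrier.phi s μ y), ← integral_const_mul]
    congr 1
    ext z
    ring
  · intro x hx
    simp only [Barrier.phi_zero hs0 hx, mul_zero]
  · intro x hx1 hx4
    refine ⟨mul_nonneg hM0.le (Barrier.phi_nonneg hμ0 x), ?_⟩
    rw [mul_assoc]
    refine mul_le_mul_of_nonneg_left ?_ hM0.le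
    have h0 : 0 < ‖x‖ - 1 := by linarith
    have hq : 0 ≤ (‖x‖^2-1)/2 := by nlinarith
    have h1 : Barrier.phi s μ x ≤ μ^2 * ((‖x‖^2-1)/2)^s := by
      refine (Barrier.PP_le_sq (Barrier.VV_nonneg hμ0 x)).trans ?_
      unfold Barrier.VV
      rw [max_eq_left hq, Barrier.V_sq hq]
    have h2 : ((‖x‖^2-1)/2)^s ≤ (5/2) * (‖x‖-1)^s := by
      calc _ ≤ ((5/2) * (‖x‖-1))^s := by
            refine Real.rpow_le_rpow hq ?_ hs0.le
            nlinarith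
        _ = (5/2)^s * (‖x‖-1)^s := Real.mul_rpow (by norm_num) h0.le
        _ ≤ (5/2)^(1:ℝ) * (‖x‖-1)^s := by
            gcongr
            norm_num
        _ = _ := by rw [Real.rpow_one]
    have h3 : 0 ≤ (‖x‖-1)^s := by positivity
    calc _ ≤ _ := h1
      _ ≤ μ^2 * ((5/2) * (‖x‖-1)^s) := by gcongr
      _ ≤ _ := by linarith
  · intro x hx
    have hV : 1 ≤ Barrier.VV s μ x := by
      unfold Barrier.VV
      have h1 : 1 ≤ max ((‖x‖^2-1)/2) 0 := le_max_of_le_left (by nlinarith)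
      have h2 : 1 ≤ (max ((‖x‖^2-1)/2) 0)^(s/2) := Real.one_le_rpow h1 (by positivity)
      nlinarith
    have hp : Barrier.phi s μ x = 1/6 := Barrier.PP_of_ge hV
    simp only [hp]
    constructor
    · linarith
    · gcongr
      nlinarith [sq_nonneg μ]
end

section
/- δ^s boundary behavior: let Ω be a bounded open set satisfying the exterior ball condition with radius ρ > 0, and let r₀ > 0. Then there exists a constant C, depending only on n, s, Ω, ρ and r₀, such that whenever f : Ω → ℝ and ψ : ℝⁿ → ℝ are bounded on Ω with ψ < 0 on ℝⁿ \ Ω, and u solves the fractional obstacle problem with contact set Λ satisfying dist(Λ, ∂Ω) ≥ r₀, one has |u(x)| ≤ C (‖f‖_{L∞(Ω)} + ‖ψ‖_{L∞(Ω)}) δ(x)^s for every x ∈ Ω, where δ(x) = dist(x, ∂Ω). -/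
open MeasureTheory Metric Set Filter

/-- `u` solves the fractional obstacle problem on `Ω` with forcing `f` and obstacle `ψ`. -/
def SolvesObstacle (n : ℕ) (s : ℝ) (Ω : Set (EuclideanSpace ℝ (Fin n)))
    (f ψ u : EuclideanSpace ℝ (Fin n) → ℝ) : Prop :=
  (∃ M, ∀ x, |u x| ≤ M) ∧ Continuous u ∧ (∀ x ∉ Ω, u x = 0) ∧
    ∀ x ∈ Ω, ∃ g, fracLapEq n s u x g ∧ min (g - f x) (u x - ψ x) = 0

/-- `Ω` satisfies the exterior ball condition with radius `ρ`. -/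
def ExteriorBallCondition (n : ℕ) (ρ : ℝ) (Ω : Set (EuclideanSpace ℝ (Fin n))) : Prop :=
  ∀ z ∈ frontier Ω, ∃ x₀ : EuclideanSpace ℝ (Fin n),
    dist x₀ z = ρ ∧ Metric.closedBall x₀ ρ ⊆ Ωᶜ

/-- the `L^∞(S)` norm, as `sSup {|f x| : x ∈ S}`. -/
noncomputable def supOn {α : Type*} (S : Set α) (f : α → ℝ) : ℝ :=
  sSup ((fun x => |f x|) '' S)


lemma oneD_G_deriv (s t : ℝ) (ht0 : 0 < t) (ht1 : t < 1) :
    HasDerivAt (fun t : ℝ => (1 - (1 - t) ^ s) ^ 2 * t ^ (-2 * s))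
      (-(2 * s) * ((1 - (1 - t) ^ s) * (1 - (1 - t) ^ (s - 1)) * t ^ (-1 - 2 * s))) t := by
  have h1 : HasDerivAt (fun t : ℝ => 1 - (1 - t) ^ s) (s * (1 - t) ^ (s - 1)) t := by
    have ha : HasDerivAt (fun t : ℝ => 1 - t) (-1) t := by
      simpa using (hasDerivAt_id t).const_sub 1
    have := (ha.rpow_const (p := s) (Or.inl (by linarith))).const_sub 1
    refine this.congr_deriv ?_
    ring
  have h2 : HasDerivAt (fun t : ℝ => t ^ (-2 * s)) ((-2 * s) * t ^ (-2 * s - 1)) t :=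
    Real.hasDerivAt_rpow_const (Or.inl ht0.ne')
  refine ((h1.pow 2).mul h2).congr_deriv ?_
  have e1 : t ^ (-2 * s) = t * t ^ (-1 - 2 * s) := by
    nth_rewrite 2 [← Real.rpow_one t]
    rw [← Real.rpow_add ht0]
    ring_nf
  have e2 : t ^ (-2 * s - 1) = t ^ (-1 - 2 * s) := by ring_nf
  have e3 : (1 - t) ^ s = (1 - t) * (1 - t) ^ (s - 1) := by
    have : (0 : ℝ) < 1 - t := by linarith
    rw [Real.rpow_sub_one this.ne']; field_simp
  rw [e1, e2]
  simp only [Pi.pow_apply]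
  push_cast
  set X := (1 - t) ^ (s - 1) with hX
  rw [e3]
  ring

lemma oneD_G_le_one (s t : ℝ) (hs0 : 0 < s) (hs1 : s < 1) (ht0 : 0 < t) (ht1 : t < 1) :
    (1 - (1 - t) ^ s) ^ 2 * t ^ (-2 * s) ≤ 1 := by
  have h : (1 : ℝ) ≤ (1 - t) ^ s + t ^ s := by
    have := Real.rpow_add_le_add_rpow (by linarith : (0:ℝ) ≤ 1 - t) ht0.le hs0.le hs1.le
    simpa using this
  have h0 : (1 - t) ^ s ≤ 1 := Real.rpow_le_one (by linarith) (by linarith) hs0.le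
  have h2 : (1 - (1 - t) ^ s) ^ 2 ≤ (t ^ s) ^ 2 := by
    apply pow_le_pow_left₀ <;> linarith
  have h3 : (t ^ s) ^ 2 * t ^ (-2 * s) = 1 := by
    rw [← Real.rpow_natCast, ← Real.rpow_mul ht0.le, ← Real.rpow_add ht0]
    push_cast; ring_nf; simp
  calc _ ≤ (t ^ s) ^ 2 * t ^ (-2 * s) := by gcongr
    _ = 1 := h3

lemma oneD_cont (a b p : ℝ) (hab : a ≤ b) (hb : b < 1) :
    ContinuousOn (fun t : ℝ => ((1 - t) ^ p)) (Set.uIcc a b) := by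
  intro t ht
  rw [Set.uIcc_of_le hab] at ht
  exact (ContinuousAt.rpow_const (by fun_prop) (Or.inl (by linarith [ht.2]))).continuousWithinAt

lemma oneD_cont2 (a b p : ℝ) (ha : 0 < a) (hab : a ≤ b) :
    ContinuousOn (fun t : ℝ => (t ^ p)) (Set.uIcc a b) := by
  intro t ht
  rw [Set.uIcc_of_le hab] at ht
  exact (ContinuousAt.rpow_const (by fun_prop) (Or.inl (by linarith [ht.1]))).continuousWithinAt

lemma oneD_int (s a b : ℝ) (hs0 : 0 < s) (ha : 0 < a) (hab : a ≤ b) (hb : b < 1) :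
    ∫ t in a..b, (1 - (1 - t) ^ s) * (1 - (1 - t) ^ (s - 1)) * t ^ (-1 - 2 * s) =
      ((1 - (1 - a) ^ s) ^ 2 * a ^ (-2 * s) - (1 - (1 - b) ^ s) ^ 2 * b ^ (-2 * s)) / (2 * s) := by
  have key := intervalIntegral.integral_eq_sub_of_hasDerivAt (a := a) (b := b)
    (f := fun t : ℝ => (1 - (1 - t) ^ s) ^ 2 * t ^ (-2 * s))
    (f' := fun t => (-(2 * s) * ((1 - (1 - t) ^ s) * (1 - (1 - t) ^ (s - 1)) * t ^ (-1 - 2 * s))))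
    (fun t ht => by
      rw [Set.uIcc_of_le hab] at ht
      exact oneD_G_deriv s t (by linarith [ht.1]) (by linarith [ht.2]))
    (by
      apply ContinuousOn.intervalIntegrable
      have := oneD_cont a b s hab hb
      have := oneD_cont a b (s-1) hab hb
      have := oneD_cont2 a b (-1 - 2 * s) ha hab
      fun_prop)
  rw [intervalIntegral.integral_const_mul] at key
  rw [eq_div_iff (by positivity)]
  linarith

lemma oneD_subst (s a T : ℝ) (ha : 0 < a) (haT : a ≤ T) :
    ∫ t in a..T, (1 - (1 + t) ^ s) * t ^ (-1 - 2 * s) =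
    ∫ u in (a / (1 + a))..(T / (1 + T)),
      ((1 - u) ^ (2 * s - 1) - (1 - u) ^ (s - 1)) * u ^ (-1 - 2 * s) := by
  have hle : a / (1 + a) ≤ T / (1 + T) := by
    rw [div_le_div_iff₀ (by linarith) (by linarith)]; nlinarith
  have hpos : 0 < a / (1 + a) := by positivity
  have hT1 : T / (1 + T) < 1 := by rw [div_lt_one] <;> linarith
  have hmem : ∀ u ∈ Set.uIcc (a / (1 + a)) (T / (1 + T)), 0 < u ∧ u < 1 := by
    intro u hu
    rw [Set.uIcc_of_le hle] at hu
    exact ⟨by linarith [hu.1], by linarith [hu.2]⟩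
  have key := intervalIntegral.integral_comp_mul_deriv' (a := a / (1 + a)) (b := T / (1 + T))
    (f := fun u : ℝ => u / (1 - u)) (f' := fun u => 1 / (1 - u) ^ 2)
    (g := fun t => (1 - (1 + t) ^ s) * t ^ (-1 - 2 * s))
    (fun u hu => by
      have h1 : HasDerivAt (fun u : ℝ => u / (1 - u)) ((1 * (1 - u) - u * (-1)) / (1 - u) ^ 2) u := by
        apply (hasDerivAt_id u).div
        · simpa using (hasDerivAt_id u).const_sub 1
        · have := (hmem u hu).2; linarith
      refine h1.congr_deriv ?_; ring)
    (by
      intro u hu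
      have := (hmem u hu).2
      apply ContinuousAt.continuousWithinAt
      apply ContinuousAt.div (by fun_prop) (by fun_prop)
      have : 0 < 1 - u := by linarith
      positivity)
    (by
      rintro _ ⟨u, hu, rfl⟩
      obtain ⟨h0, h1⟩ := hmem u hu
      have h3 : 0 < 1 - u := by linarith
      have h2 : 0 < u / (1 - u) := by positivity
      apply ContinuousAt.continuousWithinAt
      apply ContinuousAt.mul
      · apply ContinuousAt.sub (by fun_prop)
        exact ContinuousAt.rpow_const (by fun_prop) (Or.inl (by positivity))
      · exact ContinuousAt.rpow_const (by fun_prop) (Or.inl (by positivity)))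
  have e1 : a / (1 + a) / (1 - a / (1 + a)) = a := by field_simp; ring
  have e2 : T / (1 + T) / (1 - T / (1 + T)) = T := by
    have : 0 < T := by linarith
    field_simp; ring
  rw [e1, e2] at key
  rw [← key]
  apply intervalIntegral.integral_congr
  intro u hu
  obtain ⟨h0, h1⟩ := hmem u hu
  have h3 : 0 < 1 - u := by linarith
  have e3 : 1 + u / (1 - u) = (1 - u)⁻¹ := by field_simp; ring
  simp only [Function.comp]
  rw [e3, Real.inv_rpow h3.le, Real.div_rpow h0.le h3.le]
  have e4 : (1 - u) ^ (-1 - 2 * s) = ((1 - u) * (1 - u) ^ s * (1 - u) ^ s)⁻¹ := by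
    nth_rewrite 2 [← Real.rpow_one (1 - u)]
    rw [← Real.rpow_add h3, ← Real.rpow_add h3, ← Real.rpow_neg h3.le]
    ring_nf
  have e5 : (1 - u) ^ (2 * s - 1) = (1 - u) ^ s * (1 - u) ^ s / (1 - u) := by
    rw [← Real.rpow_add h3, ← Real.rpow_sub_one h3.ne']; ring_nf
  have e6 : (1 - u) ^ (s - 1) = (1 - u) ^ s / (1 - u) := by
    rw [← Real.rpow_sub_one h3.ne']
  rw [e4, e5, e6]
  have : 0 < (1 - u) ^ s := Real.rpow_pos_of_pos h3 s
  field_simp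

lemma oneD_intA (s ε : ℝ) (hs0 : 0 < s) (hs1 : s < 1) (hε : 0 < ε) :
    IntegrableOn (fun t : ℝ => (1 - (1 + t) ^ s) * t ^ (-1 - 2 * s)) (Ioi ε) := by
  have h1 : IntegrableOn (fun t : ℝ => t ^ (-1 - s)) (Ioi ε) :=
    integrableOn_Ioi_rpow_of_lt (by linarith) hε
  refine Integrable.mono' h1 ?_ ?_
  · apply ContinuousOn.aestronglyMeasurable _ measurableSet_Ioi
    intro t ht
    have ht : ε < t := ht
    apply ContinuousAt.continuousWithinAt
    apply ContinuousAt.mul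
    · apply ContinuousAt.sub (by fun_prop)
      exact ContinuousAt.rpow_const (by fun_prop) (Or.inl (by linarith))
    · exact ContinuousAt.rpow_const (by fun_prop) (Or.inl (by linarith))
  · filter_upwards [ae_restrict_mem measurableSet_Ioi] with t ht
    have ht : 0 < t := lt_trans hε ht
    have h2 : (1 + t) ^ s ≤ 1 + t ^ s := by
      have := Real.rpow_add_le_add_rpow (by linarith : (0:ℝ) ≤ 1) ht.le hs0.le hs1.le
      simpa using this
    have h3 : 1 ≤ (1 + t) ^ s := Real.one_le_rpow (by linarith) hs0.le
    have h4 : 0 < t ^ (-1 - 2 * s) := Real.rpow_pos_of_pos ht _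
    rw [Real.norm_eq_abs, abs_mul, abs_of_pos h4, abs_of_nonpos (by linarith)]
    calc _ ≤ t ^ s * t ^ (-1 - 2 * s) := by gcongr; linarith
      _ = _ := by rw [← Real.rpow_add ht]; ring_nf

lemma oneD_intB (s ε : ℝ) (hs0 : 0 < s) (hε : 0 < ε) :
    IntegrableOn (fun t : ℝ => (1 - (max (1 - t) 0) ^ s) * t ^ (-1 - 2 * s)) (Ioi ε) := by
  have h1 : IntegrableOn (fun t : ℝ => t ^ (-1 - 2 * s)) (Ioi ε) :=
    integrableOn_Ioi_rpow_of_lt (by linarith) hε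
  refine Integrable.mono' h1 ?_ ?_
  · apply ContinuousOn.aestronglyMeasurable _ measurableSet_Ioi
    intro t ht
    have ht : ε < t := ht
    apply ContinuousAt.continuousWithinAt
    apply ContinuousAt.mul
    · apply ContinuousAt.sub (by fun_prop)
      exact ContinuousAt.rpow_const (by fun_prop) (Or.inr hs0.le)
    · exact ContinuousAt.rpow_const (by fun_prop) (Or.inl (by linarith))
  · filter_upwards [ae_restrict_mem measurableSet_Ioi] with t ht
    have ht : 0 < t := lt_trans hε ht
    have h3 : (max (1 - t) 0) ^ s ≤ 1 := Real.rpow_le_one (by positivity) (by simp; linarith) hs0.le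
    have h5 : 0 ≤ (max (1 - t) 0) ^ s := by positivity
    have h4 : 0 < t ^ (-1 - 2 * s) := Real.rpow_pos_of_pos ht _
    rw [Real.norm_eq_abs, abs_mul, abs_of_pos h4, abs_of_nonneg (by linarith)]
    calc _ ≤ 1 * t ^ (-1 - 2 * s) := by gcongr; linarith
      _ = _ := by ring

lemma oneD_B_ge (s ε b : ℝ) (hs0 : 0 < s) (hε : 0 < ε) (hεb : ε ≤ b) (hb : b < 1) :
    (∫ t in ε..b, (1 - (1 - t) ^ s) * t ^ (-1 - 2 * s)) + 1 / (2 * s) ≤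
      ∫ t in Ioi ε, (1 - (max (1 - t) 0) ^ s) * t ^ (-1 - 2 * s) := by
  have hI := oneD_intB s ε hs0 hε
  have hpos : ∀ t : ℝ, 0 < t → 0 ≤ (1 - (max (1 - t) 0) ^ s) * t ^ (-1 - 2 * s) := by
    intro t ht
    have h3 : (max (1 - t) 0) ^ s ≤ 1 := Real.rpow_le_one (by positivity) (by simp; linarith) hs0.le
    have h4 : 0 < t ^ (-1 - 2 * s) := Real.rpow_pos_of_pos ht _
    exact mul_nonneg (by linarith) h4.le
  have h1 : ∫ t in Ioi ε, (1 - (max (1 - t) 0) ^ s) * t ^ (-1 - 2 * s) =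
      (∫ t in Ioc ε 1, (1 - (max (1 - t) 0) ^ s) * t ^ (-1 - 2 * s)) +
      ∫ t in Ioi 1, (1 - (max (1 - t) 0) ^ s) * t ^ (-1 - 2 * s) := by
    rw [← setIntegral_union (Set.Ioc_disjoint_Ioi le_rfl) measurableSet_Ioi
      (hI.mono_set Ioc_subset_Ioi_self) (hI.mono_set (Ioi_subset_Ioi (by linarith))),
      Ioc_union_Ioi_eq_Ioi (by linarith)]
  have h2 : ∫ t in Ioi (1:ℝ), (1 - (max (1 - t) 0) ^ s) * t ^ (-1 - 2 * s) = 1 / (2 * s) := by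
    have : ∫ t in Ioi (1:ℝ), (1 - (max (1 - t) 0) ^ s) * t ^ (-1 - 2 * s) =
        ∫ t in Ioi (1:ℝ), t ^ (-1 - 2 * s) := by
      apply setIntegral_congr_fun measurableSet_Ioi
      intro t ht
      have ht : 1 < t := ht
      simp only
      rw [max_eq_right (by linarith), Real.zero_rpow hs0.ne']
      ring
    rw [this, integral_Ioi_rpow_of_lt (by linarith) one_pos]
    have : -1 - 2 * s + 1 = -(2 * s) := by ring
    rw [this, Real.one_rpow, neg_div_neg_eq]
  have h3 : ∫ t in ε..b, (1 - (1 - t) ^ s) * t ^ (-1 - 2 * s) =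
      ∫ t in Ioc ε b, (1 - (max (1 - t) 0) ^ s) * t ^ (-1 - 2 * s) := by
    rw [intervalIntegral.integral_of_le hεb]
    apply setIntegral_congr_fun measurableSet_Ioc
    intro t ht
    simp only
    rw [max_eq_left (by linarith [ht.2])]
  rw [h1, h2, h3]
  gcongr ?_ + _
  apply setIntegral_mono_set (hI.mono_set Ioc_subset_Ioi_self)
  · filter_upwards [ae_restrict_mem measurableSet_Ioc] with t ht
    exact hpos t (by linarith [ht.1])
  · exact (Ioc_subset_Ioc_right hb.le).eventuallyLE

lemma oneD_rem (s ε : ℝ) (hs0 : 0 < s) (hs1 : s < 1) (hε : 0 < ε) (hε1 : ε ≤ 1 / 2) :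
    -(8 * ε ^ (2 - 2 * s)) ≤ ∫ u in (ε / (1 + ε))..ε,
      ((1 - u) ^ (2 * s - 1) - (1 - u) ^ (s - 1)) * u ^ (-1 - 2 * s) := by
  have hle : ε / (1 + ε) ≤ ε := div_le_self hε.le (by linarith)
  have hpos : ε / 2 ≤ ε / (1 + ε) := by gcongr; linarith
  have hpos' : 0 < ε / (1 + ε) := by positivity
  have hc : ∫ u in (ε / (1 + ε))..ε, -(8 * ε ^ (-2 * s)) ≤
      ∫ u in (ε / (1 + ε))..ε, ((1 - u) ^ (2 * s - 1) - (1 - u) ^ (s - 1)) * u ^ (-1 - 2 * s) := by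
    apply intervalIntegral.integral_mono_on hle (by simp)
    · apply ContinuousOn.intervalIntegrable
      have := oneD_cont _ ε (2 * s - 1) hle (by linarith)
      have := oneD_cont _ ε (s - 1) hle (by linarith)
      have := oneD_cont2 _ ε (-1 - 2 * s) hpos' hle
      fun_prop
    · intro u hu
      have hu0 : 0 < u := by linarith [hu.1]
      have hu1 : u ≤ 1 / 2 := by linarith [hu.2]
      have h3 : 0 < 1 - u := by linarith
      have e5 : (1 - u) ^ (2 * s - 1) = (1 - u) ^ s * (1 - u) ^ (s - 1) := by
        rw [← Real.rpow_add h3]; ring_nf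
      have h6 : (1 - u) ^ (s - 1) ≤ 2 := by
        calc (1 - u) ^ (s - 1) ≤ (1 / 2 : ℝ) ^ (s - 1) :=
              Real.rpow_le_rpow_of_nonpos (by norm_num) (by linarith) (by linarith)
          _ ≤ (1 / 2 : ℝ) ^ (-1 : ℝ) :=
              Real.rpow_le_rpow_of_exponent_ge (by norm_num) (by norm_num) (by linarith)
          _ = 2 := by rw [Real.rpow_neg_one]; norm_num
      have h6' : 0 < (1 - u) ^ (s - 1) := Real.rpow_pos_of_pos h3 _
      have h7 : 1 - u ≤ (1 - u) ^ s := by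
        have := Real.rpow_le_rpow_of_exponent_ge h3 (by linarith) hs1.le
        simpa using this
      have h8 : -(2 * u) ≤ (1 - u) ^ (2 * s - 1) - (1 - u) ^ (s - 1) := by
        rw [e5]; nlinarith
      have h9 : 0 < u ^ (-1 - 2 * s) := Real.rpow_pos_of_pos hu0 _
      have h10 : u * u ^ (-1 - 2 * s) = u ^ (-2 * s) := by
        nth_rewrite 1 [← Real.rpow_one u]
        rw [← Real.rpow_add hu0]; ring_nf
      have h11 : u ^ (-2 * s) ≤ 4 * ε ^ (-2 * s) := by
        calc u ^ (-2 * s) ≤ (ε / 2) ^ (-2 * s) :=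
              Real.rpow_le_rpow_of_nonpos (by positivity) (by linarith [hu.1]) (by linarith)
          _ = ε ^ (-2 * s) * (1 / 2 : ℝ) ^ (-2 * s) := by
              rw [← Real.mul_rpow hε.le (by norm_num)]; ring_nf
          _ ≤ ε ^ (-2 * s) * (1 / 2 : ℝ) ^ (-2 : ℝ) := by
              gcongr ?_ * ?_
              exact Real.rpow_le_rpow_of_exponent_ge (by norm_num) (by norm_num) (by linarith)
          _ = 4 * ε ^ (-2 * s) := by
              rw [Real.rpow_neg (by norm_num)]; norm_num; ring
      nlinarith
  refine le_trans ?_ hc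
  rw [intervalIntegral.integral_const, smul_eq_mul]
  have h1 : ε - ε / (1 + ε) ≤ ε ^ 2 := by
    have : ε - ε / (1 + ε) = ε ^ 2 / (1 + ε) := by field_simp; ring
    rw [this]
    exact div_le_self (by positivity) (by linarith)
  have h2 : ε ^ (2 - 2 * s) = ε ^ 2 * ε ^ (-2 * s) := by
    rw [← Real.rpow_natCast, ← Real.rpow_add hε]; push_cast; ring_nf
  rw [h2]
  have h3 : 0 < ε ^ (-2 * s) := Real.rpow_pos_of_pos hε _
  nlinarith

/-- The one dimensional identity behind `(−Δ)^s (t₊)^s = 0`, in the form of a lower bound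
for the truncated integrals. -/
lemma oneD_lower (s ε : ℝ) (hs0 : 0 < s) (hs1 : s < 1) (hε : 0 < ε) (hε1 : ε ≤ 1 / 2) :
    -(8 * ε ^ (2 - 2 * s)) ≤
      ∫ t in Ioi ε, (2 - (1 + t) ^ s - (max (1 - t) 0) ^ s) * t ^ (-1 - 2 * s) := by
  have hA := oneD_intA s ε hs0 hs1 hε
  have hB := oneD_intB s ε hs0 hε
  have hsplit : ∫ t in Ioi ε, (2 - (1 + t) ^ s - (max (1 - t) 0) ^ s) * t ^ (-1 - 2 * s) =
      (∫ t in Ioi ε, (1 - (1 + t) ^ s) * t ^ (-1 - 2 * s)) +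
      ∫ t in Ioi ε, (1 - (max (1 - t) 0) ^ s) * t ^ (-1 - 2 * s) := by
    rw [← integral_add hA hB]
    congr 1; ext t; ring
  rw [hsplit]
  have hlim := (intervalIntegral_tendsto_integral_Ioi ε hA tendsto_id).add_const
    (∫ t in Ioi ε, (1 - (max (1 - t) 0) ^ s) * t ^ (-1 - 2 * s))
  refine ge_of_tendsto hlim ?_
  filter_upwards [eventually_ge_atTop 1] with T hT
  simp only [id]
  have hT1 : T / (1 + T) < 1 := by rw [div_lt_one] <;> linarith
  have hT2 : ε ≤ T / (1 + T) := by
    rw [le_div_iff₀ (by linarith)]; nlinarith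
  have hle : ε / (1 + ε) ≤ ε := div_le_self hε.le (by linarith)
  have hpos' : 0 < ε / (1 + ε) := by positivity
  rw [oneD_subst s ε T hε (by linarith)]
  have hIntg : ∀ a b : ℝ, 0 < a → a ≤ b → b < 1 → IntervalIntegrable
      (fun u => ((1 - u) ^ (2 * s - 1) - (1 - u) ^ (s - 1)) * u ^ (-1 - 2 * s)) volume a b := by
    intro a b ha hab hb
    apply ContinuousOn.intervalIntegrable
    have := oneD_cont a b (2 * s - 1) hab hb
    have := oneD_cont a b (s - 1) hab hb
    have := oneD_cont2 a b (-1 - 2 * s) ha hab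
    fun_prop
  rw [← intervalIntegral.integral_add_adjacent_intervals
    (hIntg _ ε hpos' hle (by linarith)) (hIntg ε _ hε hT2 hT1)]
  have hBge := oneD_B_ge s ε _ hs0 hε hT2 hT1
  have hrem := oneD_rem s ε hs0 hs1 hε hε1
  have hcomb : (∫ u in ε..(T / (1 + T)),
      ((1 - u) ^ (2 * s - 1) - (1 - u) ^ (s - 1)) * u ^ (-1 - 2 * s)) +
      (∫ t in ε..(T / (1 + T)), (1 - (1 - t) ^ s) * t ^ (-1 - 2 * s)) =
      ∫ t in ε..(T / (1 + T)), (1 - (1 - t) ^ s) * (1 - (1 - t) ^ (s - 1)) * t ^ (-1 - 2 * s) := by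
    rw [← intervalIntegral.integral_add (hIntg ε _ hε hT2 hT1)]
    · apply intervalIntegral.integral_congr
      intro t ht
      rw [Set.uIcc_of_le hT2] at ht
      have h3 : 0 < 1 - t := by linarith [ht.2]
      have e5 : (1 - t) ^ (2 * s - 1) = (1 - t) ^ s * (1 - t) ^ (s - 1) := by
        rw [← Real.rpow_add h3]; ring_nf
      simp only
      rw [e5]; ring
    · apply ContinuousOn.intervalIntegrable
      have := oneD_cont ε (T / (1 + T)) s hT2 hT1
      have := oneD_cont2 ε (T / (1 + T)) (-1 - 2 * s) hε hT2
      fun_prop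
  rw [oneD_int s ε _ hs0 hε hT2 hT1] at hcomb
  have hG1 := oneD_G_le_one s (T / (1 + T)) hs0 hs1 (by linarith) hT1
  have hG0 : 0 ≤ (1 - (1 - ε) ^ s) ^ 2 * ε ^ (-2 * s) := by positivity
  have : -(1 / (2 * s)) ≤ ((1 - (1 - ε) ^ s) ^ 2 * ε ^ (-2 * s) -
      (1 - (1 - T / (1 + T)) ^ s) ^ 2 * (T / (1 + T)) ^ (-2 * s)) / (2 * s) := by
    rw [← neg_div]; gcongr; linarith
  linarith


lemma polar_lower {E : Type*} [NormedAddCommGroup E] [NormedSpace ℝ E] [MeasurableSpace E]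
    [FiniteDimensional ℝ E] [BorelSpace E] (μ : Measure E) [μ.IsAddHaarMeasure] [Nontrivial E]
    (F : E → ℝ) (hF : Integrable F μ) (τ : ℝ)
    (h : ∀ θ : E, ‖θ‖ = 1 →
      -τ ≤ ∫ r in Ioi (0:ℝ), r ^ (Module.finrank ℝ E - 1) * F (r • θ)) :
    -(τ * μ.toSphere.real univ) ≤ ∫ x, F x ∂μ := by
  have h1 : ∫ x, F x ∂μ = ∫ x : ({(0)}ᶜ : Set E), F x.1 ∂(μ.comap (↑)) := by
    rw [integral_subtype_comap (measurableSet_singleton _).compl F,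
        restrict_compl_singleton]
  have mp := μ.measurePreserving_homeomorphUnitSphereProd
  have emb := (homeomorphUnitSphereProd E).measurableEmbedding
  have heq : ∀ x : ({(0)}ᶜ : Set E), F x.1 =
      (fun y : sphere (0:E) 1 × Ioi (0:ℝ) => F (y.2.1 • y.1.1)) (homeomorphUnitSphereProd E x) := by
    intro x
    have := homeomorphUnitSphereProd_symm_apply_coe E (homeomorphUnitSphereProd E x)
    rw [Homeomorph.symm_apply_apply] at this
    simp only
    rw [← this]
  have h2 : ∫ x : ({(0)}ᶜ : Set E), F x.1 ∂(μ.comap (↑)) =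
      ∫ y, F (y.2.1 • y.1.1) ∂(μ.toSphere.prod (.volumeIoiPow (Module.finrank ℝ E - 1))) := by
    rw [← mp.integral_comp emb (fun y : sphere (0:E) 1 × Ioi (0:ℝ) => F (y.2.1 • y.1.1))]
    exact integral_congr_ae (Eventually.of_forall heq)
  have hIntg : Integrable (fun y : sphere (0:E) 1 × Ioi (0:ℝ) => F (y.2.1 • y.1.1))
      (μ.toSphere.prod (.volumeIoiPow (Module.finrank ℝ E - 1))) := by
    rw [← mp.integrable_comp_emb emb]
    have : Integrable (fun x : ({(0)}ᶜ : Set E) => F x.1) (μ.comap (↑)) := by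
      have h3 := (integrableOn_iff_comap_subtypeVal (μ := μ) (f := F)
        (measurableSet_singleton (0:E)).compl).1 hF.integrableOn
      exact h3
    exact this.congr (Eventually.of_forall heq)
  rw [h1, h2, integral_prod _ hIntg]
  have h4 : ∀ θ : sphere (0:E) 1, -τ ≤
      ∫ r, F (r.1 • θ.1) ∂(Measure.volumeIoiPow (Module.finrank ℝ E - 1)) := by
    intro θ
    have e : ∫ r, F (r.1 • θ.1) ∂(Measure.volumeIoiPow (Module.finrank ℝ E - 1)) =
        ∫ r in Ioi (0:ℝ), r ^ (Module.finrank ℝ E - 1) * F (r • θ.1) := by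
      simp only [Measure.volumeIoiPow, ENNReal.ofReal]
      rw [integral_withDensity_eq_integral_smul,
        integral_subtype_comap measurableSet_Ioi
          fun a : ℝ ↦ Real.toNNReal (a ^ (Module.finrank ℝ E - 1)) • F (a • θ.1),
        setIntegral_congr_fun measurableSet_Ioi fun x hx ↦ ?_]
      · rw [NNReal.smul_def, Real.coe_toNNReal _ (pow_nonneg (le_of_lt hx) _), smul_eq_mul]
      · exact (measurable_subtype_coe.pow_const _).real_toNNReal
    rw [e]
    exact h θ.1 (by simp)
  calc -(τ * μ.toSphere.real univ) = ∫ θ : sphere (0:E) 1, -τ ∂μ.toSphere := by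
        rw [integral_const, smul_eq_mul]; ring
    _ ≤ _ := by
      apply integral_mono (integrable_const _) hIntg.integral_prod_left
      exact h4

lemma intK {E : Type*} [NormedAddCommGroup E] [NormedSpace ℝ E] [MeasurableSpace E]
    [FiniteDimensional ℝ E] [BorelSpace E] (μ : Measure E) [μ.IsAddHaarMeasure]
    (q ε : ℝ) (hq : (Module.finrank ℝ E : ℝ) < q) (hε : 0 < ε) :
    IntegrableOn (fun h : E => 1 / ‖h‖ ^ q) {h | ε < ‖h‖} μ := by
  have hms : MeasurableSet {h : E | ε < ‖h‖} := measurableSet_lt measurable_const measurable_norm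
  have hq0 : 0 < q := lt_of_le_of_lt (Nat.cast_nonneg _) hq
  have h1 := ((integrable_one_add_norm (μ := μ) (E := E) hq).const_mul ((1 + 1 / ε) ^ q)).integrableOn
    (s := {h : E | ε < ‖h‖})
  refine Integrable.mono' h1 (by apply Measurable.aestronglyMeasurable; fun_prop) ?_
  filter_upwards [ae_restrict_mem hms] with h hh
  have hh : ε < ‖h‖ := hh
  have hp : 0 < ‖h‖ := hε.trans hh
  have h2 : 1 + ‖h‖ ≤ (1 + 1 / ε) * ‖h‖ := by
    have : 1 ≤ ‖h‖ / ε := by rw [one_le_div hε]; exact hh.le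
    calc 1 + ‖h‖ ≤ ‖h‖ / ε + ‖h‖ := by gcongr
      _ = _ := by ring
  have h3 : 0 < ‖h‖ ^ q := Real.rpow_pos_of_pos hp _
  rw [Real.norm_of_nonneg (by positivity), Real.rpow_neg (by positivity), div_le_iff₀ h3,
    ← div_eq_mul_inv, div_mul_eq_mul_div, one_le_div (by positivity),
    ← Real.mul_rpow (by positivity) hp.le]
  exact Real.rpow_le_rpow (by positivity) h2 hq0.le

lemma int_bdd {E : Type*} [NormedAddCommGroup E] [NormedSpace ℝ E] [MeasurableSpace E]
    [FiniteDimensional ℝ E] [BorelSpace E] (μ : Measure E) [μ.IsAddHaarMeasure]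
    (q ε M : ℝ) (hq : (Module.finrank ℝ E : ℝ) < q) (hε : 0 < ε) (f : E → ℝ)
    (hf : Measurable f) (hM : ∀ x, |f x| ≤ M) :
    IntegrableOn (fun h : E => f h / ‖h‖ ^ q) {h | ε < ‖h‖} μ := by
  refine Integrable.mono' ((intK μ q ε hq hε).const_mul M)
    (by apply Measurable.aestronglyMeasurable; fun_prop) ?_
  refine Eventually.of_forall fun h => ?_
  have : 0 ≤ ‖h‖ ^ q := by positivity
  rw [Real.norm_eq_abs, abs_div, abs_of_nonneg this, div_eq_mul_one_div]
  gcongr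
  exact hM h

lemma scale_lower (s ε d b : ℝ) (hs0 : 0 < s) (hs1 : s < 1) (hε : 0 < ε) (hd : 0 < d)
    (hεd : ε ≤ d / 2) (hb : |b| ≤ 1) :
    -(8 * d ^ s * (1 / d) ^ 2 * ε ^ (2 - 2 * s)) ≤ ∫ r in Ioi ε,
      (2 * d ^ s - (max (d + r * b) 0) ^ s - (max (d - r * b) 0) ^ s) * r ^ (-1 - 2 * s) := by
  have hd' : 0 < d ^ s := Real.rpow_pos_of_pos hd _
  have hε' : 0 < ε ^ (2 - 2 * s) := Real.rpow_pos_of_pos hε _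
  rcases eq_or_ne b 0 with rfl | hb0
  · have : ∀ r : ℝ, (2 * d ^ s - (max (d + r * 0) 0) ^ s - (max (d - r * 0) 0) ^ s) *
        r ^ (-1 - 2 * s) = 0 := by
      intro r; simp [hd.le]; left; ring
    simp only [this]
    simp only [integral_zero]
    have : 0 ≤ 8 * d ^ s * (1 / d) ^ 2 * ε ^ (2 - 2 * s) := by positivity
    linarith
  · set k := |b| / d with hk
    have hk0 : 0 < k := by positivity
    have hk1 : k ≤ 1 / d := by rw [hk]; gcongr
    set g : ℝ → ℝ := fun t => (2 - (1 + t) ^ s - (max (1 - t) 0) ^ s) * t ^ (-1 - 2 * s) with hg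
    have e1 : ∫ r in Ioi ε,
        (2 * d ^ s - (max (d + r * b) 0) ^ s - (max (d - r * b) 0) ^ s) * r ^ (-1 - 2 * s) =
        ∫ r in Ioi ε, (d ^ s * k ^ (1 + 2 * s)) * g (r * k) := by
      apply setIntegral_congr_fun measurableSet_Ioi
      intro r hr
      have hr : 0 < r := hε.trans hr
      have e2 : (max (d + r * b) 0) ^ s + (max (d - r * b) 0) ^ s =
          (max (d + r * |b|) 0) ^ s + (max (d - r * |b|) 0) ^ s := by
        rcases abs_choice b with hb | hb <;> rw [hb]
        rw [add_comm]; congr 3 <;> ring_nf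
      have e3 : (max (d + r * |b|) 0) ^ s = d ^ s * (1 + r * k) ^ s := by
        rw [max_eq_left (by positivity), ← Real.mul_rpow hd.le (by positivity)]
        congr 1; rw [hk]; field_simp
      have e4 : (max (d - r * |b|) 0) ^ s = d ^ s * (max (1 - r * k) 0) ^ s := by
        rw [← Real.mul_rpow hd.le (by positivity), mul_max_of_nonneg _ _ hd.le]
        congr 2
        · rw [hk]; field_simp
        · simp
      have e5 : k ^ (1 + 2 * s) * (r * k) ^ (-1 - 2 * s) = r ^ (-1 - 2 * s) := by
        rw [Real.mul_rpow hr.le hk0.le, mul_comm, mul_assoc, ← Real.rpow_add hk0]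
        ring_nf; simp
      simp only [hg]
      rw [← e5, sub_sub, e2, e3, e4]
      ring
    rw [e1, integral_const_mul, integral_comp_mul_right_Ioi g ε hk0, smul_eq_mul]
    have hkε : ε * k ≤ 1 / 2 := by
      calc ε * k ≤ (d / 2) * (1 / d) := by gcongr
        _ = 1 / 2 := by field_simp
    have h5 := oneD_lower s (ε * k) hs0 hs1 (by positivity) hkε
    have e6 : d ^ s * k ^ (1 + 2 * s) * (k⁻¹ * -(8 * (ε * k) ^ (2 - 2 * s))) =
        -(8 * d ^ s * k ^ 2 * ε ^ (2 - 2 * s)) := by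
      have : k ^ (1 + 2 * s) * k⁻¹ * k ^ (2 - 2 * s) = k ^ 2 := by
        rw [← Real.rpow_neg_one k, ← Real.rpow_add hk0, ← Real.rpow_add hk0,
          ← Real.rpow_natCast]; push_cast; ring_nf
      rw [Real.mul_rpow hε.le hk0.le, ← this]; ring
    calc _ ≤ -(8 * d ^ s * k ^ 2 * ε ^ (2 - 2 * s)) := by gcongr
      _ = _ := e6.symm
      _ ≤ _ := by gcongr

lemma half_int {E : Type*} [NormedAddCommGroup E] [InnerProductSpace ℝ E] [MeasurableSpace E]
    [FiniteDimensional ℝ E] [BorelSpace E] (μ : Measure E) [μ.IsAddHaarMeasure]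
    (s ε d : ℝ) (ν : E) (hν : ‖ν‖ = 1) (hs0 : 0 < s) (hs1 : s < 1) (hε : 0 < ε) (hd : 0 < d) :
    IntegrableOn (fun h : E => (d ^ s - (max (d + inner ℝ h ν) 0) ^ s) /
      ‖h‖ ^ ((Module.finrank ℝ E : ℝ) + 2 * s)) {h | ε < ‖h‖} μ := by
  have hms : MeasurableSet {h : E | ε < ‖h‖} := measurableSet_lt measurable_const measurable_norm
  have i1 := (intK (E := E) μ ((Module.finrank ℝ E : ℝ) + 2 * s) ε (by linarith) hε).const_mul
    (2 * d ^ s)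
  have i2 := (intK (E := E) μ ((Module.finrank ℝ E : ℝ) + s) ε (by linarith) hε)
  refine Integrable.mono' (i1.add i2) (by apply Measurable.aestronglyMeasurable; fun_prop) ?_
  filter_upwards [ae_restrict_mem hms] with h hh
  have hh : ε < ‖h‖ := hh
  have hp : 0 < ‖h‖ := hε.trans hh
  have h3 : 0 < ‖h‖ ^ ((Module.finrank ℝ E : ℝ) + 2 * s) := Real.rpow_pos_of_pos hp _
  have h4 : 1 / ‖h‖ ^ ((Module.finrank ℝ E : ℝ) + s) =
      ‖h‖ ^ s / ‖h‖ ^ ((Module.finrank ℝ E : ℝ) + 2 * s) := by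
    rw [← Real.rpow_sub hp, one_div, ← Real.rpow_neg hp.le]; ring_nf
  have h5 : inner ℝ h ν ≤ ‖h‖ := by
    have := real_inner_le_norm h ν; rwa [hν, mul_one] at this
  have h6 : (max (d + inner ℝ h ν) 0) ^ s ≤ d ^ s + ‖h‖ ^ s := by
    calc (max (d + inner ℝ h ν) 0) ^ s ≤ (d + ‖h‖) ^ s := by
          apply Real.rpow_le_rpow (by positivity) _ hs0.le
          apply max_le <;> [linarith; positivity]
      _ ≤ _ := Real.rpow_add_le_add_rpow hd.le hp.le hs0.le hs1.le
  have h7 : 0 ≤ (max (d + inner ℝ h ν) 0) ^ s := by positivity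
  have h8 : 0 < d ^ s := Real.rpow_pos_of_pos hd _
  simp only [Pi.add_apply]
  rw [h4, Real.norm_eq_abs, abs_div, abs_of_pos h3, mul_one_div, ← add_div]
  gcongr
  rw [abs_le]; constructor <;> linarith

/-- Lower bound for the truncated integrals of the half-space solution. -/
lemma half_lower {E : Type*} [NormedAddCommGroup E] [InnerProductSpace ℝ E] [MeasurableSpace E]
    [FiniteDimensional ℝ E] [BorelSpace E] (μ : Measure E) [μ.IsAddHaarMeasure] [Nontrivial E]
    (s ε d : ℝ) (ν : E) (hν : ‖ν‖ = 1) (hs0 : 0 < s) (hs1 : s < 1) (hε : 0 < ε) (hd : 0 < d)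
    (hεd : ε ≤ d / 2) :
    -(4 * d ^ s * (1 / d) ^ 2 * ε ^ (2 - 2 * s) * μ.toSphere.real univ) ≤
      ∫ h in {h | ε < ‖h‖}, (d ^ s - (max (d + inner ℝ h ν) 0) ^ s) /
      ‖h‖ ^ ((Module.finrank ℝ E : ℝ) + 2 * s) ∂μ := by
  have hms : MeasurableSet {h : E | ε < ‖h‖} := measurableSet_lt measurable_const measurable_norm
  set f : E → ℝ := indicator {h | ε < ‖h‖} (fun h : E => (d ^ s - (max (d + inner ℝ h ν) 0) ^ s) /
      ‖h‖ ^ ((Module.finrank ℝ E : ℝ) + 2 * s)) with hf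
  have hfi : Integrable f μ :=
    (integrable_indicator_iff hms).2 (half_int μ s ε d ν hν hs0 hs1 hε hd)
  rw [← integral_indicator hms, ← hf]
  have h1 : ∫ h, f h + f (-h) ∂μ = 2 * ∫ h, f h ∂μ := by
    rw [integral_add hfi hfi.comp_neg, integral_neg_eq_self]; ring
  have h2 := polar_lower μ (fun h => f h + f (-h)) (hfi.add hfi.comp_neg)
    (8 * d ^ s * (1 / d) ^ 2 * ε ^ (2 - 2 * s)) ?_
  · rw [h1] at h2; linarith
  · intro θ hθ
    have hb : |inner ℝ θ ν| ≤ 1 := by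
      have := abs_real_inner_le_norm θ ν; rwa [hν, hθ, mul_one] at this
    refine (scale_lower s ε d (inner ℝ θ ν) hs0 hs1 hε hd hεd hb).trans_eq ?_
    rw [← integral_indicator measurableSet_Ioi, ← integral_indicator measurableSet_Ioi]
    congr 1
    ext r
    by_cases hr : ε < r
    · have hr0 : 0 < r := hε.trans hr
      have hn : ‖r • θ‖ = r := by rw [norm_smul, hθ, Real.norm_of_nonneg hr0.le, mul_one]
      have hm1 : r • θ ∈ {h : E | ε < ‖h‖} := by simp only [mem_ofPred_eq, hn]; exact hr
      have hm2 : -(r • θ) ∈ {h : E | ε < ‖h‖} := by simp only [mem_ofPred_eq, norm_neg, hn]; exact hr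
      rw [indicator_of_mem (show r ∈ Ioi ε from hr), indicator_of_mem (show r ∈ Ioi 0 from hr0), hf,
        indicator_of_mem hm1, indicator_of_mem hm2]
      rw [norm_neg, hn, inner_neg_left, real_inner_smul_left]
      have hpos : 0 < Module.finrank ℝ E := Module.finrank_pos
      have e1 : r ^ (-1 - 2 * s) = r ^ (Module.finrank ℝ E - 1) /
          r ^ ((Module.finrank ℝ E : ℝ) + 2 * s) := by
        rw [← Real.rpow_natCast, ← Real.rpow_sub hr0, Nat.cast_sub hpos]
        push_cast; ring_nf
      rw [e1]
      ring_nf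
    · have : r ∉ Ioi ε := hr
      rw [indicator_of_notMem this]
      by_cases hr0 : 0 < r
      · have hn : ‖r • θ‖ = r := by rw [norm_smul, hθ, Real.norm_of_nonneg hr0.le, mul_one]
        have hm1 : r • θ ∉ {h : E | ε < ‖h‖} := by simp only [mem_ofPred_eq, hn]; exact hr
        have hm2 : -(r • θ) ∉ {h : E | ε < ‖h‖} := by
          simp only [mem_ofPred_eq, norm_neg, hn]; exact hr
        rw [indicator_of_mem (show r ∈ Ioi 0 from hr0), hf,
          indicator_of_notMem hm1, indicator_of_notMem hm2]
        simp
      · rw [indicator_of_notMem (show r ∉ Ioi 0 from hr0)]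


/-- The concave profile `V ↦ V - V^{3/2}`. -/
noncomputable def barQ (V : ℝ) : ℝ := V - V * √V

/-- The barrier. -/
noncomputable def barrier {E : Type*} [NormedAddCommGroup E] (s ρ R m : ℝ) (x₀ y : E) : ℝ :=
  if dist y x₀ < R then barQ (min ((max (dist y x₀ - ρ) 0) ^ s) m) else 0

lemma barQ_tangent (V v : ℝ) (hV : 0 ≤ V) (hv : 0 ≤ v) :
    barQ V ≤ barQ v + (1 - 3 / 2 * √v) * (V - v) := by
  unfold barQ
  obtain ⟨w, hw, rfl⟩ : ∃ w, 0 ≤ w ∧ V = w ^ 2 := ⟨√V, Real.sqrt_nonneg _, (Real.sq_sqrt hV).symm⟩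
  obtain ⟨t, ht, rfl⟩ : ∃ w, 0 ≤ w ∧ v = w ^ 2 := ⟨√v, Real.sqrt_nonneg _, (Real.sq_sqrt hv).symm⟩
  rw [Real.sqrt_sq hw, Real.sqrt_sq ht]
  have : 0 ≤ (w - t) ^ 2 * (w + t / 2) := by positivity
  nlinarith

lemma sqrt_le_half (v : ℝ) (hv : v ≤ 1 / 4) : √v ≤ 1 / 2 := by
  rw [Real.sqrt_le_left (by norm_num)]; norm_num; linarith

lemma barQ_mono (V v : ℝ) (hV : 0 ≤ V) (hVv : V ≤ v) (hv : v ≤ 1 / 4) : barQ V ≤ barQ v := by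
  have h1 := barQ_tangent V v hV (hV.trans hVv)
  have h2 := sqrt_le_half v hv
  nlinarith

lemma barQ_nonneg (V : ℝ) (hV : 0 ≤ V) (hv : V ≤ 1 / 4) : 0 ≤ barQ V := by
  unfold barQ
  have h2 := sqrt_le_half V hv
  nlinarith

lemma barQ_pos (V : ℝ) (hV : 0 < V) (hv : V ≤ 1 / 4) : 0 < barQ V := by
  unfold barQ
  have h2 := sqrt_le_half V hv
  nlinarith

lemma barQ_le (V : ℝ) (hV : 0 ≤ V) : barQ V ≤ V := by
  unfold barQ
  have := mul_nonneg hV (Real.sqrt_nonneg V)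
  linarith

lemma barrier_nonneg {E : Type*} [NormedAddCommGroup E] (s ρ R m : ℝ) (x₀ y : E)
    (hm0 : 0 ≤ m) (hm : m ≤ 1 / 4) : 0 ≤ barrier s ρ R m x₀ y := by
  unfold barrier
  split_ifs
  · exact barQ_nonneg _ (by positivity) ((min_le_right _ _).trans hm)
  · exact le_rfl

lemma barrier_le {E : Type*} [NormedAddCommGroup E] (s ρ R m : ℝ) (x₀ y : E)
    (hm0 : 0 ≤ m) (hm : m ≤ 1 / 4) :
    barrier s ρ R m x₀ y ≤ barQ (min ((max (dist y x₀ - ρ) 0) ^ s) m) := by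
  unfold barrier
  split_ifs
  · exact le_rfl
  · exact barQ_nonneg _ (by positivity) ((min_le_right _ _).trans hm)

lemma barrier_le_m {E : Type*} [NormedAddCommGroup E] (s ρ R m : ℝ) (x₀ y : E)
    (hm0 : 0 ≤ m) (hm : m ≤ 1 / 4) : barrier s ρ R m x₀ y ≤ barQ m :=
  (barrier_le s ρ R m x₀ y hm0 hm).trans
    (barQ_mono _ _ (by positivity) (min_le_right _ _) hm)

lemma barrier_measurable {E : Type*} [NormedAddCommGroup E] [MeasurableSpace E] [BorelSpace E]
    [SecondCountableTopology E] (s ρ R m : ℝ) (x₀ : E) :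
    Measurable (barrier s ρ R m x₀) := by
  unfold barrier barQ
  apply Measurable.ite
  · exact measurableSet_lt (by fun_prop) measurable_const
  · fun_prop
  · fun_prop

lemma E_bound (s σ ρ d r a : ℝ) (hs0 : 0 < s) (hs1 : s < 1) (hσ0 : 0 < σ) (hσ : σ ≤ 2 - 2 * s)
    (hρ : 0 < ρ) (hd : 0 < d) (hd1 : d ≤ 1) (hr : 0 ≤ r) (ha : d - r ≤ a) :
    (max (a + r ^ 2 / ρ) 0) ^ s ≤ (max a 0) ^ s +
      (ρ ^ (-s) * 2 ^ σ + 2 ^ (1 - s) / ρ) * (d ^ (-σ) * r ^ (2 * s + σ)) := by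
  have hdσ : 0 < d ^ (-σ) := Real.rpow_pos_of_pos hd _
  have hrσ : 0 ≤ r ^ (2 * s + σ) := Real.rpow_nonneg hr _
  rcases le_or_gt r (d / 2) with h | h
  · have ha0 : d / 2 ≤ a := by linarith
    have ha1 : 0 < a := by linarith
    rcases eq_or_lt_of_le hr with rfl | hr0
    · have : 0 ≤ (ρ ^ (-s) * 2 ^ σ + 2 ^ (1 - s) / ρ) * (d ^ (-σ) * (0:ℝ) ^ (2 * s + σ)) := by
        positivity
      simp only [ne_eq, OfNat.ofNat_ne_zero, not_false_eq_true, zero_pow, zero_div, add_zero]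
      linarith
    have h1 : (a + r ^ 2 / ρ) ^ s ≤ a ^ s + a ^ (s - 1) * (r ^ 2 / ρ) := by
      have hk : 0 ≤ r ^ 2 / ρ := by positivity
      have e : a + r ^ 2 / ρ = a * (1 + r ^ 2 / ρ / a) := by field_simp
      have hb := rpow_one_add_le_one_add_mul_self (s := r ^ 2 / ρ / a)
        (by have : 0 ≤ r ^ 2 / ρ / a := by positivity
            linarith) hs0.le hs1.le
      rw [e, Real.mul_rpow ha1.le (by positivity)]
      calc a ^ s * (1 + r ^ 2 / ρ / a) ^ s ≤ a ^ s * (1 + s * (r ^ 2 / ρ / a)) := by gcongr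
        _ ≤ a ^ s * (1 + 1 * (r ^ 2 / ρ / a)) := by gcongr
        _ = _ := by rw [Real.rpow_sub_one ha1.ne']; ring
    have h2 : a ^ (s - 1) ≤ 2 ^ (1 - s) * d ^ (s - 1) := by
      calc a ^ (s - 1) ≤ (d / 2) ^ (s - 1) :=
            Real.rpow_le_rpow_of_nonpos (by positivity) ha0 (by linarith)
        _ = _ := by
          rw [Real.div_rpow hd.le (by norm_num), div_eq_mul_inv, ← Real.rpow_neg (by norm_num)]
          ring_nf
    have h3 : r ^ 2 ≤ r ^ (2 * s + σ) * d ^ (2 - 2 * s - σ) := by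
      have : r ^ 2 = r ^ (2 * s + σ) * r ^ (2 - 2 * s - σ) := by
        rw [← Real.rpow_add hr0, ← Real.rpow_natCast]; push_cast; ring_nf
      rw [this]
      gcongr
      linarith
    have h4 : d ^ (s - 1) * d ^ (2 - 2 * s - σ) ≤ d ^ (-σ) := by
      rw [← Real.rpow_add hd]
      exact Real.rpow_le_rpow_of_exponent_ge hd hd1 (by linarith)
    have hsum : 0 < a + r ^ 2 / ρ := by positivity
    rw [max_eq_left hsum.le, max_eq_left ha1.le]
    refine h1.trans ?_
    refine add_le_add le_rfl ?_
    calc a ^ (s - 1) * (r ^ 2 / ρ) ≤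
          (2 ^ (1 - s) * d ^ (s - 1)) * ((r ^ (2 * s + σ) * d ^ (2 - 2 * s - σ)) / ρ) := by gcongr
      _ = 2 ^ (1 - s) / ρ * ((d ^ (s - 1) * d ^ (2 - 2 * s - σ)) * r ^ (2 * s + σ)) := by ring
      _ ≤ 2 ^ (1 - s) / ρ * (d ^ (-σ) * r ^ (2 * s + σ)) := by gcongr
      _ ≤ _ := by
        gcongr
        have : 0 ≤ ρ ^ (-s) * 2 ^ σ := by positivity
        linarith
  · have hr0 : 0 < r := by linarith
    have hk : 0 ≤ r ^ 2 / ρ := by positivity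
    have h1 : (max (a + r ^ 2 / ρ) 0) ^ s ≤ (max a 0) ^ s + (r ^ 2 / ρ) ^ s := by
      calc (max (a + r ^ 2 / ρ) 0) ^ s ≤ (max a 0 + r ^ 2 / ρ) ^ s := by
            apply Real.rpow_le_rpow (by positivity) _ hs0.le
            apply max_le
            · gcongr; exact le_max_left _ _
            · positivity
        _ ≤ _ := Real.rpow_add_le_add_rpow (by positivity) hk hs0.le hs1.le
    refine h1.trans ?_
    gcongr
    have h2 : (r ^ 2 / ρ) ^ s = ρ ^ (-s) * r ^ (2 * s) := by
      rw [Real.div_rpow (by positivity) hρ.le, Real.rpow_neg hρ.le, ← Real.rpow_natCast,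
        ← Real.rpow_mul hr]
      push_cast; ring
    have h3 : 1 ≤ 2 ^ σ * d ^ (-σ) * r ^ σ := by
      rw [Real.rpow_neg hd.le, ← div_eq_mul_inv, div_mul_eq_mul_div,
        ← Real.mul_rpow (by norm_num) hr, ← Real.div_rpow (by positivity) hd.le]
      apply Real.one_le_rpow _ hσ0.le
      rw [one_le_div hd]; linarith
    calc (r ^ 2 / ρ) ^ s = ρ ^ (-s) * r ^ (2 * s) * 1 := by rw [h2, mul_one]
      _ ≤ ρ ^ (-s) * r ^ (2 * s) * (2 ^ σ * d ^ (-σ) * r ^ σ) := by gcongr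
      _ = ρ ^ (-s) * 2 ^ σ * (d ^ (-σ) * r ^ (2 * s + σ)) := by
        rw [Real.rpow_add hr0]; ring
      _ ≤ _ := by
        gcongr
        have : 0 ≤ (2:ℝ) ^ (1 - s) / ρ := by positivity
        linarith

lemma dist_bound {E : Type*} [NormedAddCommGroup E] [InnerProductSpace ℝ E]
    (ρ d : ℝ) (x₀ x ν h : E) (hν : ‖ν‖ = 1) (hρ : 0 < ρ) (hd : 0 < d)
    (hx : x = x₀ + (ρ + d) • ν) (hh : ‖h‖ < ρ / 2) :
    dist (x + h) x₀ - ρ ≤ (d + inner ℝ h ν) + ‖h‖ ^ 2 / ρ := by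
  have e : x + h - x₀ = (ρ + d) • ν + h := by rw [hx]; abel
  have h1 : |inner ℝ h ν| ≤ ‖h‖ := by
    have := abs_real_inner_le_norm h ν; rwa [hν, mul_one] at this
  have h2 := (abs_le.1 h1).1
  rw [dist_eq_norm, e]
  have h3 : ‖(ρ + d) • ν + h‖ ^ 2 = (ρ + d) ^ 2 + 2 * (ρ + d) * inner ℝ h ν + ‖h‖ ^ 2 := by
    rw [norm_add_sq_real, norm_smul, hν, real_inner_smul_left, real_inner_comm,
      Real.norm_of_nonneg (by positivity)]
    ring
  have h4 : ρ / 2 ≤ ρ + d + inner ℝ h ν := by linarith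
  have h5 : ‖(ρ + d) • ν + h‖ ≤ ρ + d + inner ℝ h ν + ‖h‖ ^ 2 / ρ := by
    apply le_of_sq_le_sq _ (by
      have : 0 ≤ ‖h‖ ^ 2 / ρ := by positivity
      linarith)
    rw [h3]
    have h6 : ‖h‖ ^ 2 ≤ 2 * (ρ + d + inner ℝ h ν) * (‖h‖ ^ 2 / ρ) := by
      calc ‖h‖ ^ 2 = 2 * (ρ / 2) * (‖h‖ ^ 2 / ρ) := by field_simp
        _ ≤ _ := by gcongr
    nlinarith [sq_nonneg (inner ℝ h ν), sq_nonneg (‖h‖ ^ 2 / ρ)]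
  linarith

/-- The pointwise lower bound. -/
lemma barrier_pointwise {E : Type*} [NormedAddCommGroup E] [InnerProductSpace ℝ E]
    (s σ ρ R m d : ℝ) (x₀ x ν h : E) (hν : ‖ν‖ = 1) (hs0 : 0 < s) (hs1 : s < 1)
    (hσ0 : 0 < σ) (hσ : σ ≤ 2 - 2 * s) (hρ : 0 < ρ) (hd : 0 < d) (hd1 : d ≤ 1) (hdρ : d ≤ ρ)
    (hx : x = x₀ + (ρ + d) • ν) (hR : ρ + d < R) (hdm : d ^ s ≤ m) (hm : m ≤ 1 / 4) :
    (1 - 3 / 2 * √(d ^ s)) * (d ^ s - (max (d + inner ℝ h ν) 0) ^ s)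
      - (ρ ^ (-s) * 2 ^ σ + 2 ^ (1 - s) / ρ) * d ^ (-σ) *
        (ball (0:E) (ρ / 2)).indicator (fun h => ‖h‖ ^ (2 * s + σ)) h
      - {h : E | ρ / 4 < ‖h‖}.indicator (fun _ => (1:ℝ)) h
      + (1 / 2 * (d ^ s * √(d ^ s))) *
        (closedBall (-((2 * d) • ν)) d).indicator (fun _ => (1:ℝ)) h
      ≤ barrier s ρ R m x₀ x - barrier s ρ R m x₀ (x + h) := by
  have hv0 : 0 < d ^ s := Real.rpow_pos_of_pos hd _
  have hm0 : 0 ≤ m := hv0.le.trans hdm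
  set v := d ^ s with hv
  set Φ := (max (d + inner ℝ h ν) 0) ^ s with hΦ
  have hΦ0 : 0 ≤ Φ := by positivity
  have hsq := sqrt_le_half v (hdm.trans hm)
  have hsq0 := Real.sqrt_nonneg v
  set Ce := (ρ ^ (-s) * 2 ^ σ + 2 ^ (1 - s) / ρ) with hCe
  have hCe0 : 0 ≤ Ce := by positivity
  have hdx : dist x x₀ = ρ + d := by
    rw [hx, dist_eq_norm, add_sub_cancel_left, norm_smul, hν, Real.norm_of_nonneg (by positivity),
      mul_one]
  have hWx : barrier s ρ R m x₀ x = barQ v := by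
    unfold barrier
    rw [hdx, if_pos hR, add_sub_cancel_left, max_eq_left hd.le, min_eq_left hdm]
  rw [hWx]
  have hWy := barrier_le s ρ R m x₀ (x + h) hm0 hm
  set V := min ((max (dist (x + h) x₀ - ρ) 0) ^ s) m with hV
  have hV0 : 0 ≤ V := by positivity
  have hVm : V ≤ m := min_le_right _ _
  have htan := barQ_tangent V v hV0 hv0.le
  have hi1 : 0 ≤ (ball (0:E) (ρ / 2)).indicator (fun h => ‖h‖ ^ (2 * s + σ)) h :=
    indicator_nonneg (fun _ _ => by positivity) _
  have hi2 : 0 ≤ {h : E | ρ / 4 < ‖h‖}.indicator (fun _ => (1:ℝ)) h :=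
    indicator_nonneg (fun _ _ => by positivity) _
  have hdσ : 0 ≤ d ^ (-σ) := by positivity
  by_cases hD : h ∈ closedBall (-((2 * d) • ν)) d
  · rw [indicator_of_mem hD]
    have hy : dist (x + h) x₀ ≤ ρ := by
      rw [mem_closedBall, dist_eq_norm] at hD
      have e : x + h - x₀ = (ρ - d) • ν + (h - -((2 * d) • ν)) := by
        rw [hx]; module
      rw [dist_eq_norm, e]
      refine (norm_add_le _ _).trans ?_
      rw [norm_smul, hν, Real.norm_of_nonneg (by linarith)]
      linarith
    have hVz : V = 0 := by
      rw [hV, max_eq_right (by linarith), Real.zero_rpow hs0.ne', min_eq_left hm0]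
    rw [hVz] at hWy
    have : barQ 0 = 0 := by simp [barQ]
    rw [this] at hWy
    have hq : barQ v = v - v * √v := rfl
    have h1 := mul_nonneg (mul_nonneg hCe0 hdσ) hi1
    have h2 : 0 ≤ (1 - 3 / 2 * √v) * Φ := mul_nonneg (by linarith) hΦ0
    rw [hq]
    linarith
  · rw [indicator_of_notMem hD]
    by_cases hb : ‖h‖ < ρ / 2
    · have hb' : h ∈ ball (0:E) (ρ / 2) := by simpa using hb
      rw [indicator_of_mem hb']
      have h1 := dist_bound ρ d x₀ x ν h hν hρ hd hx hb
      have h5 : |inner ℝ h ν| ≤ ‖h‖ := by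
        have := abs_real_inner_le_norm h ν; rwa [hν, mul_one] at this
      have h6 := (abs_le.1 h5).1
      have h2 := E_bound s σ ρ d ‖h‖ (d + inner ℝ h ν) hs0 hs1 hσ0 hσ hρ hd hd1 (norm_nonneg _)
        (by linarith)
      rw [← hCe, ← hΦ] at h2
      have h3 : V ≤ Φ + Ce * (d ^ (-σ) * ‖h‖ ^ (2 * s + σ)) := by
        refine (min_le_left _ _).trans (le_trans ?_ h2)
        apply Real.rpow_le_rpow (by positivity) _ hs0.le
        gcongr
      have h4 : 0 ≤ Ce * (d ^ (-σ) * ‖h‖ ^ (2 * s + σ)) := by positivity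
      nlinarith
    · have hb' : h ∉ ball (0:E) (ρ / 2) := by simpa using hb
      have hb2 : h ∈ {h : E | ρ / 4 < ‖h‖} := by
        simp only [mem_ofPred_eq]; linarith
      rw [indicator_of_notMem hb', indicator_of_mem hb2]
      nlinarith


lemma int_ball {E : Type*} [NormedAddCommGroup E] [NormedSpace ℝ E] [MeasurableSpace E]
    [FiniteDimensional ℝ E] [BorelSpace E] (μ : Measure E) [μ.IsAddHaarMeasure] [Nontrivial E]
    (σ r : ℝ) (hσ : 0 < σ) :
    IntegrableOn (fun h : E => ‖h‖ ^ (σ - (Module.finrank ℝ E : ℝ))) (ball 0 r) μ := by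
  rw [integrableOn_fun_norm_addHaar (μ := μ) (f := fun y : ℝ => y ^ (σ - (Module.finrank ℝ E : ℝ)))]
  have hN : 0 < Module.finrank ℝ E := Module.finrank_pos
  have h1 : IntegrableOn (fun y : ℝ => y ^ (σ - 1)) (Ioo 0 r) := by
    rcases le_or_gt r 0 with h | h
    · rw [Ioo_eq_empty (by linarith)]; exact integrableOn_empty
    · exact (intervalIntegral.integrableOn_Ioo_rpow_iff h).2 (by linarith)
  refine h1.congr_fun ?_ measurableSet_Ioo
  intro y hy
  have hy0 : 0 < y := hy.1
  simp only [smul_eq_mul]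
  rw [← Real.rpow_natCast, ← Real.rpow_add hy0, Nat.cast_sub hN]
  congr 1
  push_cast
  ring

lemma near_lower {E : Type*} [NormedAddCommGroup E] [InnerProductSpace ℝ E] [MeasurableSpace E]
    [FiniteDimensional ℝ E] [BorelSpace E] (μ : Measure E) [μ.IsAddHaarMeasure] [Nontrivial E]
    (s σ ρ R m d ε : ℝ) (x₀ x ν : E) (hν : ‖ν‖ = 1) (hs0 : 0 < s) (hs1 : s < 1)
    (hσ0 : 0 < σ) (hσ : σ ≤ 2 - 2 * s) (hρ : 0 < ρ) (hd : 0 < d) (hd1 : d ≤ 1) (hdρ : d ≤ ρ)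
    (hx : x = x₀ + (ρ + d) • ν) (hR : ρ + d < R) (hdm : d ^ s ≤ m) (hm : m ≤ 1 / 4)
    (hε : 0 < ε) (hεd : ε ≤ d / 2) :
    -(4 * d ^ s * (1 / d) ^ 2 * ε ^ (2 - 2 * s) * μ.toSphere.real univ)
      - (ρ ^ (-s) * 2 ^ σ + 2 ^ (1 - s) / ρ) * d ^ (-σ) *
        (∫ h in ball (0:E) (ρ / 2), ‖h‖ ^ (σ - (Module.finrank ℝ E : ℝ)) ∂μ)
      - (∫ h in {h : E | ρ / 4 < ‖h‖}, 1 / ‖h‖ ^ ((Module.finrank ℝ E : ℝ) + 2 * s) ∂μ)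
      + (1 / 2 * (d ^ s * √(d ^ s))) / (3 * d) ^ ((Module.finrank ℝ E : ℝ) + 2 * s) *
        (d ^ (Module.finrank ℝ E) * μ.real (ball 0 1))
      ≤ ∫ h in {h : E | ε < ‖h‖}, (barrier s ρ R m x₀ x - barrier s ρ R m x₀ (x + h)) /
          ‖h‖ ^ ((Module.finrank ℝ E : ℝ) + 2 * s) ∂μ := by
  set N : ℝ := (Module.finrank ℝ E : ℝ) with hN
  set Ce := (ρ ^ (-s) * 2 ^ σ + 2 ^ (1 - s) / ρ) with hCe
  set S := {h : E | ε < ‖h‖} with hS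
  set B2 := {h : E | ρ / 4 < ‖h‖} with hB2
  set D := closedBall (-((2 * d) • ν)) d with hD
  have hN0 : 0 ≤ N := Nat.cast_nonneg _
  have hCe0 : 0 ≤ Ce := by positivity
  have hSm : MeasurableSet S := measurableSet_lt measurable_const measurable_norm
  have hBm : MeasurableSet B2 := measurableSet_lt measurable_const measurable_norm
  have hv0 : 0 < d ^ s := Real.rpow_pos_of_pos hd _
  have hm0 : 0 ≤ m := hv0.le.trans hdm
  have hsq := sqrt_le_half (d ^ s) (hdm.trans hm)
  have hsq0 := Real.sqrt_nonneg (d ^ s)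
  have hlam0 : 0 ≤ 1 - 3 / 2 * √(d ^ s) := by linarith
  have hlam1 : 1 - 3 / 2 * √(d ^ s) ≤ 1 := by linarith
  have hDn : ∀ h ∈ D, d ≤ ‖h‖ ∧ ‖h‖ ≤ 3 * d := by
    intro h hh
    rw [hD, mem_closedBall, dist_eq_norm] at hh
    have h2 : ‖-((2 * d) • ν)‖ = 2 * d := by
      rw [norm_neg, norm_smul, hν, Real.norm_of_nonneg (by positivity), mul_one]
    have h3 := norm_sub_norm_le (-((2 * d) • ν)) h
    have h4 := norm_sub_norm_le h (-((2 * d) • ν))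
    rw [norm_sub_rev] at h3
    constructor <;> linarith
  have hDS : D ⊆ S := fun h hh => by
    have := (hDn h hh).1
    simp only [hS, mem_ofPred_eq]; linarith
  -- the four functions
  set c4 := (1 / 2 * (d ^ s * √(d ^ s))) / (3 * d) ^ (N + 2 * s) with hc4
  set a1 : E → ℝ := fun h => (d ^ s - (max (d + inner ℝ h ν) 0) ^ s) / ‖h‖ ^ (N + 2 * s) with ha1
  set a2 : E → ℝ := (ball (0:E) (ρ / 2)).indicator (fun h => ‖h‖ ^ (σ - N)) with ha2
  set a3 : E → ℝ := B2.indicator (fun h => 1 / ‖h‖ ^ (N + 2 * s)) with ha3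
  set a4 : E → ℝ := D.indicator (fun _ => (1:ℝ)) with ha4
  have i1 : IntegrableOn a1 S μ := half_int μ s ε d ν hν hs0 hs1 hε hd
  have i2 : Integrable a2 μ := (integrable_indicator_iff measurableSet_ball).2 (int_ball μ σ _ hσ0)
  have i3 : Integrable a3 μ := (integrable_indicator_iff hBm).2
    (intK μ _ _ (by linarith) (by linarith))
  have i4 : Integrable a4 μ := (integrable_indicator_iff measurableSet_closedBall).2
    (integrableOn_const (measure_closedBall_lt_top.ne))
  have i5 : IntegrableOn (fun h => (barrier s ρ R m x₀ x - barrier s ρ R m x₀ (x + h)) /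
          ‖h‖ ^ (N + 2 * s)) S μ := by
    apply int_bdd μ _ ε (barQ m) (by linarith) hε
    · exact measurable_const.sub ((barrier_measurable s ρ R m x₀).comp (measurable_const_add x))
    · intro h
      have e1 := barrier_nonneg s ρ R m x₀ x hm0 hm
      have e2 := barrier_nonneg s ρ R m x₀ (x+h) hm0 hm
      have e3 := barrier_le_m s ρ R m x₀ x hm0 hm
      have e4 := barrier_le_m s ρ R m x₀ (x+h) hm0 hm
      rw [abs_le]; constructor <;> linarith
  have hP := half_lower μ s ε d ν hν hs0 hs1 hε hd hεd
  rw [← hN] at hP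
  have hmono : ∫ h in S, ((1 - 3 / 2 * √(d ^ s)) * a1 h - Ce * d ^ (-σ) * a2 h - a3 h + c4 * a4 h) ∂μ
      ≤ ∫ h in S, (barrier s ρ R m x₀ x - barrier s ρ R m x₀ (x + h)) / ‖h‖ ^ (N + 2 * s) ∂μ := by
    apply setIntegral_mono_on _ i5 hSm
    · intro h hh
      have hh0 : 0 < ‖h‖ := hε.trans hh
      have hpw := barrier_pointwise s σ ρ R m d x₀ x ν h hν hs0 hs1 hσ0 hσ hρ hd hd1 hdρ hx hR hdm hm
      have hp : 0 < ‖h‖ ^ (N + 2 * s) := by positivity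
      refine le_trans ?_ (div_le_div_of_nonneg_right hpw hp.le)
      have e2 : a2 h = (ball (0:E) (ρ / 2)).indicator (fun h => ‖h‖ ^ (2 * s + σ)) h /
          ‖h‖ ^ (N + 2 * s) := by
        by_cases hb : h ∈ ball (0:E) (ρ / 2)
        · rw [ha2, indicator_of_mem hb, indicator_of_mem hb, ← Real.rpow_sub hh0]
          congr 1; ring
        · rw [ha2, indicator_of_notMem hb, indicator_of_notMem hb, zero_div]
      have e3 : a3 h = B2.indicator (fun _ => (1:ℝ)) h / ‖h‖ ^ (N + 2 * s) := by
        by_cases hb : h ∈ B2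
        · rw [ha3, indicator_of_mem hb, indicator_of_mem hb]
        · rw [ha3, indicator_of_notMem hb, indicator_of_notMem hb, zero_div]
      have e4 : c4 * a4 h ≤ (1 / 2 * (d ^ s * √(d ^ s))) * D.indicator (fun _ => (1:ℝ)) h /
          ‖h‖ ^ (N + 2 * s) := by
        by_cases hb : h ∈ D
        · rw [ha4, indicator_of_mem hb, hc4, mul_one, mul_one]
          apply div_le_div_of_nonneg_left (by positivity) hp
          exact Real.rpow_le_rpow hh0.le (hDn h hb).2 (by positivity)
        · rw [ha4, indicator_of_notMem hb]; simp
      rw [e2, e3]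
      rw [add_div, sub_div, sub_div]
      refine add_le_add (le_of_eq ?_) e4
      simp only [ha1]
      ring
    · exact (((i1.const_mul _).sub (i2.integrableOn.const_mul _)).sub i3.integrableOn).add
        (i4.integrableOn.const_mul _)
  refine le_trans ?_ hmono
  have k1 : IntegrableOn (fun h => (1 - 3 / 2 * √(d ^ s)) * a1 h) S μ := i1.const_mul _
  have k2 : IntegrableOn (fun h => Ce * d ^ (-σ) * a2 h) S μ := i2.integrableOn.const_mul _
  have k12 : IntegrableOn (fun h => (1 - 3 / 2 * √(d ^ s)) * a1 h - Ce * d ^ (-σ) * a2 h) S μ :=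
    k1.sub k2
  have k123 : IntegrableOn
      (fun h => (1 - 3 / 2 * √(d ^ s)) * a1 h - Ce * d ^ (-σ) * a2 h - a3 h) S μ :=
    k12.sub i3.integrableOn
  have k4 : IntegrableOn (fun h => c4 * a4 h) S μ := i4.integrableOn.const_mul _
  rw [integral_add k123 k4, integral_sub k12 i3.integrableOn, integral_sub k1 k2,
    integral_const_mul, integral_const_mul, integral_const_mul]
  have j2 : ∫ h in S, a2 h ∂μ ≤ ∫ h in ball (0:E) (ρ / 2), ‖h‖ ^ (σ - N) ∂μ := by
    rw [← integral_indicator measurableSet_ball]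
    exact setIntegral_le_integral i2
      (Eventually.of_forall fun h => indicator_nonneg (fun _ _ => by positivity) _)
  have j3 : ∫ h in S, a3 h ∂μ ≤ ∫ h in B2, 1 / ‖h‖ ^ (N + 2 * s) ∂μ := by
    rw [← integral_indicator hBm]
    exact setIntegral_le_integral i3
      (Eventually.of_forall fun h => indicator_nonneg (fun _ _ => by positivity) _)
  have j4 : ∫ h in S, a4 h ∂μ = d ^ (Module.finrank ℝ E) * μ.real (ball 0 1) := by
    rw [ha4, setIntegral_indicator measurableSet_closedBall, inter_eq_right.2 hDS]
    rw [setIntegral_const, hD, Measure.addHaar_real_closedBall μ _ hd.le]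
    simp
  have hP0 : 0 ≤ 4 * d ^ s * (1 / d) ^ 2 * ε ^ (2 - 2 * s) * μ.toSphere.real univ := by positivity
  have j1 : -(4 * d ^ s * (1 / d) ^ 2 * ε ^ (2 - 2 * s) * μ.toSphere.real univ) ≤
      (1 - 3 / 2 * √(d ^ s)) * ∫ h in S, a1 h ∂μ := by
    have : (1 - 3 / 2 * √(d ^ s)) *
      -(4 * d ^ s * (1 / d) ^ 2 * ε ^ (2 - 2 * s) * μ.toSphere.real univ) ≤
      (1 - 3 / 2 * √(d ^ s)) * ∫ h in S, a1 h ∂μ := mul_le_mul_of_nonneg_left hP hlam0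
    nlinarith
  have j2' : Ce * d ^ (-σ) * ∫ h in S, a2 h ∂μ ≤
      Ce * d ^ (-σ) * ∫ h in ball (0:E) (ρ / 2), ‖h‖ ^ (σ - N) ∂μ := by gcongr
  rw [j4]
  linarith

lemma far_lower {E : Type*} [NormedAddCommGroup E] [InnerProductSpace ℝ E] [MeasurableSpace E]
    [FiniteDimensional ℝ E] [BorelSpace E] (μ : Measure E) [μ.IsAddHaarMeasure] [Nontrivial E]
    (s ρ R m ε : ℝ) (x₀ x : E) (hs0 : 0 < s) (hR : 0 < R)
    (hx : dist x x₀ < R) (hm0 : 0 ≤ m) (hm : m ≤ 1 / 4) (hW : barrier s ρ R m x₀ x = barQ m)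
    (hε : 0 < ε) (hεR : ε < R) :
    barQ m / (5 * R) ^ ((Module.finrank ℝ E : ℝ) + 2 * s) *
        (R ^ (Module.finrank ℝ E) * μ.real (ball 0 1))
      ≤ ∫ h in {h : E | ε < ‖h‖}, (barrier s ρ R m x₀ x - barrier s ρ R m x₀ (x + h)) /
          ‖h‖ ^ ((Module.finrank ℝ E : ℝ) + 2 * s) ∂μ := by
  set N : ℝ := (Module.finrank ℝ E : ℝ) with hN
  set S := {h : E | ε < ‖h‖} with hS
  obtain ⟨ν, hν⟩ : ∃ ν : E, ‖ν‖ = 1 := exists_norm_eq E zero_le_one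
  set D := closedBall ((4 * R) • ν) R with hD
  have hN0 : 0 ≤ N := Nat.cast_nonneg _
  have hq0 : 0 ≤ barQ m := barQ_nonneg m hm0 hm
  have hSm : MeasurableSet S := measurableSet_lt measurable_const measurable_norm
  have hDn : ∀ h ∈ D, 3 * R ≤ ‖h‖ ∧ ‖h‖ ≤ 5 * R := by
    intro h hh
    rw [hD, mem_closedBall, dist_eq_norm] at hh
    have h2 : ‖(4 * R) • ν‖ = 4 * R := by
      rw [norm_smul, hν, Real.norm_of_nonneg (by positivity), mul_one]
    have h3 := norm_sub_norm_le ((4 * R) • ν) h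
    have h4 := norm_sub_norm_le h ((4 * R) • ν)
    rw [norm_sub_rev] at h3
    constructor <;> linarith
  have hDS : D ⊆ S := fun h hh => by
    have := (hDn h hh).1
    simp only [hS, mem_ofPred_eq]; linarith
  have i4 : Integrable (D.indicator (fun _ => (1:ℝ))) μ :=
    (integrable_indicator_iff measurableSet_closedBall).2
    (integrableOn_const (measure_closedBall_lt_top.ne))
  have i5 : IntegrableOn (fun h => (barrier s ρ R m x₀ x - barrier s ρ R m x₀ (x + h)) /
          ‖h‖ ^ (N + 2 * s)) S μ := by
    apply int_bdd μ _ ε (barQ m) (by linarith) hε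
    · exact measurable_const.sub ((barrier_measurable s ρ R m x₀).comp (measurable_const_add x))
    · intro h
      have e1 := barrier_nonneg s ρ R m x₀ x hm0 hm
      have e2 := barrier_nonneg s ρ R m x₀ (x+h) hm0 hm
      have e3 := barrier_le_m s ρ R m x₀ x hm0 hm
      have e4 := barrier_le_m s ρ R m x₀ (x+h) hm0 hm
      rw [abs_le]; constructor <;> linarith
  have j4 : ∫ h in S, D.indicator (fun _ => (1:ℝ)) h ∂μ =
      R ^ (Module.finrank ℝ E) * μ.real (ball 0 1) := by
    rw [setIntegral_indicator measurableSet_closedBall, inter_eq_right.2 hDS]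
    rw [setIntegral_const, hD, Measure.addHaar_real_closedBall μ _ hR.le]
    simp
  rw [← j4, ← integral_const_mul]
  apply setIntegral_mono_on (i4.integrableOn.const_mul _) i5 hSm
  intro h hh
  have hh0 : 0 < ‖h‖ := hε.trans hh
  have hp : 0 < ‖h‖ ^ (N + 2 * s) := by positivity
  rw [hW]
  by_cases hb : h ∈ D
  · have hz : barrier s ρ R m x₀ (x + h) = 0 := by
      unfold barrier
      rw [if_neg]
      have h1 := (hDn h hb).1
      have h2 : ‖h‖ ≤ dist (x + h) x₀ + dist x x₀ := by
        rw [dist_eq_norm, dist_eq_norm]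
        calc ‖h‖ = ‖(x + h - x₀) - (x - x₀)‖ := by congr 1; abel
          _ ≤ _ := norm_sub_le _ _
      linarith
    rw [indicator_of_mem hb, hz, mul_one, sub_zero]
    apply div_le_div_of_nonneg_left hq0 hp
    exact Real.rpow_le_rpow hh0.le (hDn h hb).2 (by positivity)
  · rw [indicator_of_notMem hb, mul_zero]
    have e4 := barrier_le_m s ρ R m x₀ (x+h) hm0 hm
    exact div_nonneg (by linarith) hp.le

lemma choose_eta (s σ A B c₃ ρ : ℝ) (hs0 : 0 < s) (hσ0 : 0 < σ) (hσ : σ < s / 2) (hc : 0 < c₃)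
    (hρ : 0 < ρ) :
    ∃ η : ℝ, 0 < η ∧ η ^ s ≤ 1 / 4 ∧ ∀ d, 0 < d → d ≤ η → d ≤ 1 ∧ d ≤ ρ ∧
      2 ≤ - A * d ^ (-σ) - B + c₃ * d ^ (-(s / 2)) := by
  have t1 : Tendsto (fun d : ℝ => d ^ (-σ)) (nhdsWithin 0 (Ioi 0)) atTop :=
    tendsto_rpow_neg_nhdsGT_zero (by linarith)
  have t2 : Tendsto (fun d : ℝ => d ^ (-(s / 2 - σ))) (nhdsWithin 0 (Ioi 0)) atTop :=
    tendsto_rpow_neg_nhdsGT_zero (by linarith)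
  have t3 : Tendsto (fun d : ℝ => d ^ (-σ) * (c₃ * d ^ (-(s / 2 - σ)) + -A))
      (nhdsWithin 0 (Ioi 0)) atTop :=
    t1.atTop_mul_atTop₀ (tendsto_atTop_add_const_right _ _ (t2.const_mul_atTop hc))
  have t4 : Tendsto (fun d : ℝ => d ^ s) (nhdsWithin 0 (Ioi 0)) (nhds 0) := by
    have h : ContinuousAt (fun d : ℝ => d ^ s) 0 := Real.continuousAt_rpow_const 0 s (Or.inr hs0.le)
    have := h.tendsto.mono_left (nhdsWithin_le_nhds (s := Ioi 0))
    simpa [Real.zero_rpow hs0.ne'] using this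
  have t5 : Tendsto (fun d : ℝ => d) (nhdsWithin 0 (Ioi 0)) (nhds 0) :=
    tendsto_id.mono_left nhdsWithin_le_nhds
  have ev := (t3.eventually_ge_atTop (2 + B)).and ((t4.eventually_le_const
    (show (0:ℝ) < 1 / 4 by norm_num)).and ((t5.eventually_le_const (show (0:ℝ) < 1 by norm_num)).and
      ((t5.eventually_le_const hρ))))
  obtain ⟨η, hη, hsub⟩ := mem_nhdsGT_iff_exists_Ioo_subset.1 ev
  have hη0 : 0 < η := hη
  refine ⟨η / 2, by positivity, (hsub ⟨by positivity, by linarith⟩).2.1, fun d hd hdη => ?_⟩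
  obtain ⟨h1, -, h2, h3⟩ := hsub (show d ∈ Ioo 0 η from ⟨hd, by linarith⟩)
  refine ⟨h2, h3, ?_⟩
  have e : d ^ (-(s / 2)) = d ^ (-σ) * d ^ (-(s / 2 - σ)) := by
    rw [← Real.rpow_add hd]; congr 1; ring
  rw [e]
  linarith

lemma barrier_super {E : Type*} [NormedAddCommGroup E] [InnerProductSpace ℝ E] [MeasurableSpace E]
    [FiniteDimensional ℝ E] [BorelSpace E] (μ : Measure E) [μ.IsAddHaarMeasure] [Nontrivial E]
    (s ρ R : ℝ) (hs0 : 0 < s) (hs1 : s < 1) (hρ : 0 < ρ) (hR : 0 < R) :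
    ∃ m c : ℝ, 0 < m ∧ m ≤ 1 / 4 ∧ 0 < c ∧ ∀ x₀ x : E, ρ < dist x x₀ → dist x x₀ < R →
      ∀ᶠ ε in nhdsWithin (0:ℝ) (Ioi 0),
        c ≤ ∫ h in {h : E | ε < ‖h‖}, (barrier s ρ R m x₀ x - barrier s ρ R m x₀ (x + h)) /
          ‖h‖ ^ ((Module.finrank ℝ E : ℝ) + 2 * s) ∂μ := by
  have hω : 0 < μ.real (ball (0:E) 1) :=
    ENNReal.toReal_pos (measure_ball_pos μ _ one_pos).ne' measure_ball_lt_top.ne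
  set σ := s * (1 - s) / 2 with hσ
  have hs1' : 0 < 1 - s := by linarith
  have hσ0 : 0 < σ := by positivity
  have hσ1 : σ < s / 2 := by rw [hσ]; nlinarith
  have hσ2 : σ ≤ 2 - 2 * s := by rw [hσ]; nlinarith
  obtain ⟨η, hη, hη4, hηd⟩ := choose_eta s σ
    ((ρ ^ (-s) * 2 ^ σ + 2 ^ (1 - s) / ρ) *
      (∫ h in ball (0:E) (ρ / 2), ‖h‖ ^ (σ - (Module.finrank ℝ E : ℝ)) ∂μ))
    (∫ h in {h : E | ρ / 4 < ‖h‖}, 1 / ‖h‖ ^ ((Module.finrank ℝ E : ℝ) + 2 * s) ∂μ)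
    (1 / 2 / 3 ^ ((Module.finrank ℝ E : ℝ) + 2 * s) * μ.real (ball (0:E) 1)) ρ hs0 hσ0 hσ1
    (by positivity) hρ
  have hm0 : 0 < η ^ s := by positivity
  have hq0 := barQ_pos _ hm0 hη4
  set c2 := barQ (η ^ s) / (5 * R) ^ ((Module.finrank ℝ E : ℝ) + 2 * s) *
        (R ^ (Module.finrank ℝ E) * μ.real (ball (0:E) 1)) with hc2
  have hc20 : 0 < c2 := by positivity
  refine ⟨η ^ s, min 1 c2, hm0, hη4, lt_min one_pos hc20, fun x₀ x h1 h2 => ?_⟩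
  set d := dist x x₀ - ρ with hd
  have hd0 : 0 < d := by linarith
  rcases le_or_gt d η with hdη | hdη
  · obtain ⟨hd1, hdρ, hG⟩ := hηd d hd0 hdη
    have hpos : 0 < dist x x₀ := by linarith
    set ν : E := (dist x x₀)⁻¹ • (x - x₀) with hν
    have hν1 : ‖ν‖ = 1 := by
      rw [hν, norm_smul, norm_inv, Real.norm_of_nonneg hpos.le, ← dist_eq_norm,
        inv_mul_cancel₀ hpos.ne']
    have hx : x = x₀ + (ρ + d) • ν := by
      have : ρ + d = dist x x₀ := by rw [hd]; ring
      rw [this, hν, smul_smul, mul_inv_cancel₀ hpos.ne', one_smul]; abel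
    have t4 : Tendsto (fun ε : ℝ => 4 * d ^ s * (1 / d) ^ 2 * ε ^ (2 - 2 * s) * μ.toSphere.real univ)
        (nhdsWithin 0 (Ioi 0)) (nhds 0) := by
      have h : ContinuousAt (fun ε : ℝ => ε ^ (2 - 2 * s)) 0 :=
        Real.continuousAt_rpow_const 0 _ (Or.inr (by linarith))
      have := ((h.tendsto.mono_left (nhdsWithin_le_nhds (s := Ioi 0))).const_mul
        (4 * d ^ s * (1 / d) ^ 2)).mul_const (μ.toSphere.real univ)
      simpa [Real.zero_rpow (show 2 - 2 * s ≠ 0 by linarith)] using this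
    have t5 : Tendsto (fun d : ℝ => d) (nhdsWithin 0 (Ioi 0)) (nhds 0) :=
      tendsto_id.mono_left nhdsWithin_le_nhds
    filter_upwards [t4.eventually_le_const one_pos, self_mem_nhdsWithin,
      t5.eventually_le_const (show 0 < d / 2 by positivity)] with ε e1 e2 e3
    refine (min_le_left _ _).trans (le_trans ?_ (near_lower μ s σ ρ R (η ^ s) d ε x₀ x ν hν1 hs0 hs1
      hσ0 hσ2 hρ hd0 hd1 hdρ hx (by linarith) (Real.rpow_le_rpow hd0.le hdη hs0.le) hη4 e2 e3))
    have key : (1 / 2 * (d ^ s * √(d ^ s))) / (3 * d) ^ ((Module.finrank ℝ E : ℝ) + 2 * s) *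
        (d ^ (Module.finrank ℝ E) * μ.real (ball (0:E) 1)) =
        (1 / 2 / 3 ^ ((Module.finrank ℝ E : ℝ) + 2 * s) * μ.real (ball (0:E) 1)) *
          d ^ (-(s / 2)) := by
      rw [Real.mul_rpow (by norm_num) hd0.le, Real.sqrt_eq_rpow, ← Real.rpow_mul hd0.le,
        ← Real.rpow_add hd0, ← Real.rpow_natCast]
      have e : d ^ (-(s / 2)) = d ^ (s + s * (1 / 2)) * d ^ (Module.finrank ℝ E : ℝ) /
          d ^ ((Module.finrank ℝ E : ℝ) + 2 * s) := by
        rw [← Real.rpow_add hd0, ← Real.rpow_sub hd0]; congr 1; ring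
      rw [e]
      field_simp
    rw [key]
    linarith
  · have t5 : Tendsto (fun d : ℝ => d) (nhdsWithin 0 (Ioi 0)) (nhds 0) :=
      tendsto_id.mono_left nhdsWithin_le_nhds
    filter_upwards [self_mem_nhdsWithin, t5.eventually_lt_const hR] with ε e2 e3
    refine (min_le_right _ _).trans (far_lower μ s ρ R (η ^ s) ε x₀ x hs0 hR h2 hm0.le hη4 ?_ e2 e3)
    unfold barrier
    rw [if_pos h2, ← hd, max_eq_left hd0.le, min_eq_right]
    exact Real.rpow_le_rpow hη.le hdη.le hs0.le


lemma translate_int {E : Type*} [NormedAddCommGroup E] [MeasurableSpace E]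
    [BorelSpace E] (μ : Measure E) [μ.IsAddLeftInvariant] (u : E → ℝ) (x : E) (ε p : ℝ) :
    ∫ y in {y : E | ε < dist y x}, (u x - u y) / dist x y ^ p ∂μ =
      ∫ h in {h : E | ε < ‖h‖}, (u x - u (x + h)) / ‖h‖ ^ p ∂μ := by
  have h1 : MeasurableSet {y : E | ε < dist y x} :=
    (isOpen_lt continuous_const (continuous_id.dist continuous_const)).measurableSet
  have h2 : MeasurableSet {h : E | ε < ‖h‖} :=
    (isOpen_lt continuous_const continuous_norm).measurableSet
  rw [← integral_indicator h1, ← integral_indicator h2, ← integral_add_left_eq_self _ x]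
  congr 1
  funext h
  simp only [indicator, mem_ofPred_eq, dist_self_add_left, dist_self_add_right]

lemma touch_int {E : Type*} [NormedAddCommGroup E] [InnerProductSpace ℝ E] [MeasurableSpace E]
    [FiniteDimensional ℝ E] [BorelSpace E] (μ : Measure E) [μ.IsAddHaarMeasure]
    (u W : E → ℝ) (hu : Measurable u) (hW : Measurable W) (Mu MW : ℝ) (hMu : ∀ x, |u x| ≤ Mu)
    (hMW : ∀ x, |W x| ≤ MW) (A q ε : ℝ) (hq : (Module.finrank ℝ E : ℝ) < q) (hε : 0 < ε) (x : E)
    (hmax : ∀ y, u y - A * W y ≤ u x - A * W x) :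
    A * ∫ h in {h : E | ε < ‖h‖}, (W x - W (x + h)) / ‖h‖ ^ q ∂μ ≤
      ∫ h in {h : E | ε < ‖h‖}, (u x - u (x + h)) / ‖h‖ ^ q ∂μ := by
  have key : ∀ (v : E → ℝ), Measurable v → ∀ M, (∀ x, |v x| ≤ M) →
      IntegrableOn (fun h => (v x - v (x + h)) / ‖h‖ ^ q) {h : E | ε < ‖h‖} μ := by
    intro v hv M hM
    apply int_bdd μ q ε (2 * M) hq hε
    · exact measurable_const.sub (hv.comp (measurable_const_add x))
    · intro h
      have h1 := abs_le.1 (hM x)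
      have h2 := abs_le.1 (hM (x + h))
      rw [abs_le]; constructor <;> linarith
  rw [← integral_const_mul]
  apply integral_mono ((key W hW MW hMW).const_mul A) (key u hu Mu hMu)
  intro h
  have hp : 0 ≤ ‖h‖ ^ q := by positivity
  have := hmax (x + h)
  simp only
  rw [← mul_div_assoc]
  apply div_le_div_of_nonneg_right _ hp
  linarith

lemma segment_frontier {E : Type*} [NormedAddCommGroup E] [NormedSpace ℝ E] (Ω : Set E) (x p : E)
    (hx : x ∈ Ω) (hp : p ∉ Ω) : ∃ y ∈ frontier Ω, dist x y ≤ dist x p := by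
  have h1 : IsPreconnected (segment ℝ x p) := (convex_segment x p).isPreconnected
  by_contra hcon
  push Not at hcon
  have hnf : ∀ y ∈ segment ℝ x p, y ∉ frontier Ω := by
    intro y hy hyf
    have h2 := hcon y hyf
    have h3 := dist_add_dist_of_mem_segment hy
    have h4 := dist_nonneg (x := y) (y := p)
    linarith
  have hx1 : x ∈ interior Ω := by
    by_contra h
    exact hnf x (left_mem_segment ℝ x p) ⟨subset_closure hx, h⟩
  have hp1 : p ∈ (closure Ω)ᶜ := fun h =>
    hnf p (right_mem_segment ℝ x p) ⟨h, fun h' => hp (interior_subset h')⟩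
  obtain ⟨y, -, hy1, hy2⟩ := h1 (interior Ω) (closure Ω)ᶜ isOpen_interior
    isClosed_closure.isOpen_compl
    (fun y hy => by
      by_cases h : y ∈ closure Ω
      · left
        by_contra h'
        exact hnf y hy ⟨h, h'⟩
      · exact Or.inr h)
    ⟨x, left_mem_segment ℝ x p, hx1⟩ ⟨p, right_mem_segment ℝ x p, hp1⟩
  exact hy2 (interior_subset_closure hy1)

lemma barrier_continuousOn {E : Type*} [NormedAddCommGroup E] (s ρ R m : ℝ) (x₀ : E)
    (hs0 : 0 < s) : ContinuousOn (barrier s ρ R m x₀) (ball x₀ R) := by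
  have : Continuous (fun y : E => barQ (min ((max (dist y x₀ - ρ) 0) ^ s) m)) := by
    unfold barQ
    have h : Continuous (fun y : E => (max (dist y x₀ - ρ) 0) ^ s) :=
      Continuous.rpow_const (by fun_prop) (fun _ => Or.inr hs0.le)
    fun_prop
  refine this.continuousOn.congr fun y hy => ?_
  unfold barrier
  rw [if_pos (mem_ball.1 hy)]

lemma compare (n : ℕ) (hn : 0 < n) (s : ℝ) (hs0 : 0 < s) (hs1 : s < 1)
    (Ω : Set (EuclideanSpace ℝ (Fin n)))
    (hΩb : Bornology.IsBounded Ω)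
    (ρ : ℝ) (hρ : 0 < ρ) (hball : ExteriorBallCondition n ρ Ω)
    (r₀ : ℝ) (hr₀ : 0 < r₀) :
    ∃ C : ℝ, 0 ≤ C ∧ ∀ (u : EuclideanSpace ℝ (Fin n) → ℝ) (K : ℝ), 0 < K → Continuous u →
      (∃ M, ∀ x, |u x| ≤ M) → (∀ x ∉ Ω, u x = 0) →
      (∀ x ∈ Ω, (∃ g, fracLapEq n s u x g ∧ g ≤ K) ∨
        (u x ≤ K ∧ ∀ y ∈ frontier Ω, r₀ ≤ dist x y)) →
      ∀ x ∈ Ω, u x ≤ C * K * infDist x (frontier Ω) ^ s := by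
  have : Nonempty (Fin n) := ⟨⟨0, hn⟩⟩
  have : Nontrivial (EuclideanSpace ℝ (Fin n)) := inferInstance
  set Cns : ℝ := (2 ^ (2 * s) * s * Real.Gamma (s + n / 2) /
          (Real.pi ^ ((n : ℝ) / 2) * Real.Gamma (1 - s))) with hCns
  have hCns0 : 0 < Cns := by
    have h1 : 0 < Real.Gamma (s + n / 2) := Real.Gamma_pos_of_pos (by positivity)
    have h2 : 0 < Real.Gamma (1 - s) := Real.Gamma_pos_of_pos (by linarith)
    have := Real.pi_pos
    positivity
  obtain ⟨R', hR'0, hR'⟩ := hΩb.subset_closedBall_lt 0 (0 : EuclideanSpace ℝ (Fin n))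
  set R := 2 * R' + ρ + 1 with hR
  have hR0 : 0 < R := by linarith
  obtain ⟨m, c, hm0, hm, hc, hsuper⟩ := barrier_super
    (volume : Measure (EuclideanSpace ℝ (Fin n))) s ρ R hs0 hs1 hρ hR0
  have hc20 : 0 < barQ (min (r₀ ^ s) m) :=
    barQ_pos _ (lt_min (by positivity) hm0) ((min_le_right _ _).trans hm)
  set c2 := barQ (min (r₀ ^ s) m) with hc2
  refine ⟨2 / (Cns * c) + 1 / c2, by positivity, ?_⟩
  intro u K hK hu ⟨M, hM⟩ hu0 hcase x hx
  set A := (2 / (Cns * c) + 1 / c2) * K with hA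
  have hA0 : 0 < A := by positivity
  have hcl : closure Ω ⊆ closedBall 0 R' := closure_minimal hR' isClosed_closedBall
  -- nonempty frontier
  obtain ⟨p, hp⟩ : ∃ p, p ∉ Ω := by
    by_contra hcon
    push Not at hcon
    have : Ω = univ := eq_univ_of_forall hcon
    rw [this] at hΩb
    exact NormedSpace.unbounded_univ ℝ _ hΩb
  obtain ⟨y₁, hy₁, -⟩ := segment_frontier Ω x p hx hp
  have hfc : IsCompact (frontier Ω) :=
    hΩb.isCompact_closure.of_isClosed_subset isClosed_frontier frontier_subset_closure
  obtain ⟨z, hz, hzd⟩ := hfc.exists_infDist_eq_dist ⟨y₁, hy₁⟩ x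
  obtain ⟨x₀, hx₀z, hx₀⟩ := hball z hz
  have hgt : ∀ y ∈ Ω, ρ < dist y x₀ := by
    intro y hy
    by_contra hcon
    exact hx₀ (mem_closedBall.2 (not_lt.1 hcon)) hy
  have hlt : ∀ y ∈ closure Ω, dist y x₀ < R := by
    intro y hy
    have h1 := mem_closedBall.1 (hcl hy)
    have h2 := mem_closedBall.1 (hcl (frontier_subset_closure hz))
    have h3 := dist_triangle y 0 x₀
    have h4 := dist_triangle 0 z x₀
    rw [dist_comm z x₀, dist_comm 0 z] at h4
    linarith
  set W := barrier s ρ R m x₀ with hW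
  have hW0 : ∀ y, 0 ≤ W y := fun y => barrier_nonneg s ρ R m x₀ y hm0.le hm
  have hWm : ∀ y, W y ≤ barQ m := fun y => barrier_le_m s ρ R m x₀ y hm0.le hm
  have hmain : u x ≤ A * W x := by
    by_contra hcon
    push Not at hcon
    have hcont : ContinuousOn (fun y => u y - A * W y) (closure Ω) :=
      hu.continuousOn.sub (continuousOn_const.mul
        ((barrier_continuousOn s ρ R m x₀ hs0).mono fun y hy => mem_ball.2 (hlt y hy)))
    obtain ⟨xs, hxs, hmax⟩ := hΩb.isCompact_closure.exists_isMaxOn ⟨x, subset_closure hx⟩ hcont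
    have hxpos : 0 < u xs - A * W xs := by
      have : u x - A * W x ≤ u xs - A * W xs := hmax (subset_closure hx)
      linarith
    have hxsΩ : xs ∈ Ω := by
      by_contra hno
      rw [hu0 xs hno] at hxpos
      have := mul_nonneg hA0.le (hW0 xs)
      linarith
    have hglob : ∀ y, u y - A * W y ≤ u xs - A * W xs := by
      intro y
      by_cases hy : y ∈ closure Ω
      · exact hmax hy
      · rw [hu0 y fun h => hy (subset_closure h)]
        have := mul_nonneg hA0.le (hW0 y)
        linarith
    rcases hcase xs hxsΩ with ⟨g, hg, hgK⟩ | ⟨huK, hfr⟩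
    · have hge : Cns * (A * c) ≤ g := by
        refine ge_of_tendsto hg ?_
        filter_upwards [hsuper x₀ xs (hgt xs hxsΩ) (hlt xs hxs), self_mem_nhdsWithin] with ε e1 e2
        rw [← hCns]
        apply mul_le_mul_of_nonneg_left _ hCns0.le
        rw [translate_int]
        have h3 := touch_int (volume : Measure (EuclideanSpace ℝ (Fin n))) u W hu.measurable
          (barrier_measurable s ρ R m x₀) M (barQ m) hM
          (fun y => by rw [abs_of_nonneg (hW0 y)]; exact hWm y) A
          ((Module.finrank ℝ (EuclideanSpace ℝ (Fin n)) : ℝ) + 2 * s) ε (by linarith) e2 xs hglob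
        refine le_trans (le_trans ?_ h3) (le_of_eq ?_)
        · exact mul_le_mul_of_nonneg_left e1 hA0.le
        · rw [finrank_euclideanSpace_fin]
      have : Cns * (A * c) = 2 * K + Cns * c * (1 / c2 * K) := by
        rw [hA]; field_simp
      have h5 : 0 < Cns * c * (1 / c2 * K) := by positivity
      linarith
    · have hd : r₀ ≤ dist xs x₀ - ρ := by
        have hpos : 0 < dist xs x₀ := hρ.trans (hgt xs hxsΩ)
        have hgt' := hgt xs hxsΩ
        set t := ρ / dist xs x₀ with ht
        have ht1 : t ≤ 1 := by rw [ht, div_le_one hpos]; exact hgt'.le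
        have hpn : x₀ + t • (xs - x₀) ∉ Ω := by
          intro hmem
          have := hgt _ hmem
          rw [dist_eq_norm, add_sub_cancel_left, norm_smul, Real.norm_of_nonneg (by positivity),
            ← dist_eq_norm, ht, div_mul_cancel₀ _ hpos.ne'] at this
          exact lt_irrefl _ this
        obtain ⟨y, hy, hyd⟩ := segment_frontier Ω xs _ hxsΩ hpn
        have h6 := hfr y hy
        have h7 : dist xs (x₀ + t • (xs - x₀)) = dist xs x₀ - ρ := by
          have e : xs - (x₀ + t • (xs - x₀)) = (1 - t) • (xs - x₀) := by module
          rw [dist_eq_norm, e, norm_smul, Real.norm_of_nonneg (by linarith), ← dist_eq_norm, sub_mul,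
            one_mul, ht, div_mul_cancel₀ _ hpos.ne']
        linarith
      have hWc : c2 ≤ W xs := by
        rw [hW, hc2]
        unfold barrier
        rw [if_pos (hlt xs hxs), max_eq_left (by linarith)]
        apply barQ_mono _ _ (by positivity) _ ((min_le_right _ _).trans hm)
        gcongr
      have h8 : K ≤ A * W xs := by
        calc K = 1 / c2 * K * c2 := by field_simp
          _ ≤ A * W xs := by
            apply mul_le_mul _ hWc hc20.le hA0.le
            rw [hA, add_mul]
            have : 0 < 2 / (Cns * c) * K := by positivity
            linarith
      linarith
  refine hmain.trans ?_
  apply mul_le_mul_of_nonneg_left _ hA0.le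
  refine (barrier_le s ρ R m x₀ x hm0.le hm).trans ((barQ_le _ (by positivity)).trans
    ((min_le_left _ _).trans ?_))
  apply Real.rpow_le_rpow (by positivity) _ hs0.le
  apply max_le _ infDist_nonneg
  rw [hzd]
  have := dist_triangle x z x₀
  rw [dist_comm z x₀, hx₀z] at this
  linarith

lemma fracLapEq_neg (n : ℕ) (s : ℝ) (u : EuclideanSpace ℝ (Fin n) → ℝ)
    (x : EuclideanSpace ℝ (Fin n)) (g : ℝ) (h : fracLapEq n s u x g) :
    fracLapEq n s (fun y => - u y) x (-g) := by
  unfold fracLapEq at *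
  refine h.neg.congr fun ε => ?_
  rw [← mul_neg, ← integral_neg]
  congr 1
  apply integral_congr_ae
  refine Eventually.of_forall fun y => ?_
  simp only
  ring

/-- **`δ^s` boundary behavior.** Let `Ω` be a bounded open set satisfying the exterior
ball condition with radius `ρ > 0` and let `r₀ > 0`. There is a constant
`C = C(n,s,Ω,ρ,r₀)` such that any solution `u` of the fractional obstacle problem with
bounded data, whose contact set stays at distance `≥ r₀` from `∂Ω`, satisfies
`|u(x)| ≤ C (‖f‖_∞ + ‖ψ‖_∞) δ(x)^s` for every `x ∈ Ω`, where `δ(x) = dist(x, ∂Ω)`. -/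
theorem delta_s_boundary_behavior
    (n : ℕ) (hn : 0 < n) (s : ℝ) (hs : s ∈ Set.Ioo (0 : ℝ) 1)
    (Ω : Set (EuclideanSpace ℝ (Fin n)))
    (hΩo : IsOpen Ω) (hΩb : Bornology.IsBounded Ω)
    (ρ : ℝ) (hρ : 0 < ρ) (hball : ExteriorBallCondition n ρ Ω)
    (r₀ : ℝ) (hr₀ : 0 < r₀) :
    ∃ C : ℝ, ∀ f ψ u : EuclideanSpace ℝ (Fin n) → ℝ,
      (∃ M, ∀ x ∈ Ω, |f x| ≤ M) → (∃ M, ∀ x ∈ Ω, |ψ x| ≤ M) →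
      (∀ x ∉ Ω, ψ x < 0) →
      SolvesObstacle n s Ω f ψ u →
      (∀ x ∈ {x ∈ Ω | u x = ψ x}, ∀ y ∈ frontier Ω, r₀ ≤ dist x y) →
      ∀ x ∈ Ω,
        |u x| ≤ C * (supOn Ω f + supOn Ω ψ) * Metric.infDist x (frontier Ω) ^ s := by
  obtain ⟨C, hC0, hC⟩ := compare n hn s hs.1 hs.2 Ω hΩb ρ hρ hball r₀ hr₀
  refine ⟨C, ?_⟩
  rintro f ψ u ⟨Mf, hMf⟩ ⟨Mψ, hMψ⟩ - ⟨⟨M, hM⟩, hu, hu0, hsol⟩ hfr x hx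
  have hsup : ∀ (g : EuclideanSpace ℝ (Fin n) → ℝ) (M : ℝ), (∀ x ∈ Ω, |g x| ≤ M) →
      ∀ y ∈ Ω, |g y| ≤ supOn Ω g := by
    intro g M hg y hy
    apply le_csSup
    · exact ⟨M, by rintro _ ⟨w, hw, rfl⟩; exact hg w hw⟩
    · exact ⟨y, hy, rfl⟩
  have hf := hsup f Mf hMf
  have hψ := hsup ψ Mψ hMψ
  have hf0 : 0 ≤ supOn Ω f := (abs_nonneg _).trans (hf x hx)
  have hψ0 : 0 ≤ supOn Ω ψ := (abs_nonneg _).trans (hψ x hx)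
  set K := supOn Ω f + supOn Ω ψ with hK
  set D := infDist x (frontier Ω) ^ s with hD
  have hD0 : 0 ≤ D := Real.rpow_nonneg infDist_nonneg _
  have hτ : ∀ τ > 0, |u x| ≤ C * (K + τ) * D := by
    intro τ hτ
    apply abs_le'.2
    constructor
    · refine hC u (K + τ) (by linarith) hu ⟨M, hM⟩ hu0 (fun y hy => ?_) x hx
      obtain ⟨g, hg, hmin⟩ := hsol y hy
      rcases min_choice (g - f y) (u y - ψ y) with h | h
      · left
        rw [h] at hmin
        have := (abs_le.1 (hf y hy)).2
        exact ⟨g, hg, by linarith⟩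
      · right
        rw [h] at hmin
        have := (abs_le.1 (hψ y hy)).2
        exact ⟨by linarith, hfr y ⟨hy, by linarith⟩⟩
    · refine hC (fun y => - u y) (K + τ) (by linarith) hu.neg ⟨M, fun y => by rw [abs_neg]; exact hM y⟩
        (fun y hy => by rw [hu0 y hy, neg_zero]) (fun y hy => ?_) x hx
      obtain ⟨g, hg, hmin⟩ := hsol y hy
      left
      have h1 : 0 ≤ g - f y := hmin ▸ min_le_left _ _
      have := (abs_le.1 (hf y hy)).1
      exact ⟨-g, fracLapEq_neg n s u y g hg, by linarith⟩
  apply le_of_forall_pos_le_add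
  intro e he
  have hCD : 0 < C * D + 1 := by positivity
  refine (hτ (e / (C * D + 1)) (by positivity)).trans ?_
  have h1 : C * D * (e / (C * D + 1)) ≤ e := by
    rw [← mul_div_assoc, div_le_iff₀ hCD]; nlinarith
  linarith
end
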